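/- Let P be a simple 3-polytope with p_3 = 0, p_k = 0 for all k ≥ 8, and p_7 ≤ 1, and let B_k be a k-belt consisting of b_i i-gonal facets for 4 ≤ i ≤ 7 (so b_4+b_5+b_6+b_7 = k), with W_1 and W_2 the two sets of facets on the two sides of B_k. Then one of the following holds: (1) B_k surrounds a k-gonal facet on each side (W_1 = {F_s}, W_2 = {F_t}, both k-gons) and all facets of B_k are quadrangles; (2) B_k surrounds a k-gonal facet F_s on one side and borders an l-loop on the other side with l = b_5 + 2b_6 + 3b_7 ≥ 2; (3) B_k borders an l_1-loop L_1 ⊂ W_1 and an l_2-loop L_2 ⊂ W_2 with l_1, l_2 ≥ 2, where (a) l_α = Σ_{j=1}^{k}(α_j − 1) where α_j is the number of edges F_{i_j} has on the corresponding boundary cycle, (b) l_1 + l_2 = 2k − 2b_4 − b_5 + b_7 ≤ 2k + 1, (c) min{l_1,l_2} ≤ k − b_4 − ⌈(b_5 − b_7)/2⌉ ≤ k, and (d) if b_7 = 0 and l_1, l_2 ≥ k then l_1 = l_2 = k and b_4 = b_5 = 0, b_6 = k. Moreover, if a bordering loop has length l_α = 2, say L_α = (F_i, F_j) with F_i an s_i-gon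 and F_j an s_j-gon, then k = s_i + s_j − 4 ≥ 4. -/

import Mathlib

open Set

noncomputable section

/-- The ambient space `ℝ³`. -/
abbrev E3 := EuclideanSpace ℝ (Fin 3)

/-- The cyclic successor in `Fin k`. -/
def nxt {k : ℕ} (i : Fin k) : Fin k := ⟨(i.1 + 1) % k, Nat.mod_lt _ i.pos⟩

/-- The cyclic predecessor in `Fin k`. -/
def prv {k : ℕ} (i : Fin k) : Fin k := ⟨(i.1 + (k - 1)) % k, Nat.mod_lt _ i.pos⟩

/-- A convex polytope in `ℝ³`: the convex hull of a finite set of points. -/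
def IsPolytope (P : Set E3) : Prop := ∃ V : Finset E3, P = convexHull ℝ (V : Set E3)

/-- The dimension of a subset of `ℝ³` (the dimension of its affine hull). -/
def setDim (A : Set E3) : ℕ := Module.finrank ℝ ↥(vectorSpan ℝ A)

/-- A face of a polytope: a nonempty closed convex extreme subset. -/
def IsFaceOf (F P : Set E3) : Prop :=
  F.Nonempty ∧ IsClosed F ∧ Convex ℝ F ∧ IsExtreme ℝ P F

/-- A facet: a `2`-dimensional face. -/
def IsFacetOf (F P : Set E3) : Prop := IsFaceOf F P ∧ setDim F = 2

/-- An edge: a `1`-dimensional face. -/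
def IsEdgeOf (F P : Set E3) : Prop := IsFaceOf F P ∧ setDim F = 1

/-- A vertex: a point whose singleton is a face. -/
def IsVertexOf (v : E3) (P : Set E3) : Prop := IsFaceOf {v} P

/-- The set of facets of `P`. -/
def facets (P : Set E3) : Set (Set E3) := {F | IsFacetOf F P}

/-- A simple 3-polytope: a 3-dimensional convex polytope each of whose vertices
is contained in exactly 3 facets. -/
def IsSimplePolytope3 (P : Set E3) : Prop :=
  IsPolytope P ∧ setDim P = 3 ∧
    ∀ v : E3, IsVertexOf v P → {F | IsFacetOf F P ∧ v ∈ F}.ncard = 3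

/-- The number of edges of a facet `F` of `P`. -/
def facetEdges (P F : Set E3) : ℕ := {e | IsEdgeOf e P ∧ e ⊆ F}.ncard

/-- `pVec P k` is the number of `k`-gonal facets of `P`. -/
def pVec (P : Set E3) (k : ℕ) : ℕ := {F | IsFacetOf F P ∧ facetEdges P F = k}.ncard

/-- A (mathematical) fullerene: a simple 3-polytope with all facets pentagons
and hexagons. -/
def IsFullerene (P : Set E3) : Prop :=
  IsSimplePolytope3 P ∧ ∀ F, IsFacetOf F P → facetEdges P F = 5 ∨ facetEdges P F = 6

/-- A `k`-loop in `P` (`k ≥ 2`): a cyclic sequence of facets in which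
(cyclically) consecutive facets intersect in an edge; a `1`-loop is a single facet. -/
def IsLoop (P : Set E3) {k : ℕ} (L : Fin k → Set E3) : Prop :=
  0 < k ∧ (∀ i, IsFacetOf (L i) P) ∧ (2 ≤ k → ∀ i, IsEdgeOf (L i ∩ L (nxt i)) P)

/-- A simple loop: a loop with pairwise different facets. -/
def IsSimpleLoop (P : Set E3) {k : ℕ} (L : Fin k → Set E3) : Prop :=
  IsLoop P L ∧ Function.Injective L

/-- A `k`-belt (`k ≥ 3`): a `k`-loop such that for `k = 3` the three facets have empty
total intersection, and for `k ≥ 4` two facets intersect iff they are cyclically successive. -/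
def IsBelt (P : Set E3) {k : ℕ} (L : Fin k → Set E3) : Prop :=
  3 ≤ k ∧ IsLoop P L ∧
    (k = 3 → ∀ i, L i ∩ L (nxt i) ∩ L (nxt (nxt i)) = ∅) ∧
    (4 ≤ k → ∀ p q, p ≠ q → ((L p ∩ L q).Nonempty ↔ q = nxt p ∨ p = nxt q))

/-- A flag 3-polytope: a simple 3-polytope different from the tetrahedron
(i.e. not having exactly 4 facets) without 3-belts. -/
def IsFlag3Polytope (P : Set E3) : Prop :=
  IsSimplePolytope3 P ∧ (facets P).ncard ≠ 4 ∧ ∀ B : Fin 3 → Set E3, ¬ IsBelt P B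

/-- `γ` is the simple edge-cycle of `P` traced by the cyclically ordered distinct
vertices `v 0, …, v (n-1)` (`n ≥ 3`), consecutive ones joined by edges of `P`. -/
def IsSimpleEdgeCycleVia (P γ : Set E3) {n : ℕ} (v : Fin n → E3) : Prop :=
  3 ≤ n ∧ Function.Injective v ∧ (∀ i, IsVertexOf (v i) P) ∧
    (∀ i, IsEdgeOf (segment ℝ (v i) (v (nxt i))) P) ∧
    γ = ⋃ i, segment ℝ (v i) (v (nxt i))

/-- A simple edge-cycle in the graph of `P`. -/
def IsSimpleEdgeCycle (P γ : Set E3) : Prop :=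
  ∃ (n : ℕ) (v : Fin n → E3), IsSimpleEdgeCycleVia P γ v

/-- `C` is a connected component of the set `A`. -/
def IsCompOf (C A : Set E3) : Prop := ∃ x ∈ A, C = connectedComponentIn A x

/-- The loop `L` is obtained by walking round the simple edge-cycle `γ` inside the
connected component `C` of `∂P ∖ γ`: the facets of `L` lie on the side `C`, and the
edges of `γ`, in cyclic order, lie in the facets of `L` in cyclic order (the loop
index advancing exactly when the facet changes, and making exactly one turn). -/
def WalksRound (P γ C : Set E3) {k : ℕ} (L : Fin k → Set E3) : Prop :=
  IsLoop P L ∧ (∀ i, intrinsicInterior ℝ (L i) ⊆ C) ∧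
    ∃ (n : ℕ) (v : Fin n → E3) (φ : Fin n → Fin k),
      IsSimpleEdgeCycleVia P γ v ∧
      (∀ i, segment ℝ (v i) (v (nxt i)) ⊆ L (φ i)) ∧
      (∀ i, φ (nxt i) = φ i ∨ φ (nxt i) = nxt (φ i)) ∧
      Function.Surjective φ ∧
      (2 ≤ k → (Finset.univ.filter (fun i : Fin n => φ (nxt i) ≠ φ i)).card = k)

/-- Two loops border each other: they are obtained by walking round the same simple
edge-cycle `γ` in the two different connected components of `∂P ∖ γ`. -/
def Borders (P : Set E3) {k₁ k₂ : ℕ} (L₁ : Fin k₁ → Set E3) (L₂ : Fin k₂ → Set E3) : Prop :=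
  ∃ γ C₁ C₂ : Set E3, IsCompOf C₁ (frontier P \ γ) ∧ IsCompOf C₂ (frontier P \ γ) ∧
    C₁ ≠ C₂ ∧ WalksRound P γ C₁ L₁ ∧ WalksRound P γ C₂ L₂

/-- A loop surrounds the facet `F` if it borders the `1`-loop `(F)`. -/
def Surrounds (P : Set E3) {k : ℕ} (L : Fin k → Set E3) (F : Set E3) : Prop :=
  IsFacetOf F P ∧ Borders P L (fun _ : Fin 1 => F)

/-- The number of edges of `P` lying in the facet `F` and in the set `γ`. -/
def edgesInCommon (P F γ : Set E3) : ℕ := {e | IsEdgeOf e P ∧ e ⊆ F ∧ e ⊆ γ}.ncard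
/-- A simple 3-polytope all of whose facets are pentagons and hexagons except for
at most one exceptional facet, which is a quadrangle or a heptagon. -/
def IsAlmostFullerene (P : Set E3) : Prop :=
  IsSimplePolytope3 P ∧
    (∀ F, IsFacetOf F P → facetEdges P F ∈ ({4, 5, 6, 7} : Set ℕ)) ∧
    {F | IsFacetOf F P ∧ (facetEdges P F = 4 ∨ facetEdges P F = 7)}.ncard ≤ 1

/-- The (combinatorial) dodecahedron: a simple 3-polytope with all facets pentagons. -/
def IsDodecahedron (P : Set E3) : Prop :=
  IsSimplePolytope3 P ∧ ∀ F, IsFacetOf F P → facetEdges P F = 5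

/-- `e` and `e'` are opposite edges of the hexagonal facet `H`: they are disjoint and no
edge of `H` meets both of them. -/
def OppositeEdges (P H e e' : Set E3) : Prop :=
  IsEdgeOf e P ∧ IsEdgeOf e' P ∧ e ⊆ H ∧ e' ⊆ H ∧ e ∩ e' = ∅ ∧
    ∀ e'', IsEdgeOf e'' P → e'' ⊆ H → (e'' ∩ e).Nonempty → e'' ≠ e → e'' ∩ e' = ∅

/-- A cap: a pentagonal facet `F₀` together with a surrounding 5-belt of pentagons. -/
def IsCapOf (P F₀ : Set E3) (L : Fin 5 → Set E3) : Prop :=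
  IsFacetOf F₀ P ∧ facetEdges P F₀ = 5 ∧ (∀ i, facetEdges P (L i) = 5) ∧
    IsBelt P L ∧ Surrounds P L F₀

/-- The number of 5-belts of `P` (counted as sets of facets). -/
def fiveBeltCount (P : Set E3) : ℕ :=
  {S : Set (Set E3) | ∃ B : Fin 5 → Set E3, IsBelt P B ∧ S = Set.range B}.ncard

/-- The structure of the `k`-th fullerene of Family I: two caps separated by `k`
hexagonal 5-belts, each bordering the next (for `k = 0` the caps border each other,
giving the dodecahedron). -/
def FamilyI (P : Set E3) (k : ℕ) : Prop :=
  ∃ (F₀ F₀' : Set E3) (L L' : Fin 5 → Set E3) (B : ℕ → Fin 5 → Set E3),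
    IsCapOf P F₀ L ∧ IsCapOf P F₀' L' ∧
    (∀ i < k, IsBelt P (B i) ∧ ∀ j, facetEdges P (B i j) = 6) ∧
    (∀ i, i + 1 < k → Borders P (B i) (B (i + 1))) ∧
    (0 < k → Borders P L (B 0) ∧ Borders P (B (k - 1)) L') ∧
    (k = 0 → Borders P L L') ∧
    facets P = {F₀, F₀'} ∪ Set.range L ∪ Set.range L' ∪ ⋃ i ∈ Set.Iio k, Set.range (B i)

/-- `P` is obtained from `Q` by an `(s,k;t₀,t₁)`-truncation with new edge `Enew`:
`P` is cut off from `Q` by a halfspace `{f ≤ c}` whose boundary plane crosses exactly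
two edges `E₀ ≠ E₁` of a `k`-gonal facet `F` of `Q`, cutting off exactly `s` vertices,
all belonging to `F`; `G₀` and `G₁` are the facets meeting `F` along `E₀` and `E₁`, and
they are `t₀`- and `t₁`-gons; `Enew` is the new edge dividing `F`. -/
def IsTruncation (s k t₀ t₁ : ℕ) (Q P Enew : Set E3) : Prop :=
  IsSimplePolytope3 Q ∧ IsSimplePolytope3 P ∧
    ∃ (F E₀ E₁ G₀ G₁ : Set E3) (f : E3 →ₗ[ℝ] ℝ) (c : ℝ),
      IsFacetOf F Q ∧ facetEdges Q F = k ∧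
      IsEdgeOf E₀ Q ∧ IsEdgeOf E₁ Q ∧ E₀ ≠ E₁ ∧ E₀ ⊆ F ∧ E₁ ⊆ F ∧
      IsFacetOf G₀ Q ∧ IsFacetOf G₁ Q ∧ G₀ ≠ F ∧ G₁ ≠ F ∧ E₀ ⊆ G₀ ∧ E₁ ⊆ G₁ ∧
      facetEdges Q G₀ = t₀ ∧ facetEdges Q G₁ = t₁ ∧
      P = Q ∩ {x | f x ≤ c} ∧
      (∀ e, IsEdgeOf e Q → (∃ x ∈ e, c < f x) → (∃ x ∈ e, f x < c) → e = E₀ ∨ e = E₁) ∧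
      (∃ x ∈ E₀, c < f x) ∧ (∃ x ∈ E₀, f x < c) ∧
      (∃ x ∈ E₁, c < f x) ∧ (∃ x ∈ E₁, f x < c) ∧
      (∀ v, IsVertexOf v Q → f v ≠ c) ∧
      {v | IsVertexOf v Q ∧ c < f v}.ncard = s ∧
      (∀ v, IsVertexOf v Q → c < f v → v ∈ F) ∧
      Enew = F ∩ {x | f x = c}

/-- Combinatorial equivalence of polytopes: an inclusion-preserving bijection
between the sets of faces. -/
def CombEquiv (P Q : Set E3) : Prop :=
  ∃ φ : {A : Set E3 // IsFaceOf A P} ≃ {A : Set E3 // IsFaceOf A Q},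
    ∀ A B : {A : Set E3 // IsFaceOf A P}, A.1 ⊆ B.1 ↔ (φ A).1 ⊆ (φ B).1

/-- Combinatorial equivalence sending the face `Ep` of `P` to the face `Eq` of `Q`. -/
def CombEquivMapping (P Q Ep Eq : Set E3) : Prop :=
  ∃ φ : {A : Set E3 // IsFaceOf A P} ≃ {A : Set E3 // IsFaceOf A Q},
    (∀ A B : {A : Set E3 // IsFaceOf A P}, A.1 ⊆ B.1 ↔ (φ A).1 ⊆ (φ B).1) ∧
    ∀ h : IsFaceOf Ep P, ((φ ⟨Ep, h⟩) : {A : Set E3 // IsFaceOf A Q}).1 = Eq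

/-- The straightening of `P` along the edge `E` is defined: `P` is combinatorially
obtained from some simple 3-polytope `Q` by an `(s,k)`-truncation whose new edge
corresponds to `E`. -/
def StraighteningDefined (P E : Set E3) : Prop :=
  ∃ (s k t₀ t₁ : ℕ) (Q P₁ E₁ : Set E3),
    IsTruncation s k t₀ t₁ Q P₁ E₁ ∧ CombEquivMapping P P₁ E E₁

/-- `P` is obtained from `Q` by one of the truncations
`(1;4,5)`, `(1;5,5)`, `(2,6;4,5)`, `(2,6;5,5)`, `(2,6;5,6)`, `(2,7;5,5)`, `(2,7;5,6)`. -/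
def FullereneStep (Q P : Set E3) : Prop :=
  ∃ (s k t₀ t₁ : ℕ) (Enew : Set E3), IsTruncation s k t₀ t₁ Q P Enew ∧
    ((s = 1 ∧ (({t₀, t₁} : Finset ℕ) = {4, 5} ∨ ({t₀, t₁} : Finset ℕ) = {5, 5})) ∨
     (s = 2 ∧ k = 6 ∧ (({t₀, t₁} : Finset ℕ) = {4, 5} ∨ ({t₀, t₁} : Finset ℕ) = {5, 5} ∨
        ({t₀, t₁} : Finset ℕ) = {5, 6})) ∨
     (s = 2 ∧ k = 7 ∧ (({t₀, t₁} : Finset ℕ) = {5, 5} ∨ ({t₀, t₁} : Finset ℕ) = {5, 6})))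

/-- The standard scalar product, in coordinates. -/
def dot (a x : E3) : ℝ := a 0 * x 0 + a 1 * x 1 + a 2 * x 2

/-- The cross product. -/
def crs (a b : E3) : E3 :=
  !₂[a 1 * b 2 - a 2 * b 1, a 2 * b 0 - a 0 * b 2, a 0 * b 1 - a 1 * b 0]

lemma dot_add (a x y : E3) : dot a (x + y) = dot a x + dot a y := by
  simp [dot]; ring
lemma dot_sub (a x y : E3) : dot a (x - y) = dot a x - dot a y := by
  simp [dot]; ring
lemma dot_smul (a x : E3) (t : ℝ) : dot a (t • x) = t * dot a x := by
  simp [dot]; ring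
lemma dot_neg (a x : E3) : dot a (-x) = - dot a x := by
  simp [dot]; ring
lemma add_dot (a b x : E3) : dot (a + b) x = dot a x + dot b x := by
  simp [dot]; ring
lemma smul_dot (a x : E3) (t : ℝ) : dot (t • a) x = t * dot a x := by
  simp [dot]; ring
lemma neg_dot (a x : E3) : dot (-a) x = - dot a x := by
  simp [dot]; ring
lemma dot_comm (a b : E3) : dot a b = dot b a := by
  simp [dot]; ring

lemma continuous_dot (a : E3) : Continuous (dot a) := by
  unfold dot; fun_prop

/-- `dot a` as a linear map. -/
def dotL (a : E3) : E3 →ₗ[ℝ] ℝ where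
  toFun := dot a
  map_add' := dot_add a
  map_smul' := by intro t x; simp [dot_smul]

lemma dotL_apply (a x : E3) : dotL a x = dot a x := rfl

lemma dot_self_eq_zero {a : E3} (h : dot a a = 0) : a = 0 := by
  have h0 : a 0 = 0 := by
    unfold dot at h; nlinarith [mul_self_nonneg (a 0), mul_self_nonneg (a 1), mul_self_nonneg (a 2)]
  have h1 : a 1 = 0 := by
    unfold dot at h; nlinarith [mul_self_nonneg (a 0), mul_self_nonneg (a 1), mul_self_nonneg (a 2)]
  have h2 : a 2 = 0 := by
    unfold dot at h; nlinarith [mul_self_nonneg (a 0), mul_self_nonneg (a 1), mul_self_nonneg (a 2)]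
  ext i; fin_cases i <;> simp [h0, h1, h2]

lemma inner_eq_dot (a x : E3) : inner ℝ a x = dot a x := by
  rw [PiLp.inner_apply, Fin.sum_univ_three]; simp [dot]; ring

lemma exists_dot (f : StrongDual ℝ E3) : ∃ a : E3, ∀ x, f x = dot a x := by
  refine ⟨(InnerProductSpace.toDual ℝ E3).symm f, fun x => ?_⟩
  rw [← inner_eq_dot]; simp

lemma ker_dotL_finrank {a : E3} (ha : a ≠ 0) :
    Module.finrank ℝ (LinearMap.ker (dotL a)) ≤ 2 := by
  have : Module.finrank ℝ (LinearMap.ker (dotL a)) < Module.finrank ℝ E3 := by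
    apply Submodule.finrank_lt
    intro h
    apply ha
    apply dot_self_eq_zero
    have : a ∈ LinearMap.ker (dotL a) := by rw [h]; trivial
    exact this
  simp at this; omega

lemma vectorSpan_le_ker {F : Set E3} {a : E3} {c : ℝ} (h : ∀ x ∈ F, dot a x = c) :
    vectorSpan ℝ F ≤ LinearMap.ker (dotL a) := by
  rw [vectorSpan_def, Submodule.span_le]
  rintro _ ⟨x, hx, y, hy, rfl⟩
  simp [dotL_apply, dot_sub, h x hx, h y hy]

lemma vectorSpan_eq_ker {F : Set E3} {a : E3} {c : ℝ} (h : ∀ x ∈ F, dot a x = c) (ha : a ≠ 0)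
    (hF : setDim F = 2) : vectorSpan ℝ F = LinearMap.ker (dotL a) :=
  Submodule.eq_of_le_of_finrank_le (vectorSpan_le_ker h) (by
    rw [show Module.finrank ℝ (vectorSpan ℝ F) = 2 from hF]; exact ker_dotL_finrank ha)

lemma ext_intr {F : Set E3} {x y : E3} (hx : x ∈ intrinsicInterior ℝ F)
    (hy : y ∈ affineSpan ℝ F) : ∃ ε : ℝ, 0 < ε ∧ x + ε • (x - y) ∈ F := by
  rw [mem_intrinsicInterior] at hx
  obtain ⟨z, hz, rfl⟩ := hx
  let w : affineSpan ℝ F := ⟨y, hy⟩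
  have hmem : ∀ t : ℝ, (z : E3) + t • ((z : E3) - y) ∈ affineSpan ℝ F := by
    intro t
    have := AffineMap.lineMap_mem (1 + t) hy z.2
    convert this using 1
    simp [AffineMap.lineMap_apply]; module
  let g : ℝ → affineSpan ℝ F := fun t => ⟨(z : E3) + t • ((z : E3) - y), hmem t⟩
  have hg : Continuous g := by
    apply Continuous.subtype_mk; fun_prop
  have h0 : g 0 = z := by apply Subtype.ext; simp [g]
  have : g ⁻¹' (interior ((↑) ⁻¹' F : Set (affineSpan ℝ F))) ∈ nhds (0 : ℝ) := by
    apply (isOpen_interior.preimage hg).mem_nhds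
    simpa [h0] using hz
  rw [Metric.mem_nhds_iff] at this
  obtain ⟨ε, hε, hb⟩ := this
  refine ⟨ε / 2, by positivity, ?_⟩
  have h1 : (ε / 2) ∈ Metric.ball (0 : ℝ) ε := by
    simp [abs_of_pos hε, hε]
  have h2 := interior_subset (hb h1)
  exact h2

lemma ext_int {P : Set E3} {x : E3} (hx : x ∈ interior P) (d : E3) :
    ∃ ε : ℝ, 0 < ε ∧ x + ε • d ∈ P := by
  have hg : Continuous (fun t : ℝ => x + t • d) := by fun_prop
  have : (fun t : ℝ => x + t • d) ⁻¹' (interior P) ∈ nhds (0 : ℝ) := by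
    apply (isOpen_interior.preimage hg).mem_nhds
    simpa using hx
  rw [Metric.mem_nhds_iff] at this
  obtain ⟨ε, hε, hb⟩ := this
  refine ⟨ε / 2, by positivity, ?_⟩
  have h1 : (ε / 2) ∈ Metric.ball (0 : ℝ) ε := by
    simp [abs_of_pos hε, hε]
  exact interior_subset (hb h1)

lemma mem_openSegment_ext {x y : E3} {ε : ℝ} (hε : 0 < ε) :
    x ∈ openSegment ℝ y (x + ε • (x - y)) := by
  refine ⟨ε / (1 + ε), 1 / (1 + ε), by positivity, by positivity, by field_simp; ring, ?_⟩
  have : (1 + ε) ≠ 0 := by positivity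
  ext i
  simp
  field_simp
  ring

lemma extreme_dot {P : Set E3} {a : E3} {c : ℝ} (h : ∀ x ∈ P, dot a x ≤ c) :
    IsExtreme ℝ P {x | x ∈ P ∧ dot a x = c} := by
  refine ⟨fun x hx => hx.1, ?_⟩
  rintro x hx y hy z hz ⟨s, t, hs, ht, hst, rfl⟩
  refine ⟨hx, ?_⟩
  have h1 := hz.2
  rw [dot_add, dot_smul, dot_smul] at h1
  have h2 := h x hx
  have h3 := h y hy
  by_contra hne
  have h4 : dot a x < c := lt_of_le_of_ne h2 hne
  have : s * dot a x + t * dot a y < s * c + t * c := by nlinarith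
  rw [h1, ← add_mul, hst] at this
  linarith

lemma face_dot {P : Set E3} (hc : Convex ℝ P) (hcl : IsClosed P) {a : E3} {c : ℝ}
    (h : ∀ x ∈ P, dot a x ≤ c) (hne : {x | x ∈ P ∧ dot a x = c}.Nonempty) :
    IsFaceOf {x | x ∈ P ∧ dot a x = c} P := by
  refine ⟨hne, ?_, ?_, extreme_dot h⟩
  · exact hcl.inter (isClosed_eq (continuous_dot a) continuous_const)
  · have h1 : Convex ℝ {x | dot a x = c} := by
      exact convex_hyperplane (f := dot a) (dotL a).isLinear c
    exact hc.inter h1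

lemma facet_normal {P F : Set E3} (hc : Convex ℝ P) (hi : (interior P).Nonempty)
    (h3 : setDim P = 3) (hF : IsFacetOf F P) :
    ∃ (a : E3) (c : ℝ), a ≠ 0 ∧ (∀ x ∈ P, dot a x ≤ c) ∧
      ∀ x, x ∈ F ↔ x ∈ P ∧ dot a x = c := by
  obtain ⟨⟨hne, hcl, hcF, hex⟩, hd⟩ := hF
  have hdisj : Disjoint (interior P) F := by
    rw [Set.disjoint_left]
    intro x hx hxF
    have : P ⊆ F := by
      intro y hy
      obtain ⟨ε, hε, h⟩ := ext_int hx (x - y)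
      exact hex.left_mem_of_mem_openSegment hy h hxF (mem_openSegment_ext hε)
    have : F = P := Subset.antisymm hex.subset this
    rw [this, h3] at hd
    omega
  obtain ⟨f, u, hf0, hf1, hf2⟩ := geometric_hahn_banach_of_nonempty_interior hc hcF hdisj hi hne
  obtain ⟨a, ha⟩ := exists_dot f
  have ha0 : a ≠ 0 := by
    rintro rfl
    apply hf0
    ext x
    simp [ha, dot]
  simp only [ha] at hf1 hf2
  have hFu : ∀ x ∈ F, dot a x = u := fun x hx => le_antisymm (hf1 x (hex.subset hx)) (hf2 x hx)
  refine ⟨a, u, ha0, hf1, fun x => ⟨fun hx => ⟨hex.subset hx, hFu x hx⟩, ?_⟩⟩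
  rintro ⟨hxP, hxu⟩
  obtain ⟨z, hz⟩ := hne.intrinsicInterior hcF
  have hzF := intrinsicInterior_subset hz
  have hv := vectorSpan_eq_ker hFu ha0 hd
  have hx : x ∈ affineSpan ℝ F := by
    have h1 : x - z ∈ vectorSpan ℝ F := by
      rw [hv]; simp [dotL_apply, dot_sub, hxu, hFu z hzF]
    have := vadd_mem_affineSpan_of_mem_affineSpan_of_mem_vectorSpan (mem_affineSpan ℝ hzF) h1
    simpa using this
  obtain ⟨ε, hε, h⟩ := ext_intr hz hx
  exact hex.left_mem_of_mem_openSegment hxP (hex.subset h) hzF (mem_openSegment_ext hε)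

/-- A facet description of a simple polytope by linear inequalities. -/
structure Geo (P : Set E3) (n : Set E3 → E3) (c : Set E3 → ℝ) : Prop where
  convex : Convex ℝ P
  compact : IsCompact P
  int : (interior P).Nonempty
  fin : (facets P).Finite
  ne : ∀ F ∈ facets P, n F ≠ 0
  le : ∀ F ∈ facets P, ∀ x ∈ P, dot (n F) x ≤ c F
  mem : ∀ F ∈ facets P, ∀ x, x ∈ F ↔ x ∈ P ∧ dot (n F) x = c F
  rep : ∀ x, (∀ F ∈ facets P, dot (n F) x ≤ c F) → x ∈ P
  simple : ∀ v, IsVertexOf v P → {F | IsFacetOf F P ∧ v ∈ F}.ncard = 3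

lemma interior_lt {P : Set E3} {a : E3} {c : ℝ} (ha : a ≠ 0) (h : ∀ x ∈ P, dot a x ≤ c)
    {p : E3} (hp : p ∈ interior P) : dot a p < c := by
  obtain ⟨ε, hε, h1⟩ := ext_int hp a
  have h2 := h _ h1
  rw [dot_add, dot_smul] at h2
  have h3 : 0 < dot a a := by
    have h4 : dot a a ≠ 0 := fun h0 => ha (dot_self_eq_zero h0)
    have h5 : 0 ≤ dot a a := by
      unfold dot; nlinarith [mul_self_nonneg (a 0), mul_self_nonneg (a 1), mul_self_nonneg (a 2)]
    exact lt_of_le_of_ne h5 (Ne.symm h4)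
  have := mul_pos hε h3
  linarith

lemma dot_le_hull {V : Finset E3} {a : E3} {c : ℝ} (h : ∀ v ∈ V, dot a v ≤ c) :
    ∀ x ∈ convexHull ℝ (V : Set E3), dot a x ≤ c := by
  intro x hx
  have h1 : Convex ℝ {x | dot a x ≤ c} := convex_halfSpace_le (dotL a).isLinear c
  exact (convexHull_min (s := (V : Set E3)) (t := {x | dot a x ≤ c}) (fun v hv => h v hv) h1) hx

lemma dot_const_hull {V : Finset E3} {a : E3} {c : ℝ} (h : ∀ v ∈ V, dot a v = c) :
    ∀ x ∈ convexHull ℝ (V : Set E3), dot a x = c := by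
  intro x hx
  have h1 : Convex ℝ {x | dot a x = c} := convex_hyperplane (dotL a).isLinear c
  exact (convexHull_min (s := (V : Set E3)) (t := {x | dot a x = c}) (fun v hv => h v hv) h1) hx

lemma exists_facet_sep (V : Finset E3) (hi : (interior (convexHull ℝ (V : Set E3))).Nonempty)
    {y : E3} (hy : y ∉ convexHull ℝ (V : Set E3)) :
    ∃ (a : E3) (c : ℝ), (∀ x ∈ convexHull ℝ (V : Set E3), dot a x ≤ c) ∧ c < dot a y ∧
      IsFacetOf {x | x ∈ convexHull ℝ (V : Set E3) ∧ dot a x = c} (convexHull ℝ (V : Set E3)) := by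
  classical
  have hVne : V.Nonempty := by
    rw [Finset.nonempty_iff_ne_empty]; rintro rfl; simp at hi
  have hcomp : IsCompact (convexHull ℝ (V : Set E3)) := V.finite_toSet.isCompact_convexHull ℝ
  let Q : E3 → ℝ → Prop := fun a c => (∀ v ∈ V, dot a v ≤ c) ∧ c < dot a y ∧
    (V.filter (fun v => dot a v = c)).Nonempty
  let S : Set ℕ := {m | ∃ a c, Q a c ∧ (V.filter (fun v => dot a v = c)).card = m}
  have hSb : BddAbove S := by
    refine ⟨V.card, ?_⟩
    rintro _ ⟨a, c, -, rfl⟩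
    exact Finset.card_filter_le _ _
  have hSne : S.Nonempty := by
    obtain ⟨f, u, h1, h2⟩ := geometric_hahn_banach_closed_point (convex_convexHull ℝ (V : Set E3))
      hcomp.isClosed hy
    obtain ⟨a, ha⟩ := exists_dot f
    obtain ⟨v, hv, hmax⟩ := Finset.exists_max_image V (dot a) hVne
    refine ⟨_, a, dot a v, ⟨hmax, ?_, ⟨v, by simp [hv]⟩⟩, rfl⟩
    rw [← ha, ← ha]
    exact (h1 v (subset_convexHull ℝ _ hv)).trans h2
  obtain ⟨a, c, ⟨hle, hyc, hTne⟩, hcard⟩ := Nat.sSup_mem hSne hSb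
  have hmax : ∀ a' c', Q a' c' → (V.filter (fun v => dot a' v = c')).card ≤
      (V.filter (fun v => dot a v = c)).card := by
    intro a' c' h
    rw [hcard]
    exact le_csSup hSb ⟨a', c', h, rfl⟩
  set T := V.filter (fun v => dot a v = c) with hT
  obtain ⟨t0, ht0⟩ := hTne
  have ht0' : t0 ∈ V ∧ dot a t0 = c := by simpa [hT] using ht0
  have key : 2 ≤ Module.finrank ℝ (vectorSpan ℝ (T : Set E3)) := by
    by_contra hlt
    push Not at hlt
    let D : Submodule ℝ E3 := vectorSpan ℝ (T : Set E3) ⊔ Submodule.span ℝ {y - t0}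
    have hD : D ≠ ⊤ := by
      intro htop
      have h1 := Submodule.finrank_add_le_finrank_add_finrank (vectorSpan ℝ (T : Set E3))
        (Submodule.span ℝ {y - t0})
      have h2 : Module.finrank ℝ D = 3 := by rw [htop]; simp
      have h3 := finrank_span_le_card (R := ℝ) ({y - t0} : Set E3)
      simp only [Set.toFinset_singleton, Finset.card_singleton] at h3
      change Module.finrank ℝ D ≤ _ at h1
      omega
    have hDo : Dᗮ ≠ ⊥ := by
      intro h; exact hD ((Submodule.orthogonal_eq_bot_iff).1 h)
    obtain ⟨g0, hg0D, hg00⟩ := Submodule.exists_mem_ne_zero_of_ne_bot hDo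
    have hex : ∃ g : E3, (∀ d ∈ D, dot g d = 0) ∧ ∃ w ∈ V, dot g t0 < dot g w := by
      have h0 : ∀ d ∈ D, dot g0 d = 0 := by
        intro d hd
        have := (Submodule.mem_orthogonal' D g0).1 hg0D d hd
        rwa [inner_eq_dot] at this
      by_cases h1 : ∃ w ∈ V, dot g0 t0 < dot g0 w
      · exact ⟨g0, h0, h1⟩
      · by_cases h2 : ∃ w ∈ V, dot g0 w < dot g0 t0
        · obtain ⟨w, hw, hlt⟩ := h2
          refine ⟨-g0, fun d hd => by rw [neg_dot, h0 d hd, neg_zero], w, hw, ?_⟩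
          rw [neg_dot, neg_dot]; linarith
        · exfalso
          push Not at h1 h2
          have h3 := dot_const_hull (V := V) (a := g0) (c := dot g0 t0)
            (fun v hv => le_antisymm (h1 v hv) (h2 v hv))
          obtain ⟨p, hp⟩ := hi
          have h4 := interior_lt hg00 (fun x hx => (h3 x hx).le) hp
          rw [h3 p (interior_subset hp)] at h4
          exact lt_irrefl _ h4
    obtain ⟨g, hgD, w0, hw0, hw0g⟩ := hex
    obtain ⟨w, hw, hmin⟩ := Finset.exists_min_image (V.filter (fun v => dot g t0 < dot g v))
      (fun v => (c - dot a v) / (dot g v - dot g t0)) ⟨w0, by simp [hw0, hw0g]⟩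
    simp only [Finset.mem_filter] at hw hmin
    set t := (c - dot a w) / (dot g w - dot g t0) with ht
    have hpos : 0 < dot g w - dot g t0 := by linarith [hw.2]
    have htn : 0 ≤ t := div_nonneg (by linarith [hle w hw.1]) hpos.le
    have htw : t * (dot g w - dot g t0) = c - dot a w := by
      rw [ht]; field_simp
    have hgT : ∀ v ∈ T, dot g v = dot g t0 := by
      intro v hv
      have : v - t0 ∈ D := by
        apply Submodule.mem_sup_left
        exact vsub_mem_vectorSpan ℝ (by exact_mod_cast hv) (by exact_mod_cast ht0)
      have := hgD _ this
      rw [dot_sub] at this; linarith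
    have hgy : dot g y = dot g t0 := by
      have : y - t0 ∈ D := by
        apply Submodule.mem_sup_right
        exact Submodule.mem_span_singleton_self _
      have := hgD _ this
      rw [dot_sub] at this; linarith
    have hQ : Q (a + t • g) (c + t * dot g t0) := by
      refine ⟨?_, ?_, ⟨t0, ?_⟩⟩
      · intro v hv
        rw [add_dot, smul_dot]
        have h1 := hle v hv
        by_cases h2 : dot g t0 < dot g v
        · have h3 := hmin v ⟨hv, h2⟩
          rw [le_div_iff₀ (by linarith)] at h3
          linarith
        · push Not at h2
          have := mul_le_mul_of_nonneg_left h2 htn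
          linarith
      · rw [add_dot, smul_dot, hgy]; linarith
      · rw [Finset.mem_filter, add_dot, smul_dot, ht0'.2]; exact ⟨ht0'.1, rfl⟩
    have hsub : insert w T ⊆ V.filter (fun v => dot (a + t • g) v = c + t * dot g t0) := by
      intro v hv
      rw [Finset.mem_filter, add_dot, smul_dot]
      rcases Finset.mem_insert.1 hv with rfl | hv
      · refine ⟨hw.1, ?_⟩
        linarith
      · have h1 : v ∈ V ∧ dot a v = c := by simpa [hT] using hv
        exact ⟨h1.1, by rw [h1.2, hgT v hv]⟩
    have hwT : w ∉ T := fun h => by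
      have := hgT w h
      linarith [hw.2]
    have h1 := Finset.card_le_card hsub
    rw [Finset.card_insert_of_notMem hwT] at h1
    have h2 := hmax _ _ hQ
    omega
  have hleP := dot_le_hull hle
  have ha0 : a ≠ 0 := by
    rintro rfl
    have h1 : ∀ x, dot 0 x = 0 := by intro x; simp [dot]
    rw [h1] at hyc
    have := ht0'.2
    rw [h1] at this
    linarith
  refine ⟨a, c, hleP, hyc, face_dot (convex_convexHull ℝ _) hcomp.isClosed hleP
    ⟨t0, subset_convexHull ℝ _ ht0'.1, ht0'.2⟩, ?_⟩
  apply le_antisymm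
  · refine le_trans (Submodule.finrank_mono (vectorSpan_le_ker (a := a) (c := c) fun x hx => hx.2))
      (ker_dotL_finrank ha0)
  · refine le_trans key (Submodule.finrank_mono (vectorSpan_mono ℝ ?_))
    intro v hv
    have h1 : v ∈ V ∧ dot a v = c := by simpa [hT] using hv
    exact ⟨subset_convexHull ℝ _ h1.1, h1.2⟩

lemma exists_geo {P : Set E3} (hP : IsSimplePolytope3 P) : ∃ n c, Geo P n c := by
  obtain ⟨⟨V, hV⟩, h3, hs⟩ := hP
  have hc : Convex ℝ P := by rw [hV]; exact convex_convexHull ℝ _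
  have hcomp : IsCompact P := by rw [hV]; exact V.finite_toSet.isCompact_convexHull ℝ
  have hi : (interior P).Nonempty := by
    rw [hc.interior_nonempty_iff_affineSpan_eq_top]
    have hne : P.Nonempty := by
      rw [Set.nonempty_iff_ne_empty]; rintro rfl
      rw [setDim, vectorSpan_empty, finrank_bot] at h3; omega
    rw [← AffineSubspace.direction_eq_top_iff_of_nonempty ((affineSpan_nonempty ℝ).2 hne),
      direction_affineSpan]
    apply Submodule.eq_top_of_finrank_eq
    rw [show Module.finrank ℝ (vectorSpan ℝ P) = 3 from h3]; simp
  have hfin : (facets P).Finite := by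
    have h1 : (P.extremePoints ℝ).Finite := by
      rw [hV]; exact V.finite_toSet.subset extremePoints_convexHull_subset
    refine Set.Finite.of_finite_image (f := fun F => F.extremePoints ℝ) ?_ ?_
    · refine h1.finite_subsets.subset ?_
      rintro _ ⟨F, hF, rfl⟩
      exact hF.1.2.2.2.extremePoints_subset_extremePoints
    · intro F hF G hG h
      have hFc := hcomp.of_isClosed_subset hF.1.2.1 hF.1.2.2.2.subset
      have hGc := hcomp.of_isClosed_subset hG.1.2.1 hG.1.2.2.2.subset
      rw [← closure_convexHull_extremePoints hFc hF.1.2.2.1,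
        ← closure_convexHull_extremePoints hGc hG.1.2.2.1]
      simp only at h
      rw [h]
  have hn : ∀ F : Set E3, ∃ p : E3 × ℝ, F ∈ facets P → p.1 ≠ 0 ∧ (∀ x ∈ P, dot p.1 x ≤ p.2) ∧
      ∀ x, x ∈ F ↔ x ∈ P ∧ dot p.1 x = p.2 := by
    intro F
    by_cases hF : F ∈ facets P
    · obtain ⟨a, c, h⟩ := facet_normal hc hi h3 hF
      exact ⟨(a, c), fun _ => h⟩
    · exact ⟨0, fun h => absurd h hF⟩
  choose p hp using hn
  refine ⟨fun F => (p F).1, fun F => (p F).2, hc, hcomp, hi, hfin, fun F hF => (hp F hF).1,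
    fun F hF => (hp F hF).2.1, fun F hF => (hp F hF).2.2, ?_, hs⟩
  intro y hy
  by_contra hyP
  rw [hV] at hyP
  obtain ⟨a, c, h1, h2, h4⟩ := exists_facet_sep V (by rwa [← hV]) hyP
  rw [← hV] at h1 h4
  set F := {x | x ∈ P ∧ dot a x = c} with hFdef
  obtain ⟨hn0, hn1, hn2⟩ := hp F h4
  have hyF := hy F h4
  obtain ⟨q, hq⟩ := hi
  have ha0 : a ≠ 0 := by
    rintro rfl
    have h1 : ∀ x, dot 0 x = 0 := by intro x; simp [dot]
    rw [h1] at h2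
    obtain ⟨x, hx⟩ := h4.1.1
    have := hx.2
    rw [h1] at this
    linarith
  have hqa := interior_lt ha0 h1 hq
  have hqn := interior_lt hn0 hn1 hq
  obtain ⟨x0, hx0⟩ := h4.1.1
  have e1 := vectorSpan_eq_ker (F := F) (a := a) (c := c) (fun x hx => hx.2) ha0 h4.2
  have e2 := vectorSpan_eq_ker (F := F) (fun x hx => ((hn2 x).1 hx).2) hn0 h4.2
  have hden : 0 < dot a y - dot a q := by linarith
  set s := (c - dot a q) / (dot a y - dot a q) with hs'
  have hs0 : 0 < s := div_pos (by linarith) hden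
  have hs1 : s < 1 := by rw [hs', div_lt_one hden]; linarith
  have hsz : s * (dot a y - dot a q) = c - dot a q := by rw [hs']; field_simp
  have hz : (q + s • (y - q)) - x0 ∈ LinearMap.ker (dotL a) := by
    simp only [LinearMap.mem_ker, dotL_apply, dot_sub, dot_add, dot_smul]
    have := hx0.2
    linarith
  rw [← e1, e2] at hz
  simp only [LinearMap.mem_ker, dotL_apply, dot_sub, dot_add, dot_smul,
    ((hn2 x0).1 hx0).2] at hz
  nlinarith

/-- Two facets are adjacent. -/
def Adj (P F G : Set E3) : Prop :=
  F ∈ facets P ∧ G ∈ facets P ∧ F ≠ G ∧ (F ∩ G).Nonempty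

lemma Adj.symm {P F G : Set E3} (h : Adj P F G) : Adj P G F :=
  ⟨h.2.1, h.1, h.2.2.1.symm, by rw [inter_comm]; exact h.2.2.2⟩

lemma crs_zero {a b : E3} (h : crs a b = 0) (ha : a ≠ 0) : b = (dot a b / dot a a) • a := by
  have haa : dot a a ≠ 0 := fun h0 => ha (dot_self_eq_zero h0)
  have h0 : a 1 * b 2 - a 2 * b 1 = 0 := by
    have := congrFun (congrArg WithLp.ofLp h) 0; simpa [crs] using this
  have h1 : a 2 * b 0 - a 0 * b 2 = 0 := by
    have := congrFun (congrArg WithLp.ofLp h) 1; simpa [crs] using this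
  have h2 : a 0 * b 1 - a 1 * b 0 = 0 := by
    have := congrFun (congrArg WithLp.ofLp h) 2; simpa [crs] using this
  have key : ∀ i, b i * dot a a = dot a b * a i := by
    intro i
    unfold dot
    fin_cases i
    · simp; linear_combination (-a 1) * h2 + a 2 * h1
    · simp; linear_combination (a 0) * h2 - a 2 * h0
    · simp; linear_combination (a 1) * h0 - a 0 * h1
  ext i
  simp only [PiLp.smul_apply, smul_eq_mul]
  rw [div_mul_eq_mul_div, eq_div_iff haa, key]

lemma orth_crs {a b y : E3} (h : crs a b ≠ 0) (h1 : dot a y = 0) (h2 : dot b y = 0) :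
    ∃ t : ℝ, y = t • crs a b := by
  refine ⟨_, crs_zero ?_ h⟩
  unfold dot at h1 h2
  ext i
  fin_cases i
  · simp [crs]; linear_combination (b 0) * h1 - a 0 * h2
  · simp [crs]; linear_combination (b 1) * h1 - a 1 * h2
  · simp [crs]; linear_combination (b 2) * h1 - a 2 * h2

lemma dot_crs_left (a b : E3) : dot a (crs a b) = 0 := by
  unfold dot crs; simp; ring
lemma dot_crs_right (a b : E3) : dot b (crs a b) = 0 := by
  unfold dot crs; simp; ring
lemma dot_crs_cyc (a b c : E3) : dot a (crs b c) = dot b (crs c a) := by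
  unfold dot crs; simp; ring
lemma dot_crs_swap (a b c : E3) : dot a (crs b c) = - dot a (crs c b) := by
  unfold dot crs; simp; ring
lemma crs_swap (a b : E3) : crs a b = - crs b a := by
  ext i; fin_cases i <;> simp [crs] <;> ring
lemma dot_self_pos {a : E3} (h : a ≠ 0) : 0 < dot a a := by
  have h4 : dot a a ≠ 0 := fun h0 => h (dot_self_eq_zero h0)
  have h5 : 0 ≤ dot a a := by
    unfold dot; nlinarith [mul_self_nonneg (a 0), mul_self_nonneg (a 1), mul_self_nonneg (a 2)]
  exact lt_of_le_of_ne h5 (Ne.symm h4)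

namespace Geo
variable {P : Set E3} {n : Set E3 → E3} {c : Set E3 → ℝ}

lemma feas (g : Geo P n c) {x d : E3} (hx : x ∈ P)
    (h : ∀ F ∈ facets P, x ∈ F → dot (n F) d ≤ 0) :
    ∃ ε : ℝ, 0 < ε ∧ ∀ t, 0 ≤ t → t ≤ ε → x + t • d ∈ P := by
  have h1 : ∀ᶠ t in nhdsWithin (0:ℝ) (Ici 0), ∀ F ∈ facets P, dot (n F) (x + t • d) ≤ c F := by
    rw [Filter.eventually_all_finite g.fin]
    intro F hF
    by_cases hxF : x ∈ F
    · filter_upwards [self_mem_nhdsWithin] with t ht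
      have := (g.mem F hF x).1 hxF
      rw [dot_add, dot_smul, this.2]
      have := mul_nonneg (show 0 ≤ t from ht) (neg_nonneg.2 (h F hF hxF))
      linarith
    · have hlt : dot (n F) x < c F := lt_of_le_of_ne (g.le F hF x hx)
        (fun he => hxF ((g.mem F hF x).2 ⟨hx, he⟩))
      apply Filter.Eventually.filter_mono nhdsWithin_le_nhds
      have hc : Continuous (fun t : ℝ => dot (n F) (x + t • d)) :=
        (continuous_dot _).comp (by fun_prop)
      have : (fun t : ℝ => dot (n F) (x + t • d)) 0 < c F := by simpa using hlt
      filter_upwards [hc.continuousAt.eventually_lt (continuousAt_const (y := c F)) this] with t ht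
      exact ht.le
  obtain ⟨u, hu, h2⟩ := (mem_nhdsGE_iff_exists_Icc_subset).1 h1
  exact ⟨u, hu, fun t ht htu => g.rep _ (h2 ⟨ht, htu⟩)⟩

lemma facet_sub (g : Geo P n c) {F : Set E3} (hF : F ∈ facets P) : F ⊆ P :=
  fun x hx => ((g.mem F hF x).1 hx).1

lemma crs_ne (g : Geo P n c) {F G : Set E3} (h : Adj P F G) : crs (n F) (n G) ≠ 0 := by
  obtain ⟨hF, hG, hne, x, hxF, hxG⟩ := h
  intro h0
  have h1 := crs_zero h0 (g.ne F hF)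
  generalize dot (n F) (n G) / dot (n F) (n F) = t at h1
  have e1 := ((g.mem F hF x).1 hxF).2
  have e2 := ((g.mem G hG x).1 hxG).2
  have hc : c G = t * c F := by rw [← e2, h1, smul_dot, e1]
  have ht0 : t ≠ 0 := by
    rintro rfl; apply g.ne G hG; rw [h1]; simp
  obtain ⟨p, hp⟩ := g.int
  have i1 := interior_lt (g.ne F hF) (g.le F hF) hp
  have i2 := interior_lt (g.ne G hG) (g.le G hG) hp
  rw [h1, smul_dot, hc] at i2
  rcases lt_or_gt_of_ne ht0 with ht | ht
  · nlinarith
  · apply hne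
    ext y
    rw [g.mem F hF, g.mem G hG, h1, smul_dot, hc]
    constructor
    · rintro ⟨a, b⟩; exact ⟨a, by rw [b]⟩
    · rintro ⟨a, b⟩; exact ⟨a, mul_left_cancel₀ ht0 b⟩

lemma extremeF (_g : Geo P n c) {F : Set E3} (hF : F ∈ facets P) : IsExtreme ℝ P F := hF.1.2.2.2

/-- the line of intersection of two adjacent facets -/
lemma line (g : Geo P n c) {F G : Set E3} (h : Adj P F G) {x y : E3} (hx : x ∈ F ∩ G)
    (hy : y ∈ F ∩ G) : ∃ t : ℝ, y - x = t • crs (n F) (n G) := by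
  apply orth_crs (g.crs_ne h)
  · rw [dot_sub, ((g.mem F h.1 _).1 hx.1).2, ((g.mem F h.1 _).1 hy.1).2, sub_self]
  · rw [dot_sub, ((g.mem G h.2.1 _).1 hx.2).2, ((g.mem G h.2.1 _).1 hy.2).2, sub_self]

lemma vt_exists (g : Geo P n c) {F G : Set E3} (h : Adj P F G) :
    ∃ (v : E3) (H : Set E3), v ∈ F ∩ G ∧ IsVertexOf v P ∧ H ∈ facets P ∧ H ≠ F ∧ H ≠ G ∧ v ∈ H ∧
      (∀ K ∈ facets P, v ∈ K → K = F ∨ K = G ∨ K = H) ∧ 0 < dot (n H) (crs (n F) (n G)) ∧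
      (∀ y ∈ F ∩ G, dot (crs (n F) (n G)) y ≤ dot (crs (n F) (n G)) v) := by
  have hd := dot_self_pos (g.crs_ne h)
  have hcl : IsClosed (F ∩ G) := h.1.1.2.1.inter h.2.1.1.2.1
  have hcp : IsCompact (F ∩ G) :=
    g.compact.of_isClosed_subset hcl (fun x hx => g.facet_sub h.1 hx.1)
  obtain ⟨v, hv, hmax⟩ := hcp.exists_isMaxOn h.2.2.2 (continuous_dot (crs (n F) (n G))).continuousOn
  have hmax' : ∀ y ∈ F ∩ G, dot (crs (n F) (n G)) y ≤ dot (crs (n F) (n G)) v := hmax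
  have huniq : ∀ y ∈ F ∩ G, dot (crs (n F) (n G)) y = dot (crs (n F) (n G)) v → y = v := by
    intro y hy he
    obtain ⟨t, ht⟩ := g.line h hv hy
    have : dot (crs (n F) (n G)) (y - v) = 0 := by rw [dot_sub, he, sub_self]
    rw [ht, dot_smul] at this
    have : t = 0 := by rcases mul_eq_zero.1 this with h | h; exact h; linarith
    rw [this, zero_smul] at ht
    exact sub_eq_zero.1 ht
  have hvP := g.facet_sub h.1 hv.1
  have hvert : IsVertexOf v P := by
    refine ⟨⟨v, rfl⟩, isClosed_singleton, convex_singleton v, ?_⟩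
    refine ⟨by simpa using hvP, ?_⟩
    rintro x hx y hy z rfl hz
    have hxFG : x ∈ F ∩ G := ⟨(g.extremeF h.1).2 hx hy hv.1 hz, (g.extremeF h.2.1).2 hx hy hv.2 hz⟩
    have hz' : z ∈ openSegment ℝ y x := by rw [openSegment_symm]; exact hz
    have hyFG : y ∈ F ∩ G :=
      ⟨(g.extremeF h.1).2 hy hx hv.1 hz', (g.extremeF h.2.1).2 hy hx hv.2 hz'⟩
    apply huniq x hxFG
    have a1 := hmax' x hxFG
    have a2 := hmax' y hyFG
    obtain ⟨s, t, hs, ht, hst, he⟩ := hz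
    have : s * dot (crs (n F) (n G)) x + t * dot (crs (n F) (n G)) y =
      dot (crs (n F) (n G)) z := by
      rw [← dot_smul, ← dot_smul, ← dot_add, he]
    have h3 : s = 1 - t := by linarith
    subst h3
    by_contra hne
    have a3 := lt_of_le_of_ne a1 hne
    nlinarith
  have hcard := g.simple v hvert
  have hfin : {F | IsFacetOf F P ∧ v ∈ F}.Finite := g.fin.subset (fun K hK => hK.1)
  obtain ⟨x, y, z, hxy, hxz, hyz, hI⟩ := Set.ncard_eq_three.1 hcard
  have : ∃ H, H ≠ F ∧ H ≠ G ∧ {F | IsFacetOf F P ∧ v ∈ F} = {F, G, H} := by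
    have hF : F ∈ ({x, y, z} : Set (Set E3)) := by rw [← hI]; exact ⟨h.1, hv.1⟩
    have hG : G ∈ ({x, y, z} : Set (Set E3)) := by rw [← hI]; exact ⟨h.2.1, hv.2⟩
    have hne := h.2.2.1
    rw [hI]
    simp only [mem_insert_iff, mem_singleton_iff] at hF hG
    rcases hF with rfl | rfl | rfl <;> rcases hG with rfl | rfl | rfl <;>
      first
      | exact absurd rfl hne
      | exact ⟨_, hxz.symm, hyz.symm, rfl⟩
      | exact ⟨_, hxy.symm, hyz, by ext; simp; tauto⟩
      | exact ⟨_, hyz.symm, hxz.symm, by ext; simp; tauto⟩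
      | exact ⟨_, hxy, hxz, by ext; simp; tauto⟩
      | exact ⟨_, hyz, hxy.symm, by ext; simp; tauto⟩
      | exact ⟨_, hxz, hxy, by ext; simp; tauto⟩
  obtain ⟨H, hHF, hHG, hI⟩ := this
  have hH : H ∈ {F | IsFacetOf F P ∧ v ∈ F} := by rw [hI]; simp
  have honly : ∀ K ∈ facets P, v ∈ K → K = F ∨ K = G ∨ K = H := by
    intro K hK hvK
    have : K ∈ {F | IsFacetOf F P ∧ v ∈ F} := ⟨hK, hvK⟩
    rw [hI] at this; simpa using this
  refine ⟨v, H, hv, hvert, hH.1, hHF, hHG, hH.2, honly, ?_, hmax'⟩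
  by_contra hneg
  push Not at hneg
  obtain ⟨ε, hε, hfe⟩ := g.feas (d := crs (n F) (n G)) hvP (by
    intro K hK hvK
    rcases honly K hK hvK with rfl | rfl | rfl
    · rw [dot_crs_left]
    · rw [dot_crs_right]
    · exact hneg)
  have hw := hfe ε hε.le le_rfl
  have hwF : v + ε • crs (n F) (n G) ∈ F := by
    rw [g.mem F h.1]
    refine ⟨hw, ?_⟩
    rw [dot_add, dot_smul, dot_crs_left, ((g.mem F h.1 _).1 hv.1).2]; ring
  have hwG : v + ε • crs (n F) (n G) ∈ G := by
    rw [g.mem G h.2.1]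
    refine ⟨hw, ?_⟩
    rw [dot_add, dot_smul, dot_crs_right, ((g.mem G h.2.1 _).1 hv.2).2]; ring
  have := hmax' _ ⟨hwF, hwG⟩
  rw [dot_add, dot_smul] at this
  nlinarith [mul_pos hε hd]

end Geo

/-- Raw rotation data coming from geometry. -/
def Raw (P : Set E3) (n : Set E3 → E3) (r : Set E3 → Set E3 → Set E3)
    (vt : Set E3 → Set E3 → E3) : Prop :=
  ∀ F G, Adj P F G → vt F G ∈ F ∩ G ∧ IsVertexOf (vt F G) P ∧ r F G ∈ facets P ∧ r F G ≠ F ∧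
      r F G ≠ G ∧ vt F G ∈ r F G ∧
      (∀ K ∈ facets P, vt F G ∈ K → K = F ∨ K = G ∨ K = r F G) ∧
      0 < dot (n (r F G)) (crs (n F) (n G)) ∧
      (∀ y ∈ F ∩ G, dot (crs (n F) (n G)) y ≤ dot (crs (n F) (n G)) (vt F G))

lemma Geo.exists_raw {P : Set E3} {n : Set E3 → E3} {c : Set E3 → ℝ} (g : Geo P n c) :
    ∃ r vt, Raw P n r vt := by
  have : ∀ F G, ∃ (v : E3) (H : Set E3), Adj P F G → v ∈ F ∩ G ∧ IsVertexOf v P ∧ H ∈ facets P ∧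
      H ≠ F ∧ H ≠ G ∧ v ∈ H ∧
      (∀ K ∈ facets P, v ∈ K → K = F ∨ K = G ∨ K = H) ∧ 0 < dot (n H) (crs (n F) (n G)) ∧
      (∀ y ∈ F ∩ G, dot (crs (n F) (n G)) y ≤ dot (crs (n F) (n G)) v) := by
    intro F G
    by_cases h : Adj P F G
    · obtain ⟨v, H, h1⟩ := g.vt_exists h
      exact ⟨v, H, fun _ => h1⟩
    · exact ⟨0, ∅, fun h' => absurd h' h⟩
  choose v H h using this
  exact ⟨H, v, h⟩

namespace Geo
variable {P : Set E3} {n : Set E3 → E3} {c : Set E3 → ℝ} {r : Set E3 → Set E3 → Set E3}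
    {vt : Set E3 → Set E3 → E3}

lemma par1 (g : Geo P n c) (w : Raw P n r vt) {F G : Set E3} (h : Adj P F G) {x : E3}
    (hx : x ∈ F ∩ G) : ∃ t : ℝ, 0 ≤ t ∧ vt F G = x + t • crs (n F) (n G) := by
  obtain ⟨hv, -, -, -, -, -, -, -, hmax⟩ := w F G h
  obtain ⟨t, ht⟩ := g.line h hx hv
  refine ⟨t, ?_, by rw [← ht]; abel⟩
  have h1 := hmax x hx
  have h2 : dot (crs (n F) (n G)) (vt F G - x) = t * dot (crs (n F) (n G)) (crs (n F) (n G)) := by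
    rw [ht, dot_smul]
  rw [dot_sub] at h2
  have := dot_self_pos (g.crs_ne h)
  by_contra hneg
  push Not at hneg
  nlinarith

lemma par2 (g : Geo P n c) (w : Raw P n r vt) {F G : Set E3} (h : Adj P F G) {x : E3}
    (hx : x ∈ F ∩ G) : ∃ t : ℝ, 0 ≤ t ∧ x = vt G F + t • crs (n F) (n G) := by
  obtain ⟨t, ht, h1⟩ := g.par1 w h.symm (x := x) ⟨hx.2, hx.1⟩
  refine ⟨t, ht, ?_⟩
  rw [h1, crs_swap (n G) (n F)]
  simp

lemma vne (_g : Geo P n c) (w : Raw P n r vt) {F G : Set E3} (h : Adj P F G) :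
    vt F G ≠ vt G F := by
  intro he
  obtain ⟨_, _, _, _, _, _, honly, hp, _⟩ := w F G h
  obtain ⟨_, _, a1, a2, a3, a4, _, hp', _⟩ := w G F h.symm
  rw [← he] at a4
  rcases honly _ a1 a4 with h1 | h1 | h1
  · exact a3 h1
  · exact a2 h1
  · rw [h1, dot_crs_swap] at hp'
    linarith

lemma mid (g : Geo P n c) (w : Raw P n r vt) {F G : Set E3} (h : Adj P F G) {x : E3}
    (hx : x ∈ F ∩ G) : x = vt F G ∨ x = vt G F ∨ ∀ K ∈ facets P, x ∈ K → K = F ∨ K = G := by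
  obtain ⟨t, ht, h1⟩ := g.par1 w h hx
  obtain ⟨s, hs, h2⟩ := g.par2 w h hx
  rcases eq_or_lt_of_le ht with rfl | ht
  · left; rw [h1]; simp
  rcases eq_or_lt_of_le hs with rfl | hs
  · right; left; rw [h2]; simp
  right; right
  intro K hK hxK
  obtain ⟨hvv, _, _, _, _, _, honly, hp, _⟩ := w F G h
  have hww := (w G F h.symm).1
  have hos : x ∈ openSegment ℝ (vt F G) (vt G F) := by
    refine ⟨s / (s + t), t / (s + t), by positivity, by positivity, by field_simp, ?_⟩
    have e : vt G F = x - s • crs (n F) (n G) := by rw [h2]; simp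
    rw [h1, e]
    have : s + t ≠ 0 := by positivity
    ext i
    simp
    field_simp
    ring
  have hvK := (g.extremeF hK).2 (g.facet_sub h.1 hvv.1) (g.facet_sub h.1 hww.2) hxK hos
  rcases honly K hK hvK with h3 | h3 | h3
  · exact Or.inl h3
  · exact Or.inr h3
  · exfalso
    have e1 := ((g.mem K hK _).1 hvK).2
    rw [h1, dot_add, dot_smul, ((g.mem K hK _).1 hxK).2, h3] at e1
    have := mul_pos ht hp
    linarith

lemma rne (g : Geo P n c) (w : Raw P n r vt) {F G : Set E3} (h : Adj P F G) :
    r F G ≠ r G F := by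
  intro he
  obtain ⟨hvv, _, hH, _, _, hvH, honly, hp, _⟩ := w F G h
  obtain ⟨hww, _, _, _, _, hwH, _, hp', _⟩ := w G F h.symm
  rw [← he] at hwH
  obtain ⟨t, ht, h1⟩ := g.par1 w h (x := vt G F) ⟨hww.2, hww.1⟩
  have e1 := ((g.mem _ hH _).1 hvH).2
  rw [h1, dot_add, dot_smul, ((g.mem _ hH _).1 hwH).2] at e1
  have : t = 0 := by
    have : t * dot (n (r F G)) (crs (n F) (n G)) = 0 := by linarith
    rcases mul_eq_zero.1 this with h | h
    · exact h
    · linarith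
  apply g.vne w h
  rw [h1, this]; simp

lemma cyc (g : Geo P n c) (w : Raw P n r vt) {F G : Set E3} (h : Adj P F G) :
    Adj P G (r F G) ∧ r G (r F G) = F ∧ vt G (r F G) = vt F G := by
  obtain ⟨hvv, _, hH, hHF, hHG, hvH, honly, hp, _⟩ := w F G h
  have hA : Adj P G (r F G) := ⟨h.2.1, hH, hHG.symm, _, hvv.2, hvH⟩
  refine ⟨hA, ?_⟩
  rcases g.mid w hA (x := vt F G) ⟨hvv.2, hvH⟩ with h1 | h1 | h1
  · obtain ⟨_, _, _, _, _, _, honly', _, _⟩ := w _ _ hA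
    rw [← h1] at honly'
    rcases honly' F h.1 hvv.1 with h2 | h2 | h2
    · exact absurd h2 h.2.2.1
    · exact absurd h2.symm hHF
    · exact ⟨h2.symm, h1.symm⟩
  · exfalso
    obtain ⟨_, _, _, _, _, _, honly', hp', _⟩ := w _ _ hA.symm
    rw [← h1] at honly'
    rcases honly' F h.1 hvv.1 with h2 | h2 | h2
    · exact absurd h2.symm hHF
    · exact absurd h2 h.2.2.1
    · rw [← h2, dot_crs_cyc, dot_crs_swap] at hp'
      have := dot_crs_swap (n (r F G)) (n F) (n G)
      linarith
  · rcases h1 F h.1 hvv.1 with h2 | h2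
    · exact absurd h2 h.2.2.1
    · exact absurd h2.symm hHF

lemma seg (g : Geo P n c) (w : Raw P n r vt) {F G : Set E3} (h : Adj P F G) :
    F ∩ G = segment ℝ (vt G F) (vt F G) := by
  apply Subset.antisymm
  · intro x hx
    obtain ⟨t, ht, h1⟩ := g.par1 w h hx
    obtain ⟨s, hs, h2⟩ := g.par2 w h hx
    rcases eq_or_lt_of_le ht with rfl | ht
    · rw [zero_smul, add_zero] at h1; rw [← h1]; exact right_mem_segment _ _ _
    refine ⟨t / (s + t), s / (s + t), by positivity, by positivity, by field_simp; ring, ?_⟩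
    have e : vt G F = x - s • crs (n F) (n G) := by rw [h2]; simp
    rw [h1, e]
    have : s + t ≠ 0 := by positivity
    ext i
    simp
    field_simp
    ring
  · have hc : Convex ℝ (F ∩ G) := h.1.1.2.2.1.inter h.2.1.1.2.2.1
    have h1 := (w F G h).1
    have h2 := (w G F h.symm).1
    exact hc.segment_subset ⟨h2.2, h2.1⟩ h1

lemma edge (g : Geo P n c) (w : Raw P n r vt) {F G : Set E3} (h : Adj P F G) :
    IsEdgeOf (F ∩ G) P := by
  refine ⟨⟨h.2.2.2, h.1.1.2.1.inter h.2.1.1.2.1, h.1.1.2.2.1.inter h.2.1.1.2.2.1,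
    (g.extremeF h.1).inter (g.extremeF h.2.1)⟩, ?_⟩
  have h1 := (w F G h).1
  have h2 := (w G F h.symm).1
  have hle : vectorSpan ℝ (F ∩ G) ≤ Submodule.span ℝ {crs (n F) (n G)} := by
    rw [vectorSpan_def, Submodule.span_le]
    rintro _ ⟨x, hx, y, hy, rfl⟩
    obtain ⟨t, ht⟩ := g.line h hy hx
    change x - y ∈ Submodule.span ℝ {crs (n F) (n G)}; rw [ht]
    exact Submodule.smul_mem _ _ (Submodule.mem_span_singleton_self _)
  have hlt : vectorSpan ℝ (F ∩ G) ≠ ⊥ := by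
    intro hb
    have : vt F G -ᵥ vt G F ∈ vectorSpan ℝ (F ∩ G) := vsub_mem_vectorSpan ℝ h1 ⟨h2.2, h2.1⟩
    rw [hb, Submodule.mem_bot, vsub_eq_sub, sub_eq_zero] at this
    exact g.vne w h this
  have a1 := Submodule.finrank_mono hle
  rw [finrank_span_singleton (g.crs_ne h)] at a1
  have a2 : Module.finrank ℝ (vectorSpan ℝ (F ∩ G)) ≠ 0 := by
    rw [Ne, Submodule.finrank_eq_zero]; exact hlt
  unfold setDim
  omega

lemma isvert (g : Geo P n c) (w : Raw P n r vt) {v : E3} (hv : IsVertexOf v P) :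
    ∃ F G, Adj P F G ∧ v = vt F G := by
  obtain ⟨x, y, z, hxy, hxz, hyz, hI⟩ := Set.ncard_eq_three.1 (g.simple v hv)
  have hx : x ∈ {F | IsFacetOf F P ∧ v ∈ F} := by rw [hI]; simp
  have hy : y ∈ {F | IsFacetOf F P ∧ v ∈ F} := by rw [hI]; simp
  have hz : z ∈ {F | IsFacetOf F P ∧ v ∈ F} := by rw [hI]; simp
  have hA : Adj P x y := ⟨hx.1, hy.1, hxy, v, hx.2, hy.2⟩
  rcases g.mid w hA ⟨hx.2, hy.2⟩ with h | h | h
  · exact ⟨x, y, hA, h⟩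
  · exact ⟨y, x, hA.symm, h⟩
  · rcases h z hz.1 hz.2 with h1 | h1
    · exact absurd h1.symm hxz
    · exact absurd h1.symm hyz

lemma exists_perp (p q : E3) : ∃ u : E3, u ≠ 0 ∧ dot p u = 0 ∧ dot q u = 0 := by
  have : LinearMap.ker ((dotL p).prod (dotL q)) ≠ ⊥ := by
    apply LinearMap.ker_ne_bot_of_finrank_lt
    simp
  obtain ⟨u, hu, hne⟩ := Submodule.exists_mem_ne_zero_of_ne_bot this
  refine ⟨u, hne, ?_⟩
  rw [LinearMap.mem_ker] at hu
  exact ⟨congrArg Prod.fst hu, congrArg Prod.snd hu⟩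

lemma edge_is (g : Geo P n c) {e : Set E3} (he : IsEdgeOf e P) :
    ∃ F G, Adj P F G ∧ e = F ∩ G := by
  obtain ⟨⟨hne, hcl, hcv, hext⟩, hdim⟩ := he
  have : ∃ a ∈ e, ∃ b ∈ e, b - a ≠ 0 := by
    by_contra hcon
    push Not at hcon
    have : vectorSpan ℝ e = ⊥ := by
      rw [vectorSpan_def, eq_bot_iff, Submodule.span_le]
      rintro _ ⟨x, hx, y, hy, rfl⟩
      simpa using hcon y hy x hx
    unfold setDim at hdim
    rw [this] at hdim
    simp at hdim
  obtain ⟨a, ha, b, hb, hab⟩ := this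
  have hspan : ∀ x ∈ e, ∀ y ∈ e, ∃ t : ℝ, y - x = t • (b - a) := by
    intro x hx y hy
    have h1 := (finrank_eq_one_iff_of_nonzero' (K := ℝ)
      (⟨b -ᵥ a, vsub_mem_vectorSpan ℝ hb ha⟩ : vectorSpan ℝ e) (by
        intro h; exact hab (congrArg Subtype.val h))).1 hdim
      ⟨y -ᵥ x, vsub_mem_vectorSpan ℝ hy hx⟩
    obtain ⟨t, ht⟩ := h1
    exact ⟨t, (congrArg Subtype.val ht).symm⟩
  set x : E3 := (1/2 : ℝ) • a + (1/2 : ℝ) • b with hxdef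
  have hxab : x ∈ openSegment ℝ a b := ⟨1/2, 1/2, by norm_num, by norm_num, by norm_num, rfl⟩
  have hxba : x ∈ openSegment ℝ b a := by rw [openSegment_symm]; exact hxab
  have hxe : x ∈ e := hcv.segment_subset ha hb (openSegment_subset_segment _ _ _ hxab)
  have hxP : x ∈ P := hext.1 hxe
  by_cases hone : ∃ p : E3, ∀ K ∈ facets P, x ∈ K → n K = p
  · exfalso
    obtain ⟨p, hp⟩ := hone
    obtain ⟨u, hu0, hup, hub⟩ := exists_perp p (b - a)
    obtain ⟨ε1, hε1, f1⟩ := g.feas (d := u) hxP (by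
      intro K hK hxK; rw [hp K hK hxK, hup])
    obtain ⟨ε2, hε2, f2⟩ := g.feas (d := -u) hxP (by
      intro K hK hxK; rw [hp K hK hxK, dot_neg, hup]; simp)
    have hm : 0 < min ε1 ε2 := lt_min hε1 hε2
    have q1 := f1 (min ε1 ε2) hm.le (min_le_left _ _)
    have q2 := f2 (min ε1 ε2) hm.le (min_le_right _ _)
    have : x + (min ε1 ε2) • u ∈ e := by
      apply hext.2 q1 q2 hxe
      refine ⟨1/2, 1/2, by norm_num, by norm_num, by norm_num, ?_⟩
      module
    obtain ⟨t, ht⟩ := hspan x hxe _ this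
    have h2 : dot u ((min ε1 ε2) • u) = 0 := by
      rw [show (min ε1 ε2) • u = t • (b - a) by rw [← ht]; abel, dot_smul, dot_comm, hub, mul_zero]
    rw [dot_smul] at h2
    have := dot_self_pos hu0
    have := mul_pos hm this
    linarith
  · push Not at hone
    obtain ⟨F, hF, hxF, -⟩ := hone 0
    obtain ⟨G, hG, hxG, hne'⟩ := hone (n F)
    have hA : Adj P F G := ⟨hF, hG, fun h => hne' (by rw [h]), x, hxF, hxG⟩
    have haP := hext.1 ha
    have hbP := hext.1 hb
    have hin : ∀ K ∈ facets P, x ∈ K → e ⊆ K := by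
      intro K hK hxK y hy
      have k1 := ((g.mem K hK _).1 ((g.extremeF hK).2 haP hbP hxK hxab)).2
      have k2 := ((g.mem K hK _).1 ((g.extremeF hK).2 hbP haP hxK hxba)).2
      have k3 := ((g.mem K hK _).1 hxK).2
      obtain ⟨t, ht⟩ := hspan x hxe y hy
      rw [g.mem K hK]
      refine ⟨hext.1 hy, ?_⟩
      rw [show y = x + t • (b - a) by rw [← ht]; abel, dot_add, dot_smul, dot_sub, k1, k2, k3]
      ring
    refine ⟨F, G, hA, Subset.antisymm (fun y hy => ⟨hin F hF hxF hy, hin G hG hxG hy⟩) ?_⟩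
    intro y hy
    obtain ⟨t, ht⟩ := g.line hA ⟨hxF, hxG⟩ hy
    obtain ⟨s, hs⟩ := g.line hA ⟨hin F hF hxF ha, hin G hG hxG ha⟩
      ⟨hin F hF hxF hb, hin G hG hxG hb⟩
    have hs0 : s ≠ 0 := by rintro rfl; apply hab; rw [hs]; simp
    have hxy : y - x = (t / s) • (b - a) := by
      rw [hs, smul_smul, div_mul_cancel₀ _ hs0, ht]
    generalize t / s = q at hxy
    have hz : x + (1 / (2 * (|q| + 1))) • (x - y) ∈ e := by
      have hq : 0 < |q| + 1 := by positivity
      have : x + (1 / (2 * (|q| + 1))) • (x - y) =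
        (1/2 + q / (2 * (|q| + 1))) • a + (1/2 - q / (2 * (|q| + 1))) • b := by
        have : x - y = (- q) • (b - a) := by rw [neg_smul, ← hxy]; abel
        rw [this, hxdef]
        module
      rw [this]
      have b1 : |q / (2 * (|q| + 1))| ≤ 1/2 := by
        rw [abs_div, abs_of_pos (by positivity : 0 < 2 * (|q| + 1)), div_le_iff₀ (by positivity)]
        linarith
      have b2 := abs_le.1 b1
      exact hcv ha hb (by linarith [b2.1]) (by linarith [b2.2]) (by ring)
    exact hext.2 (hA.1.1.2.2.2.1 hy.1) (hext.1 hz) hxe (mem_openSegment_ext (by positivity))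

end Geo

/-- The combinatorial rotation system of a simple polytope. -/
structure Rot (P : Set E3) (r : Set E3 → Set E3 → Set E3) (vt : Set E3 → Set E3 → E3) :
    Prop where
  fin : (facets P).Finite
  cyc : ∀ {F G}, Adj P F G → Adj P G (r F G) ∧ r G (r F G) = F ∧ vt G (r F G) = vt F G
  vmem : ∀ {F G}, Adj P F G → vt F G ∈ F ∩ G
  only : ∀ {F G}, Adj P F G → ∀ K ∈ facets P, vt F G ∈ K → K = F ∨ K = G ∨ K = r F G
  rne : ∀ {F G}, Adj P F G → r F G ≠ r G F
  vne : ∀ {F G}, Adj P F G → vt F G ≠ vt G F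
  vert : ∀ {F G}, Adj P F G → IsVertexOf (vt F G) P
  isvert : ∀ {v}, IsVertexOf v P → ∃ F G, Adj P F G ∧ v = vt F G
  seg : ∀ {F G}, Adj P F G → F ∩ G = segment ℝ (vt G F) (vt F G)
  edge : ∀ {F G}, Adj P F G → IsEdgeOf (F ∩ G) P
  mid : ∀ {F G}, Adj P F G → ∀ {x}, x ∈ F ∩ G →
    x = vt F G ∨ x = vt G F ∨ ∀ K ∈ facets P, x ∈ K → K = F ∨ K = G
  edge_is : ∀ {e}, IsEdgeOf e P → ∃ F G, Adj P F G ∧ e = F ∩ G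
  conn : ∀ {F G H}, Adj P F G → Adj P F H → ∃ i : ℕ, (r F)^[i] G = H

namespace Geo
variable {P : Set E3} {n : Set E3 → E3} {c : Set E3 → ℝ} {r : Set E3 → Set E3 → Set E3}
    {vt : Set E3 → Set E3 → E3}

lemma inv1 (g : Geo P n c) (w : Raw P n r vt) {F G : Set E3} (h : Adj P F G) :
    Adj P (r F G) F ∧ r (r F G) F = G ∧ vt (r F G) F = vt F G := by
  have h1 := g.cyc w h
  have h2 := g.cyc w h1.1
  rw [h1.2.1] at h2
  exact ⟨h2.1, h2.2.1, by rw [h2.2.2, h1.2.2]⟩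

/-- orbit of the rotation is closed under inverse -/
lemma orbit (g : Geo P n c) (w : Raw P n r vt) {F G : Set E3} (h : Adj P F G) :
    ∃ S : Set (Set E3), G ∈ S ∧ S.Finite ∧ (∀ K ∈ S, Adj P F K) ∧ (∀ K ∈ S, r F K ∈ S) ∧
      (∀ K ∈ S, r K F ∈ S) ∧ ∀ K ∈ S, ∃ i : ℕ, (r F)^[i] G = K := by
  let S : Set (Set E3) := {K | ∃ i : ℕ, (r F)^[i] G = K}
  have hadj : ∀ K ∈ S, Adj P F K := by
    rintro K ⟨i, rfl⟩
    induction i with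
    | zero => exact h
    | succ i ih =>
      rw [Function.iterate_succ_apply']
      exact (g.inv1 w ih).1.symm
  have hfin : S.Finite := g.fin.subset (fun K hK => (hadj K hK).2.1)
  have hcl : ∀ K ∈ S, r F K ∈ S := by
    rintro K ⟨i, rfl⟩
    exact ⟨i + 1, Function.iterate_succ_apply' _ _ _⟩
  have hinj : InjOn (r F) S := by
    intro K hK K' hK' he
    have h1 := (g.inv1 w (hadj K hK)).2.1
    have h2 := (g.inv1 w (hadj K' hK')).2.1
    rw [← h1, ← h2]
    rw [he]
  have himg : r F '' S = S := by
    apply Set.eq_of_subset_of_ncard_le _ _ hfin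
    · rintro _ ⟨K, hK, rfl⟩; exact hcl K hK
    · rw [Set.InjOn.ncard_image hinj]
  refine ⟨S, ⟨0, rfl⟩, hfin, hadj, hcl, ?_, fun K hK => hK⟩
  intro K hK
  rw [← himg] at hK
  obtain ⟨K', hK', rfl⟩ := hK
  rw [(g.inv1 w (hadj K' hK')).2.1]
  exact hK'

lemma conn (g : Geo P n c) (w : Raw P n r vt) {F G H : Set E3} (h : Adj P F G) (hH : Adj P F H) :
    ∃ i : ℕ, (r F)^[i] G = H := by
  obtain ⟨S, hGS, hSfin, hSadj, hS1, hS2, hS3⟩ := g.orbit w h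
  suffices hHS : H ∈ S from hS3 H hHS
  by_contra hHS
  have hcpt : IsCompact (⋃ K ∈ S, F ∩ K) := by
    apply hSfin.isCompact_biUnion
    intro K hK
    exact g.compact.of_isClosed_subset (h.1.1.2.1.inter (hSadj K hK).2.1.1.2.1)
      (fun x hx => g.facet_sub h.1 hx.1)
  have hne : (⋃ K ∈ S, F ∩ K).Nonempty := by
    obtain ⟨x, hx⟩ := h.2.2.2
    exact ⟨x, mem_biUnion hGS hx⟩
  obtain ⟨z, hz, hmax⟩ := hcpt.exists_isMaxOn hne (continuous_dot (n H)).continuousOn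
  have hvtin : ∀ K ∈ S, vt F K ∈ (⋃ K ∈ S, F ∩ K) ∧ vt K F ∈ (⋃ K ∈ S, F ∩ K) := by
    intro K hK
    have a := (w F K (hSadj K hK)).1
    have b := (w K F (hSadj K hK).symm).1
    exact ⟨mem_biUnion hK a, mem_biUnion hK ⟨b.2, b.1⟩⟩
  have hK : ∃ K ∈ S, dot (n H) z ≤ dot (n H) (vt F K) := by
    simp only [mem_iUnion] at hz
    obtain ⟨K, hK, hz⟩ := hz
    rw [g.seg w (hSadj K hK)] at hz
    obtain ⟨s, t, hs, ht, hst, rfl⟩ := hz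
    by_cases hc : dot (n H) (vt K F) ≤ dot (n H) (vt F K)
    · refine ⟨K, hK, ?_⟩
      rw [dot_add, dot_smul, dot_smul]
      have : s = 1 - t := by linarith
      subst this
      nlinarith
    · refine ⟨r K F, hS2 K hK, ?_⟩
      rw [(g.cyc w (hSadj K hK).symm).2.2]
      rw [dot_add, dot_smul, dot_smul]
      have : s = 1 - t := by linarith
      subst this
      nlinarith
  obtain ⟨K, hK, hzK⟩ := hK
  have hKadj := hSadj K hK
  have hmax' : ∀ y ∈ (⋃ K ∈ S, F ∩ K), dot (n H) y ≤ dot (n H) (vt F K) :=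
    fun y hy => le_trans (hmax hy) hzK
  have hK'adj := hSadj _ (hS1 K hK)
  have hinv := g.inv1 w hKadj
  have hv := (w F K hKadj)
  have hvP := g.facet_sub h.1 hv.1.1
  have hlt : dot (n H) (vt F K) < c H := by
    apply lt_of_le_of_ne (g.le H hH.2.1 _ hvP)
    intro he
    have : vt F K ∈ H := (g.mem H hH.2.1 _).2 ⟨hvP, he⟩
    rcases hv.2.2.2.2.2.2.1 H hH.2.1 this with h1 | h1 | h1
    · exact hH.2.2.1 h1.symm
    · exact hHS (h1 ▸ hK)
    · exact hHS (h1 ▸ hS1 K hK)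
  have hd1 : 0 ≤ dot (n H) (crs (n F) (n K)) := by
    obtain ⟨b1, b2⟩ := (w K F hKadj.symm).1
    obtain ⟨t, ht, h1⟩ := g.par1 w hKadj (x := vt K F) ⟨b2, b1⟩
    have ht0 : t ≠ 0 := by
      rintro rfl
      apply g.vne w hKadj
      rw [h1]; simp
    have ht' : 0 < t := lt_of_le_of_ne ht ht0.symm
    have := hmax' _ (hvtin K hK).2
    rw [h1, dot_add, dot_smul] at this
    by_contra hneg
    push Not at hneg
    nlinarith
  have hd2 : dot (n H) (crs (n F) (n (r F K))) ≤ 0 := by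
    obtain ⟨b1, b2⟩ := (w _ F hK'adj.symm).1
    obtain ⟨t, ht, h1⟩ := g.par1 w hK'adj (x := vt (r F K) F) ⟨b2, b1⟩
    have ht0 : t ≠ 0 := by
      rintro rfl
      apply g.vne w hK'adj
      rw [h1]; simp
    have ht' : 0 < t := lt_of_le_of_ne ht ht0.symm
    have := hmax' _ (hvtin _ (hS1 K hK)).1
    rw [h1, hinv.2.2, dot_add, dot_smul] at this
    by_contra hneg
    push Not at hneg
    nlinarith
  obtain ⟨y, hyF, hyH⟩ := hH.2.2.2
  have hyP := g.facet_sub h.1 hyF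
  have hτ := hv.2.2.2.2.2.2.2.1
  have e1 : dot (n F) (y - vt F K) = 0 := by
    rw [dot_sub, ((g.mem F h.1 _).1 hyF).2, ((g.mem F h.1 _).1 hv.1.1).2, sub_self]
  have e2 : dot (n K) (y - vt F K) ≤ 0 := by
    rw [dot_sub, ((g.mem K hKadj.2.1 _).1 hv.1.2).2]
    linarith [g.le K hKadj.2.1 y hyP]
  have e3 : dot (n (r F K)) (y - vt F K) ≤ 0 := by
    rw [dot_sub, ((g.mem _ hK'adj.2.1 _).1 hv.2.2.2.2.2.1).2]
    linarith [g.le _ hK'adj.2.1 y hyP]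
  have e4 : 0 < dot (n H) (y - vt F K) := by
    rw [dot_sub, ((g.mem H hH.2.1 _).1 hyH).2]; linarith
  have ident : ∀ a b e h u : E3, dot e (crs a b) * dot h u = dot a u * dot h (crs b e)
      - dot b u * dot h (crs a e) + dot e u * dot h (crs a b) := by
    intro a b e h u
    unfold dot crs; simp; ring
  have := ident (n F) (n K) (n (r F K)) (n H) (y - vt F K)
  rw [e1] at this
  have p1 := mul_pos hτ e4
  have p2 : 0 ≤ dot (n K) (y - vt F K) * dot (n H) (crs (n F) (n (r F K))) :=
    mul_nonneg_of_nonpos_of_nonpos e2 hd2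
  have p3 : dot (n (r F K)) (y - vt F K) * dot (n H) (crs (n F) (n K)) ≤ 0 :=
    mul_nonpos_of_nonpos_of_nonneg e3 hd1
  linarith

lemma exists_rot (g : Geo P n c) : ∃ r vt, Rot P r vt := by
  obtain ⟨r, vt, w⟩ := g.exists_raw
  exact ⟨r, vt, g.fin, g.cyc w, fun h => (w _ _ h).1, fun h => (w _ _ h).2.2.2.2.2.2.1, g.rne w,
    g.vne w, fun h => (w _ _ h).2.1, g.isvert w, g.seg w, g.edge w, g.mid w, g.edge_is, g.conn w⟩

end Geo

namespace Rot
variable {P : Set E3} {r : Set E3 → Set E3 → Set E3} {vt : Set E3 → Set E3 → E3}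

lemma inv1 (w : Rot P r vt) {F G : Set E3} (h : Adj P F G) :
    Adj P (r F G) F ∧ r (r F G) F = G ∧ vt (r F G) F = vt F G := by
  have h1 := w.cyc h
  have h2 := w.cyc h1.1
  rw [h1.2.1] at h2
  exact ⟨h2.1, h2.2.1, by rw [h2.2.2, h1.2.2]⟩

lemma adj_r (w : Rot P r vt) {F G : Set E3} (h : Adj P F G) : Adj P F (r F G) := (w.inv1 h).1.symm

lemma adj_iter (w : Rot P r vt) {F G : Set E3} (h : Adj P F G) (i : ℕ) :
    Adj P F ((r F)^[i] G) := by
  induction i with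
  | zero => exact h
  | succ i ih => rw [Function.iterate_succ_apply']; exact w.adj_r ih

/-- `r F (r G F) = G`. -/
lemma inv2 (w : Rot P r vt) {F G : Set E3} (h : Adj P F G) :
    r F (r G F) = G := (w.cyc h.symm).2.1

lemma adj_r2 (w : Rot P r vt) {F G : Set E3} (h : Adj P F G) : Adj P F (r G F) :=
  (w.cyc h.symm).1

lemma rr_ne (w : Rot P r vt) {F G : Set E3} (h : Adj P F G) : r F (r F G) ≠ G := by
  intro he
  have h1 := (w.inv1 (w.adj_r h)).2.1
  rw [he] at h1
  exact w.rne h h1.symm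

/-- The mirror rotation system. -/
lemma mirror (w : Rot P r vt) : Rot P (fun F G => r G F) (fun F G => vt G F) where
  fin := w.fin
  cyc := by
    intro F G h
    have h1 := w.cyc h.symm
    have h2 := w.inv1 h.symm
    exact ⟨h2.1.symm, h2.2.1, h2.2.2⟩
  vmem := fun h => (w.vmem h.symm).symm
  only := fun h K hK hv => by
    have := w.only h.symm K hK hv
    tauto
  rne := fun h => w.rne h.symm
  vne := fun h => w.vne h.symm
  vert := fun h => w.vert h.symm
  isvert := by
    intro v hv
    obtain ⟨F, G, h, he⟩ := w.isvert hv
    exact ⟨G, F, h.symm, he⟩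
  seg := by
    intro F G h
    rw [w.seg h, segment_symm]
  edge := w.edge
  mid := by
    intro F G h x hx
    have := w.mid h hx
    tauto
  edge_is := w.edge_is
  conn := by
    intro F G H h hH
    obtain ⟨i, hi⟩ := w.conn hH h
    refine ⟨i, ?_⟩
    subst hi
    induction i with
    | zero => rfl
    | succ i ih =>
      rw [Function.iterate_succ_apply, Function.iterate_succ_apply',
        (w.inv1 (w.adj_iter hH i)).2.1]
      exact ih (w.adj_iter hH i)

/-- a point of an edge lying in no other facet -/
lemma midpt (w : Rot P r vt) {F G : Set E3} (h : Adj P F G) :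
    ∃ x ∈ F ∩ G, ∀ K ∈ facets P, x ∈ K → K = F ∨ K = G := by
  let x := midpoint ℝ (vt G F) (vt F G)
  have hx : x ∈ F ∩ G := by
    rw [w.seg h]; exact midpoint_mem_segment _ _
  refine ⟨x, hx, ?_⟩
  rcases w.mid h hx with h1 | h1 | h1
  · exfalso
    exact w.vne h ((midpoint_eq_right_iff ℝ).1 h1).symm
  · exfalso
    exact w.vne h ((midpoint_eq_left_iff ℝ).1 h1).symm
  · exact h1

lemma edge_sub (w : Rot P r vt) {F G K : Set E3} (h : Adj P F G) (hK : K ∈ facets P)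
    (hs : F ∩ G ⊆ K) : K = F ∨ K = G := by
  obtain ⟨x, hx, h1⟩ := w.midpt h
  exact h1 K hK (hs hx)

lemma edge_inj (w : Rot P r vt) {F G F' G' : Set E3} (h : Adj P F G) (h' : Adj P F' G')
    (hs : F ∩ G = F' ∩ G') : (F' = F ∧ G' = G) ∨ (F' = G ∧ G' = F) := by
  have h1 := w.edge_sub h h'.1 (hs ▸ inter_subset_left)
  have h2 := w.edge_sub h h'.2.1 (hs ▸ inter_subset_right)
  have h3 := h'.2.2.1
  rcases h1 with rfl | rfl <;> rcases h2 with rfl | rfl <;> simp_all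

lemma facetEdges_eq (w : Rot P r vt) {F : Set E3} (hF : F ∈ facets P) :
    facetEdges P F = {G | Adj P F G}.ncard := by
  unfold facetEdges
  have : {e | IsEdgeOf e P ∧ e ⊆ F} = (fun G => F ∩ G) '' {G | Adj P F G} := by
    ext e
    constructor
    · rintro ⟨he, hs⟩
      obtain ⟨A, B, hA, rfl⟩ := w.edge_is he
      rcases w.edge_sub hA hF hs with rfl | rfl
      · exact ⟨B, hA, rfl⟩
      · exact ⟨A, hA.symm, inter_comm _ _⟩
    · rintro ⟨G, hG, rfl⟩
      exact ⟨w.edge hG, inter_subset_left⟩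
  rw [this, Set.InjOn.ncard_image]
  intro G hG G' hG' he
  rcases w.edge_inj hG hG' he with h | h
  · exact h.2.symm
  · exact absurd h.1 hG.2.2.1

lemma nbr_fin (w : Rot P r vt) (F : Set E3) : {G | Adj P F G}.Finite :=
  w.fin.subset (fun _ h => h.2.1)

end Rot

/-- Points of `F` in no other facet. -/
def ri (P F : Set E3) : Set E3 := {x | x ∈ F ∧ ∀ G ∈ facets P, x ∈ G → G = F}

/-- Topological facts on the boundary complex. -/
structure Topo (P : Set E3) : Prop where
  fr : frontier P = ⋃₀ facets P
  conn : IsPreconnected (frontier P)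
  intr_sub : ∀ F ∈ facets P, intrinsicInterior ℝ F ⊆ ri P F
  intr_ne : ∀ F ∈ facets P, (intrinsicInterior ℝ F).Nonempty
  ri_conn : ∀ F ∈ facets P, ∀ x ∈ F, IsPreconnected (insert x (ri P F))

lemma Geo.topo {P : Set E3} {n : Set E3 → E3} {c : Set E3 → ℝ} (g : Geo P n c) : Topo P where
  fr := by
    rw [g.compact.isClosed.frontier_eq]
    ext x
    constructor
    · rintro ⟨hx, hni⟩
      by_contra hcon
      apply hni
      rw [mem_interior]
      refine ⟨⋂ F ∈ facets P, {y | dot (n F) y < c F}, ?_, ?_, ?_⟩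
      · intro y hy
        simp only [mem_iInter] at hy
        exact g.rep y (fun F hF => le_of_lt (hy F hF))
      · apply g.fin.isOpen_biInter
        intro F hF
        exact isOpen_lt (continuous_dot _) continuous_const
      · simp only [mem_iInter]
        intro F hF
        apply lt_of_le_of_ne (g.le F hF x hx)
        intro he
        exact hcon ⟨F, hF, (g.mem F hF x).2 ⟨hx, he⟩⟩
    · rintro ⟨F, hF, hxF⟩
      refine ⟨g.facet_sub hF hxF, fun hi => ?_⟩
      have := interior_lt (g.ne F hF) (g.le F hF) hi
      rw [((g.mem F hF x).1 hxF).2] at this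
      exact lt_irrefl _ this
  conn := by
    obtain ⟨h, -, -, h3⟩ := exists_homeomorph_image_interior_closure_frontier_eq_unitBall
      g.convex g.int g.compact.isBounded
    rw [← h.isPreconnected_image, h3]
    apply isPreconnected_sphere
    rw [← Module.finrank_eq_rank]
    simp
  intr_sub := by
    intro F hF x hx
    have hxF := intrinsicInterior_subset hx
    refine ⟨hxF, ?_⟩
    intro G hG hxG
    by_contra hne
    have hA : Adj P F G := ⟨hF, hG, fun h => hne h.symm, x, hxF, hxG⟩
    have hs : F ⊆ G := by
      intro y hy
      obtain ⟨ε, hε, h1⟩ := ext_intr hx (subset_affineSpan ℝ F hy)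
      have a1 := g.le G hG _ (g.facet_sub hF h1)
      have a2 := ((g.mem G hG x).1 hxG).2
      have a3 := g.le G hG _ (g.facet_sub hF hy)
      rw [dot_add, dot_smul, dot_sub, a2] at a1
      refine (g.mem G hG y).2 ⟨g.facet_sub hF hy, le_antisymm a3 ?_⟩
      by_contra hlt
      push Not at hlt
      nlinarith [mul_pos hε (sub_pos.2 hlt)]
    obtain ⟨r, vt, w⟩ := g.exists_raw
    have h1 := (g.edge w hA).2
    rw [inter_eq_left.2 hs, hF.2] at h1
    omega
  intr_ne := fun F hF => Set.Nonempty.intrinsicInterior hF.1.2.2.1 hF.1.1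
  ri_conn := by
    intro F hF x hx
    apply Convex.isPreconnected
    rw [convex_iff_openSegment_subset]
    have sub : insert x (ri P F) ⊆ F := by
      rintro y (rfl | hy)
      · exact hx
      · exact hy.1
    have key : ∀ y ∈ ri P F, ∀ z ∈ F, openSegment ℝ y z ⊆ ri P F := by
      intro y hy z hz q hq
      refine ⟨hF.1.2.2.1.segment_subset hy.1 hz (openSegment_subset_segment _ _ _ hq), ?_⟩
      intro G hG hqG
      exact hy.2 G hG ((g.extremeF hG).2 (g.facet_sub hF hy.1) (g.facet_sub hF hz) hqG hq)
    rintro y hy z hz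
    rcases hy with rfl | hy
    · rcases hz with rfl | hz
      · rw [openSegment_same]; simp
      · rw [openSegment_symm]
        exact (key z hz _ hx).trans (subset_insert _ _)
    · exact (key y hy z (sub hz)).trans (subset_insert _ _)

namespace Topo
variable {P : Set E3}

lemma ri_ne (t : Topo P) {F : Set E3} (hF : F ∈ facets P) : (ri P F).Nonempty :=
  (t.intr_ne F hF).mono (t.intr_sub F hF)

lemma ri_sub_fr (t : Topo P) {F : Set E3} (hF : F ∈ facets P) : ri P F ⊆ frontier P := by
  rw [t.fr]; exact fun x hx => ⟨F, hF, hx.1⟩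

lemma comp_mem {C S : Set E3} (hC : IsCompOf C S) {x : E3} (hx : x ∈ C) :
    C = connectedComponentIn S x := by
  obtain ⟨y, hy, rfl⟩ := hC
  exact connectedComponentIn_eq hx

lemma comp_sub {C S : Set E3} (hC : IsCompOf C S) : C ⊆ S := by
  obtain ⟨y, hy, rfl⟩ := hC
  exact connectedComponentIn_subset _ _

lemma comp_eq {C C' S : Set E3} (hC : IsCompOf C S) (hC' : IsCompOf C' S) {x : E3} (hx : x ∈ C)
    (hx' : x ∈ C') : C = C' := by rw [comp_mem hC hx, comp_mem hC' hx']

lemma ri_sub (t : Topo P) {F C S : Set E3} (hF : F ∈ facets P) (hC : IsCompOf C S)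
    (hS : ri P F ⊆ S) {x : E3} (hx : x ∈ F) (hxC : x ∈ C) : ri P F ⊆ C := by
  rw [comp_mem hC hxC]
  refine (subset_insert _ _).trans ((t.ri_conn F hF x hx).subset_connectedComponentIn
    (mem_insert _ _) ?_)
  exact insert_subset (comp_sub hC hxC) hS

lemma mem_of_ri (t : Topo P) {F C S : Set E3} (hF : F ∈ facets P) (hC : IsCompOf C S)
    (hS : ri P F ⊆ C) {x : E3} (hx : x ∈ F) (hxS : x ∈ S) : x ∈ C := by
  obtain ⟨y, hy⟩ := t.ri_ne hF
  rw [comp_mem hC (hS hy)]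
  refine ((t.ri_conn F hF x hx).subset_connectedComponentIn
    (mem_insert_of_mem _ hy) ?_) (mem_insert _ _)
  exact insert_subset hxS (hS.trans (comp_sub hC))

lemma intr_iff (t : Topo P) {F C S : Set E3} (hF : F ∈ facets P) (hC : IsCompOf C S)
    (hS : ri P F ⊆ S) : intrinsicInterior ℝ F ⊆ C ↔ ri P F ⊆ C := by
  constructor
  · intro h
    obtain ⟨y, hy⟩ := t.intr_ne F hF
    exact t.ri_sub hF hC hS (intrinsicInterior_subset hy) (h hy)
  · exact fun h => (t.intr_sub F hF).trans h

/-- two facets sharing a point of `S` lie in the same component -/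
lemma step (t : Topo P) {F G C S : Set E3} (hF : F ∈ facets P) (hG : G ∈ facets P)
    (hC : IsCompOf C S) (hGS : ri P G ⊆ S) {x : E3} (hxF : x ∈ F) (hxG : x ∈ G)
    (hxS : x ∈ S) (h : ri P F ⊆ C) : ri P G ⊆ C :=
  t.ri_sub hG hC hGS hxG (t.mem_of_ri hF hC h hxF hxS)

lemma comp_sep {C S U V : Set E3} (hC : IsCompOf C S) (hU : IsClosed U) (hV : IsClosed V)
    (h1 : S ⊆ U ∪ V) (h2 : S ∩ (U ∩ V) = ∅) {x : E3} (hx : x ∈ C) (hxU : x ∈ U) : C ⊆ U := by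
  have hCS := comp_sub hC
  have hp : IsPreconnected C := by
    rw [comp_mem hC hx]; exact isPreconnected_connectedComponentIn
  have h3 : C ∩ (U ∩ V) = ∅ := by
    rw [← subset_empty_iff, ← h2]; exact inter_subset_inter_left _ hCS
  rcases isPreconnected_iff_subset_of_disjoint_closed.1 hp U V hU hV (hCS.trans h1) h3 with h | h
  · exact h
  · exfalso
    have : x ∈ C ∩ (U ∩ V) := ⟨hx, hxU, h hx⟩
    rw [h3] at this; exact this

end Topo

lemma nxt_val {k : ℕ} (i : Fin k) : (nxt i).1 = if i.1 + 1 = k then 0 else i.1 + 1 := by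
  have := i.2
  unfold nxt
  split_ifs with h
  · simp [h]
  · exact Nat.mod_eq_of_lt (by omega)

lemma prv_val {k : ℕ} (i : Fin k) : (prv i).1 = if i.1 = 0 then k - 1 else i.1 - 1 := by
  have := i.2
  unfold prv
  split_ifs with h
  · simp only [h, zero_add]; exact Nat.mod_eq_of_lt (by omega)
  · simp only
    rw [show i.1 + (k - 1) = (i.1 - 1) + k by omega, Nat.add_mod_right]
    exact Nat.mod_eq_of_lt (by omega)

lemma nxt_prv {k : ℕ} (i : Fin k) : nxt (prv i) = i := by
  have := i.2
  apply Fin.ext; rw [nxt_val, prv_val]; split_ifs <;> omega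

lemma prv_nxt {k : ℕ} (i : Fin k) : prv (nxt i) = i := by
  have := i.2
  have h1 := nxt_val i
  apply Fin.ext; rw [prv_val]; split_ifs at * <;> omega

lemma nxt_inj {k : ℕ} {i j : Fin k} (h : nxt i = nxt j) : i = j := by
  rw [← prv_nxt i, h, prv_nxt]

lemma nxt_ne {k : ℕ} (hk : 2 ≤ k) (i : Fin k) : nxt i ≠ i := by
  intro h
  have := congrArg Fin.val h
  have := i.2
  rw [nxt_val] at *
  split_ifs at * <;> omega

/-- Combinatorial consequences of being a belt. -/
structure BeltC (P : Set E3) {k : ℕ} (B : Fin k → Set E3) : Prop where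
  hk : 3 ≤ k
  inj : Function.Injective B
  adj : ∀ j, Adj P (B j) (B (nxt j))
  nadj : ∀ p q, Adj P (B p) (B q) → q = nxt p ∨ p = nxt q
  tri : ∀ a b c, a ≠ b → b ≠ c → a ≠ c → ∀ x, x ∈ B a → x ∈ B b → x ∈ B c → False

lemma IsBelt.beltC {P : Set E3} {k : ℕ} {B : Fin k → Set E3} (h : IsBelt P B) : BeltC P B := by
  obtain ⟨hk, ⟨_, hfac, hedge⟩, h3, h4⟩ := h
  have hedge := hedge (by omega)
  have hne : ∀ j, B j ≠ B (nxt j) := by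
    intro j he
    have h1 := (hedge j).2
    rw [← he, inter_self, (hfac j).2] at h1
    omega
  have hcons : ∀ p q, p ≠ q → (B p ∩ B q).Nonempty → q = nxt p ∨ p = nxt q := by
    intro p q hpq hn
    by_cases h : k = 3
    · subst h
      revert hpq; revert p q
      have : ∀ p q : Fin 3, p ≠ q → q = nxt p ∨ p = nxt q := by decide
      exact fun p q _ => this p q
    · exact (h4 (by omega) p q hpq).1 hn
  have hadj : ∀ j, Adj P (B j) (B (nxt j)) := fun j =>
    ⟨hfac j, hfac _, hne j, (hedge j).1.1⟩
  refine ⟨hk, ?_, hadj, ?_, ?_⟩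
  · intro p q he
    by_contra hpq
    rcases hcons p q hpq (by rw [he, inter_self]; exact (hfac q).1.1) with h | h
    · exact hne p (by rw [← h, he])
    · exact hne q (by rw [← h, he])
  · intro p q hA
    exact hcons p q (fun h => hA.2.2.1 (by rw [h])) hA.2.2.2
  · intro a b c hab hbc hac x xa xb xc
    by_cases h : k = 3
    · subst h
      have key : ∀ a b c : Fin 3, a ≠ b → b ≠ c → a ≠ c → ∀ i, i = a ∨ i = b ∨ i = c := by decide
      have hall : ∀ i, x ∈ B i := by
        intro i
        rcases key a b c hab hbc hac i with rfl | rfl | rfl <;> assumption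
      have : x ∈ B 0 ∩ B (nxt 0) ∩ B (nxt (nxt 0)) := ⟨⟨hall _, hall _⟩, hall _⟩
      rw [h3 rfl 0] at this
      exact this
    · have e1 := hcons a b hab ⟨x, xa, xb⟩
      have e2 := hcons b c hbc ⟨x, xb, xc⟩
      have e3 := hcons a c hac ⟨x, xa, xc⟩
      simp only [Fin.ext_iff, nxt_val, ne_eq] at e1 e2 e3 hab hbc hac
      have := a.2
      have := b.2
      have := c.2
      split_ifs at * <;> omega

/-- One side of a belt. -/
structure Side (P : Set E3) (r : Set E3 → Set E3 → Set E3) {k : ℕ} (B : Fin k → Set E3)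
    (α : Fin k → ℕ) (x : Fin k → ℕ → Set E3) : Prop where
  pos : ∀ j, 0 < α j
  adj : ∀ j i, i < α j → Adj P (B j) (x j i)
  nb : ∀ j i, i < α j → x j i ∉ range B
  inj : ∀ j i i', i < α j → i' < α j → x j i = x j i' → i = i'
  first : ∀ j, x j 0 = r (B j) (B (prv j))
  step : ∀ j i, i + 1 < α j → r (B j) (x j i) = x j (i + 1)
  last : ∀ j i, i + 1 = α j → r (B j) (x j i) = B (nxt j)

namespace Rot
variable {P : Set E3} {r : Set E3 → Set E3 → Set E3} {vt : Set E3 → Set E3 → E3}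

/-- Splitting of the link of a facet by two neighbours which are not consecutive. -/
lemma arc (w : Rot P r vt) {F p q : Set E3} (hp : Adj P F p) (hq : Adj P F q) (hpq : p ≠ q)
    (h1 : r F p ≠ q) : ∃ a : ℕ, 2 ≤ a ∧ (r F)^[a] p = q ∧ (∀ i, i < a → (r F)^[i] p ≠ q) ∧
      (∀ i, 0 < i → i ≤ a → (r F)^[i] p ≠ p) ∧
      (∀ i i', i ≤ a → i' ≤ a → (r F)^[i] p = (r F)^[i'] p → i = i') := by
  classical
  have hex := w.conn hp hq
  have hspec := Nat.find_spec hex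
  have hmin : ∀ i, i < Nat.find hex → (r F)^[i] p ≠ q := fun i hi => Nat.find_min hex hi
  set a := Nat.find hex with ha
  have hinj : ∀ i i', i ≤ a → i' ≤ a → i < i' → (r F)^[i] p ≠ (r F)^[i'] p := by
    intro i i' hi hi' hlt he
    apply hmin (a - i' + i) (by omega)
    rw [Function.iterate_add_apply, he, ← Function.iterate_add_apply,
      show a - i' + i' = a by omega, hspec]
  refine ⟨a, ?_, hspec, hmin, ?_, ?_⟩
  · by_contra hlt
    have : a = 0 ∨ a = 1 := by omega
    rcases this with h | h
    · rw [h] at hspec; exact hpq hspec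
    · rw [h] at hspec; exact h1 hspec
  · intro i h0 hi he
    exact hinj 0 i (by omega) hi h0 he.symm
  · intro i i' hi hi' he
    rcases lt_trichotomy i i' with h | h | h
    · exact absurd he (hinj i i' hi hi' h)
    · exact h
    · exact absurd he.symm (hinj i' i hi' hi h)

lemma arc_count (w : Rot P r vt) {F p q : Set E3} (hp : Adj P F p) (hpq : p ≠ q)
    {a a' : ℕ} (ha : 2 ≤ a) (ha' : 2 ≤ a') (e : (r F)^[a] p = q)
    (e' : (fun G => r G F)^[a'] p = q)
    (m1 : ∀ i, i < a → (r F)^[i] p ≠ q) (m1' : ∀ i, i < a' → (fun G => r G F)^[i] p ≠ q)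
    (m2 : ∀ i, 0 < i → i ≤ a → (r F)^[i] p ≠ p)
    (m2' : ∀ i, 0 < i → i ≤ a' → (fun G => r G F)^[i] p ≠ p)
    (m3 : ∀ i i', i ≤ a → i' ≤ a → (r F)^[i] p = (r F)^[i'] p → i = i')
    (m3' : ∀ i i', i ≤ a' → i' ≤ a' →
      (fun G => r G F)^[i] p = (fun G => r G F)^[i'] p → i = i') :
    {G | Adj P F G}.ncard = a + a' ∧
    ∀ G, Adj P F G → G = p ∨ G = q ∨ (∃ i, i + 1 < a ∧ G = (r F)^[i + 1] p) ∨
      (∃ i, i + 1 < a' ∧ G = (fun G => r G F)^[i + 1] p) := by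
  classical
  have hadj' : ∀ i, Adj P F ((fun G => r G F)^[i] p) := fun i => w.mirror.adj_iter hp i
  have hback : ∀ i, r F ((fun G => r G F)^[i + 1] p) = (fun G => r G F)^[i] p := by
    intro i
    rw [Function.iterate_succ_apply']
    exact w.inv2 (hadj' i)
  let X : Finset (Set E3) := (Finset.range (a - 1)).image (fun i => (r F)^[i + 1] p)
  let X' : Finset (Set E3) := (Finset.range (a' + 1)).image (fun i => (fun G => r G F)^[i] p)
  have hX : X.card = a - 1 := by
    rw [Finset.card_image_of_injOn, Finset.card_range]
    intro i hi i' hi' he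
    simp only [Finset.coe_range, mem_Iio] at hi hi'
    have := m3 (i + 1) (i' + 1) (by omega) (by omega) he
    omega
  have hX' : X'.card = a' + 1 := by
    rw [Finset.card_image_of_injOn, Finset.card_range]
    intro i hi i' hi' he
    simp only [Finset.coe_range, mem_Iio] at hi hi'
    exact m3' i i' (by omega) (by omega) he
  have hdis : ∀ i', i' ≤ a' → (fun G => r G F)^[i'] p ∉ X := by
    intro i'
    induction i' with
    | zero =>
      intro _ hmem
      obtain ⟨i, hi, he⟩ := Finset.mem_image.1 hmem
      rw [Finset.mem_range] at hi
      exact m2 (i + 1) (by omega) (by omega) he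
    | succ i' ih =>
      intro hle hmem
      obtain ⟨i, hi, he⟩ := Finset.mem_image.1 hmem
      rw [Finset.mem_range] at hi
      have h1 := hback i'
      rw [← he, ← Function.iterate_succ_apply' (r F)] at h1
      by_cases hc : i + 1 < a - 1
      · apply ih (by omega)
        rw [← h1]
        exact Finset.mem_image.2 ⟨i + 1, Finset.mem_range.2 hc, rfl⟩
      · have : i.succ.succ = a := by omega
        have h1' : (fun G => r G F)^[i'] p = q := by rw [← h1, ← e, ← this]
        exact m1' i' (by omega) h1'
  have hclosed : ∀ G, G ∈ X ∪ X' → r F G ∈ X ∪ X' := by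
    intro G hG
    rw [Finset.mem_union] at hG ⊢
    rcases hG with hG | hG
    · obtain ⟨i, hi, rfl⟩ := Finset.mem_image.1 hG
      rw [Finset.mem_range] at hi
      rw [← Function.iterate_succ_apply' (r F)]
      by_cases hc : i + 1 < a - 1
      · left; exact Finset.mem_image.2 ⟨i + 1, Finset.mem_range.2 hc, rfl⟩
      · right
        refine Finset.mem_image.2 ⟨a', Finset.mem_range.2 (by omega), ?_⟩
        rw [e', ← e]; congr 1; omega
    · obtain ⟨i, hi, rfl⟩ := Finset.mem_image.1 hG
      rw [Finset.mem_range] at hi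
      cases i with
      | zero =>
        left
        exact Finset.mem_image.2 ⟨0, Finset.mem_range.2 (by omega), rfl⟩
      | succ i =>
        right
        rw [hback]
        exact Finset.mem_image.2 ⟨i, Finset.mem_range.2 (by omega), rfl⟩
  have hall : ∀ G, Adj P F G → G ∈ X ∪ X' := by
    intro G hG
    obtain ⟨i, rfl⟩ := w.conn hp hG
    clear hG
    induction i with
    | zero =>
      rw [Finset.mem_union]; right
      exact Finset.mem_image.2 ⟨0, Finset.mem_range.2 (by omega), rfl⟩
    | succ i ih =>
      rw [Function.iterate_succ_apply']; exact hclosed _ ih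
  have hset : {G | Adj P F G} = ((X ∪ X' : Finset (Set E3)) : Set (Set E3)) := by
    ext G
    constructor
    · exact fun h => hall G h
    · intro h
      rw [Finset.mem_coe, Finset.mem_union] at h
      rcases h with h | h
      · obtain ⟨i, hi, rfl⟩ := Finset.mem_image.1 h
        exact w.adj_iter hp _
      · obtain ⟨i, hi, rfl⟩ := Finset.mem_image.1 h
        exact hadj' _
  constructor
  · rw [hset, Set.ncard_coe_finset, Finset.card_union_of_disjoint, hX, hX']
    · omega
    · rw [Finset.disjoint_left]
      intro G hG hG'
      obtain ⟨i, hi, rfl⟩ := Finset.mem_image.1 hG'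
      exact hdis i (by have := Finset.mem_range.1 hi; omega) hG
  · intro G hG
    have h := hall G hG
    rw [Finset.mem_union] at h
    rcases h with h | h
    · obtain ⟨i, hi, rfl⟩ := Finset.mem_image.1 h
      right; right; left
      exact ⟨i, by have := Finset.mem_range.1 hi; omega, rfl⟩
    · obtain ⟨i, hi, rfl⟩ := Finset.mem_image.1 h
      have := Finset.mem_range.1 hi
      rcases Nat.eq_zero_or_pos i with h0 | h0
      · left; simp [h0]
      · by_cases hc : i = a'
        · right; left; rw [hc, e']
        · right; right; right
          exact ⟨i - 1, by omega, by congr 1; omega⟩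

end Rot

namespace Rot
variable {P : Set E3} {r : Set E3 → Set E3 → Set E3} {vt : Set E3 → Set E3 → E3}

lemma vr_mem (w : Rot P r vt) {F G : Set E3} (h : Adj P F G) : vt F G ∈ r F G := by
  have := w.cyc h
  rw [← this.2.2]; exact (w.vmem this.1).2

lemma belt_r (w : Rot P r vt) {k : ℕ} {B : Fin k → Set E3} (hB : BeltC P B) (j : Fin k) :
    r (B (nxt j)) (B j) ∉ range B := by
  rintro ⟨m, hm⟩
  have hA := (hB.adj j).symm
  have h1 := w.vmem hA
  have h2 := w.vr_mem hA
  have h3 := w.cyc hA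
  have h4 := w.inv1 hA
  rw [← hm] at h2 h3 h4
  refine hB.tri (nxt j) j m (nxt_ne (by have := hB.hk; omega) j) ?_ ?_ _ h1.1 h1.2 h2
  · intro he; exact h3.1.2.2.1 (by rw [he])
  · intro he; exact h4.1.2.2.1 (by rw [he])

/-- the arc data of a belt facet -/
lemma belt_arc (w : Rot P r vt) {k : ℕ} {B : Fin k → Set E3} (hB : BeltC P B) (j : Fin k) :
    ∃ a : ℕ, 2 ≤ a ∧ (r (B j))^[a] (B (prv j)) = B (nxt j) ∧
      (∀ i, i < a → (r (B j))^[i] (B (prv j)) ≠ B (nxt j)) ∧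
      (∀ i, 0 < i → i ≤ a → (r (B j))^[i] (B (prv j)) ≠ B (prv j)) ∧
      (∀ i i', i ≤ a → i' ≤ a →
        (r (B j))^[i] (B (prv j)) = (r (B j))^[i'] (B (prv j)) → i = i') := by
  have hk := hB.hk
  have h1 : Adj P (B j) (B (prv j)) := by
    have := hB.adj (prv j)
    rw [nxt_prv] at this
    exact this.symm
  apply w.arc h1 (hB.adj j)
  · intro he
    have e := hB.inj he
    have e' := congrArg Fin.val e
    have := j.2
    rw [nxt_val, prv_val] at e'
    split_ifs at e' <;> omega
  · intro he
    have := w.belt_r hB (prv j)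
    rw [nxt_prv, he] at this
    exact this ⟨_, rfl⟩

lemma side_of_arc (w : Rot P r vt) {k : ℕ} {B : Fin k → Set E3} (hB : BeltC P B) (a : Fin k → ℕ)
    (ha : ∀ j, 2 ≤ a j ∧ (r (B j))^[a j] (B (prv j)) = B (nxt j) ∧
      (∀ i, i < a j → (r (B j))^[i] (B (prv j)) ≠ B (nxt j)) ∧
      (∀ i, 0 < i → i ≤ a j → (r (B j))^[i] (B (prv j)) ≠ B (prv j)) ∧
      (∀ i i', i ≤ a j → i' ≤ a j →
        (r (B j))^[i] (B (prv j)) = (r (B j))^[i'] (B (prv j)) → i = i')) :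
    Side P r B (fun j => a j - 1) (fun j i => (r (B j))^[i + 1] (B (prv j))) where
  pos := fun j => by have := (ha j).1; omega
  adj := by
    intro j i _
    have := hB.adj (prv j)
    rw [nxt_prv] at this
    exact w.adj_iter this.symm _
  nb := by
    rintro j i hi ⟨m, hm⟩
    obtain ⟨a1, a2, a3, a4, a5⟩ := ha j
    have hA := hB.adj (prv j)
    rw [nxt_prv] at hA
    have hA' := w.adj_iter hA.symm (i + 1)
    rw [← hm] at hA'
    rcases hB.nadj _ _ hA' with h | h
    · exact a3 (i + 1) (by omega) (by rw [← hm, h])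
    · exact a4 (i + 1) (by omega) (by omega) (by rw [← hm, h, prv_nxt])
  inj := by
    intro j i i' hi hi' he
    have := (ha j).2.2.2.2 _ _ (by omega) (by omega) he
    omega
  first := fun j => rfl
  step := by
    intro j i _
    exact (Function.iterate_succ_apply' (r (B j)) (i + 1) (B (prv j))).symm
  last := by
    intro j i hi
    rw [← Function.iterate_succ_apply' (r (B j))]
    have := (ha j).2.1
    have h1 := (ha j).1
    rw [show (i + 1).succ = a j by omega]
    exact this

/-- both sides of a belt -/
lemma sides (w : Rot P r vt) {k : ℕ} {B : Fin k → Set E3} (hB : BeltC P B) :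
    ∃ (α α' : Fin k → ℕ) (x x' : Fin k → ℕ → Set E3), Side P r B α x ∧
      Side P (fun F G => r G F) B α' x' ∧ (∀ j, facetEdges P (B j) = α j + α' j + 2) ∧
      ∀ j G, Adj P (B j) G → G ∉ range B → (∃ i, i < α j ∧ G = x j i) ∨
        (∃ i, i < α' j ∧ G = x' j i) := by
  choose a ha using w.belt_arc hB
  choose a' ha' using w.mirror.belt_arc hB
  have key : ∀ j, {G | Adj P (B j) G}.ncard = a j + a' j ∧
    ∀ G, Adj P (B j) G → G = B (prv j) ∨ G = B (nxt j) ∨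
      (∃ i, i + 1 < a j ∧ G = (r (B j))^[i + 1] (B (prv j))) ∨
      (∃ i, i + 1 < a' j ∧ G = (fun G => r G (B j))^[i + 1] (B (prv j))) := by
    intro j
    obtain ⟨a1, a2, a3, a4, a5⟩ := ha j
    obtain ⟨b1, b2, b3, b4, b5⟩ := ha' j
    have hA := hB.adj (prv j)
    rw [nxt_prv] at hA
    exact w.arc_count hA.symm (fun h => a3 0 (by omega) h) a1 b1 a2 b2 a3 b3 a4 b4 a5 b5
  refine ⟨_, _, _, _, w.side_of_arc hB a ha, w.mirror.side_of_arc hB a' ha', ?_, ?_⟩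
  · intro j
    rw [w.facetEdges_eq (hB.adj j).1, (key j).1]
    have := (ha j).1
    have := (ha' j).1
    omega
  · intro j G hG hnb
    rcases (key j).2 G hG with rfl | rfl | ⟨i, hi, rfl⟩ | ⟨i, hi, rfl⟩
    · exact absurd ⟨_, rfl⟩ hnb
    · exact absurd ⟨_, rfl⟩ hnb
    · left; exact ⟨i, by omega, rfl⟩
    · right; exact ⟨i, by omega, rfl⟩

lemma vt_inj (w : Rot P r vt) {F G F' G' : Set E3} (h : Adj P F G) (h' : Adj P F' G')
    (he : vt F G = vt F' G') : (F' = F ∧ G' = G) ∨ (F' = G ∧ G' = r F G) ∨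
      (F' = r F G ∧ G' = F) := by
  have m := w.vmem h'
  rw [← he] at m
  have c1 := w.cyc h
  have c2 := w.inv1 h
  have h1 := w.only h F' h'.1 m.1
  have h2 := w.only h G' h'.2.1 m.2
  have hne := h'.2.2.1
  rcases h1 with h1 | h1 | h1 <;> rcases h2 with h2 | h2 | h2
  · exact absurd (h1.trans h2.symm) hne
  · exact Or.inl ⟨h1, h2⟩
  · exfalso
    rw [h1, h2] at he
    exact w.vne c2.1 (c2.2.2.trans he)
  · exfalso
    rw [h1, h2] at he
    exact w.vne h he
  · exact absurd (h1.trans h2.symm) hne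
  · exact Or.inr (Or.inl ⟨h1, h2⟩)
  · exact Or.inr (Or.inr ⟨h1, h2⟩)
  · exfalso
    rw [h1, h2] at he
    exact w.vne c1.1 (c1.2.2.trans he)
  · exact absurd (h1.trans h2.symm) hne

end Rot

lemma exists_walk_equiv {k : ℕ} (α : Fin k → ℕ) (hpos : ∀ j, 0 < α j) :
    ∃ e : ((j : Fin k) × Fin (α j)) ≃ Fin (∑ j, α j),
      (∀ j i (h : i + 1 < α j), nxt (e ⟨j, ⟨i, by omega⟩⟩) = e ⟨j, ⟨i + 1, h⟩⟩) ∧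
      (∀ j i (h : i + 1 = α j), nxt (e ⟨j, ⟨i, by omega⟩⟩) = e ⟨nxt j, ⟨0, hpos _⟩⟩) := by
  refine ⟨finSigmaFinEquiv, ?_, ?_⟩
  · intro j i h
    apply Fin.ext
    have h1 := finSigmaFinEquiv_apply (n := α) ⟨j, ⟨i + 1, h⟩⟩
    have h2 := finSigmaFinEquiv_apply (n := α) ⟨j, ⟨i, by omega⟩⟩
    have h3 := (finSigmaFinEquiv (n := α) ⟨j, ⟨i + 1, h⟩⟩).2
    rw [nxt_val]
    simp only at h1 h2
    split_ifs <;> omega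
  · intro j i h
    apply Fin.ext
    have h2 := finSigmaFinEquiv_apply (n := α) ⟨j, ⟨i, by omega⟩⟩
    have h1 := finSigmaFinEquiv_apply (n := α) ⟨nxt j, ⟨0, hpos _⟩⟩
    have h3 := (finSigmaFinEquiv (n := α) ⟨nxt j, ⟨0, hpos _⟩⟩).2
    simp only at h1 h2
    have hg : ∀ (m : ℕ) (hm : m ≤ k), ∑ i : Fin m, α (Fin.castLE hm i) =
        ∑ i ∈ Finset.range m, (if h : i < k then α ⟨i, h⟩ else 0) := by
      intro m hm
      rw [Finset.sum_range]
      apply Finset.sum_congr rfl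
      intro i _
      rw [dif_pos (by omega)]; rfl
    rw [hg] at h1 h2
    have hn : ∑ j, α j = ∑ i ∈ Finset.range k, (if h : i < k then α ⟨i, h⟩ else 0) := by
      rw [← hg k le_rfl]; rfl
    have hs : ∑ i ∈ Finset.range (j.1 + 1), (if h : i < k then α ⟨i, h⟩ else 0) =
      ∑ i ∈ Finset.range j.1, (if h : i < k then α ⟨i, h⟩ else 0) + α j := by
      rw [Finset.sum_range_succ, dif_pos j.2]
    have hj := j.2
    rw [nxt_val]
    rw [nxt_val] at h1
    by_cases hc : j.1 + 1 = k
    · rw [if_pos hc] at h1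
      simp only [Finset.range_zero, Finset.sum_empty] at h1
      rw [hc] at hs
      rw [if_pos (by omega), h1]
    · rw [if_neg hc] at h1
      rw [if_neg (by omega)]
      omega

/-- The walk along one side of a belt. -/
structure Walk (P : Set E3) {k : ℕ} (B : Fin k → Set E3) (α : Fin k → ℕ)
    (x : Fin k → ℕ → Set E3) {n : ℕ} (φ : Fin n → Fin k) (X : Fin n → Set E3) (v : Fin n → E3) :
    Prop where
  hn : n = ∑ j, α j
  hn3 : 3 ≤ n
  pos : ∀ j, 0 < α j
  adj : ∀ t, Adj P (B (φ t)) (X t)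
  nb : ∀ t, X t ∉ range B
  pinj : ∀ t t', φ t = φ t' → X t = X t' → t = t'
  vinj : Function.Injective v
  vert : ∀ t, IsVertexOf (v t) P
  seg : ∀ t, segment ℝ (v t) (v (nxt t)) = B (φ t) ∩ X t
  step : ∀ t, (φ (nxt t) = φ t ∧ Adj P (X t) (X (nxt t))) ∨
    (φ (nxt t) = nxt (φ t) ∧ X (nxt t) = X t)
  surj : Function.Surjective φ
  cnt : (Finset.univ.filter (fun t => φ (nxt t) ≠ φ t)).card = k
  fib : ∀ j, (Finset.univ.filter (fun t => φ t = j)).card = α j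
  cover : ∀ j i, i < α j → ∃ t, φ t = j ∧ X t = x j i
  cover' : ∀ t, ∃ j i, i < α j ∧ X t = x j i

lemma Rot.exists_walk {P : Set E3} {r : Set E3 → Set E3 → Set E3} {vt : Set E3 → Set E3 → E3}
    (w : Rot P r vt) {k : ℕ} {B : Fin k → Set E3} (hB : BeltC P B) {α : Fin k → ℕ}
    {x : Fin k → ℕ → Set E3} (s : Side P r B α x) :
    ∃ (n : ℕ) (φ : Fin n → Fin k) (X : Fin n → Set E3) (v : Fin n → E3),
      Walk P B α x φ X v := by
  have hk := hB.hk
  obtain ⟨e, he1, he2⟩ := exists_walk_equiv α s.pos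
  let φ : Fin (∑ j, α j) → Fin k := fun t => (e.symm t).1
  let X : Fin (∑ j, α j) → Set E3 := fun t => x (e.symm t).1 (e.symm t).2.1
  let v : Fin (∑ j, α j) → E3 := fun t => vt (X t) (B (φ t))
  have hφ : ∀ j i, φ (e ⟨j, i⟩) = j := by intro j i; simp [φ]
  have hX : ∀ j i, X (e ⟨j, i⟩) = x j i.1 := by 
    intro j i
    show x (e.symm (e ⟨j, i⟩)).1 (e.symm (e ⟨j, i⟩)).2.1 = _
    rw [e.symm_apply_apply]
  have hind : ∀ (p : Fin (∑ j, α j) → Prop), (∀ j i (h : i < α j), p (e ⟨j, ⟨i, h⟩⟩)) →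
      ∀ t, p t := by
    intro p hp t
    rw [← e.apply_symm_apply t]
    exact hp _ _ _
  have hadj : ∀ t, Adj P (B (φ t)) (X t) := fun t => s.adj _ _ (e.symm t).2.2
  have hnb : ∀ t, X t ∉ range B := fun t => s.nb _ _ (e.symm t).2.2
  have hpinj : ∀ t t', φ t = φ t' → X t = X t' → t = t' := by
    refine hind _ (fun j i h => ?_)
    refine hind _ (fun j' i' h' => ?_)
    rw [hφ, hφ, hX, hX]
    rintro rfl he
    have := s.inj j i i' h h' he
    subst this; rfl
  have hlink : ∀ j i, i + 1 = α j → x (nxt j) 0 = x j i ∧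
      vt (x j i) (B (nxt j)) = vt (B j) (x j i) := by
    intro j i h
    have h1 := s.last j i h
    have hA := s.adj j i (by omega)
    have c := w.cyc hA
    have c2 := w.inv1 hA
    rw [h1] at c c2
    refine ⟨?_, c.2.2⟩
    rw [s.first, prv_nxt, c2.2.1]
  have hv : ∀ t, v (nxt t) = vt (B (φ t)) (X t) := by
    refine hind _ (fun j i h => ?_)
    by_cases hc : i + 1 < α j
    · simp only [v]
      rw [he1 j i hc, hφ, hX, hφ, hX]
      have := (w.inv1 (s.adj j i h)).2.2
      rw [s.step j i hc] at this
      exact this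
    · have hc' : i + 1 = α j := by omega
      simp only [v]
      rw [he2 j i hc', hφ, hX, hφ, hX]
      simp only
      rw [(hlink j i hc').1, (hlink j i hc').2]
  have hstep : ∀ t, (φ (nxt t) = φ t ∧ Adj P (X t) (X (nxt t))) ∨
    (φ (nxt t) = nxt (φ t) ∧ X (nxt t) = X t) := by
    refine hind _ (fun j i h => ?_)
    by_cases hc : i + 1 < α j
    · left
      rw [he1 j i hc, hφ, hX, hφ, hX]
      refine ⟨rfl, ?_⟩
      have := (w.cyc (s.adj j i h)).1
      rw [s.step j i hc] at this
      exact this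
    · right
      have hc' : i + 1 = α j := by omega
      rw [he2 j i hc', hφ, hX, hφ, hX]
      exact ⟨rfl, (hlink j i hc').1⟩
  refine ⟨_, φ, X, v, rfl, ?_, s.pos, hadj, hnb, hpinj, ?_, ?_, ?_, hstep, ?_, ?_, ?_, ?_, ?_⟩
  · calc 3 ≤ k := hk
      _ = ∑ j : Fin k, 1 := by simp
      _ ≤ _ := Finset.sum_le_sum (fun j _ => s.pos j)
  · intro t t' he
    rcases w.vt_inj (hadj t).symm (hadj t').symm he with h | h | h
    · exact hpinj t t' (hB.inj h.2.symm) h.1.symm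
    · exact absurd ⟨_, h.1.symm⟩ (hnb t')
    · exact absurd ⟨_, h.2⟩ (hnb t)
  · exact fun t => w.vert (hadj t).symm
  · intro t
    rw [hv, w.seg (hadj t)]
  · intro j
    exact ⟨e ⟨j, ⟨0, s.pos j⟩⟩, hφ _ _⟩
  · have : (Finset.univ : Finset (Fin k)).card = k := by simp
    conv_rhs => rw [← this]
    symm
    apply Finset.card_bij (fun j _ => e ⟨j, ⟨α j - 1, by have := s.pos j; omega⟩⟩)
    · intro j _
      rw [Finset.mem_filter]
      refine ⟨Finset.mem_univ _, ?_⟩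
      rw [he2 j (α j - 1) (by have := s.pos j; omega), hφ, hφ]
      exact nxt_ne (by omega) j
    · intro j _ j' _ h
      have := e.injective h
      exact congrArg Sigma.fst this
    · have : ∀ t, φ (nxt t) ≠ φ t → ∃ j, ∃ (_ : j ∈ Finset.univ),
        e ⟨j, ⟨α j - 1, by have := s.pos j; omega⟩⟩ = t := by
        refine hind _ (fun j i h => ?_)
        intro hne
        refine ⟨j, Finset.mem_univ _, ?_⟩
        by_cases hc : i + 1 < α j
        · rw [he1 j i hc, hφ, hφ] at hne
          exact absurd rfl hne
        · have : α j - 1 = i := by omega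
          subst this; rfl
      intro t ht
      exact this t (Finset.mem_filter.1 ht).2
  · intro j
    have : (Finset.univ : Finset (Fin (α j))).card = α j := by simp
    conv_rhs => rw [← this]
    symm
    apply Finset.card_bij (fun i _ => e ⟨j, i⟩)
    · intro i _
      rw [Finset.mem_filter]
      exact ⟨Finset.mem_univ _, hφ _ _⟩
    · intro i _ i' _ h
      have := e.injective h
      simpa using this
    · have : ∀ t, φ t = j → ∃ i, ∃ (_ : i ∈ Finset.univ), e ⟨j, i⟩ = t := by
        refine hind _ (fun j' i h => ?_)
        rw [hφ]
        rintro rfl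
        exact ⟨_, Finset.mem_univ _, rfl⟩
      intro t ht
      exact this t (Finset.mem_filter.1 ht).2
  · intro j i h
    exact ⟨e ⟨j, ⟨i, h⟩⟩, hφ _ _, hX _ _⟩
  · intro t
    exact ⟨_, _, (e.symm t).2.2, rfl⟩

namespace Walk
variable {P : Set E3} {k : ℕ} {B : Fin k → Set E3} {α : Fin k → ℕ}
    {x : Fin k → ℕ → Set E3} {n : ℕ} {φ : Fin n → Fin k} {X : Fin n → Set E3} {v : Fin n → E3}

lemma xiff (h : Walk P B α x φ X v) (hk : 2 ≤ k) (t : Fin n) :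
    X (nxt t) ≠ X t ↔ φ (nxt t) = φ t := by
  rcases h.step t with ⟨h1, h2⟩ | ⟨h1, h2⟩
  · exact ⟨fun _ => h1, fun _ => h2.2.2.1.symm⟩
  · rw [h2, h1]
    exact ⟨fun h => absurd rfl h, fun h' => absurd h' (nxt_ne hk _)⟩

open Classical in
lemma xcnt (h : Walk P B α x φ X v) (hk : 2 ≤ k) :
    (Finset.univ.filter (fun t => X (nxt t) ≠ X t)).card = ∑ j, (α j - 1) := by
  have h1 : (Finset.univ.filter (fun t => X (nxt t) ≠ X t)) =
    (Finset.univ.filter (fun t => ¬ (φ (nxt t) ≠ φ t))) := by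
    apply Finset.filter_congr
    intro t _
    rw [h.xiff hk, not_ne_iff]
  have h2 := Finset.card_filter_add_card_filter_not (s := (Finset.univ : Finset (Fin n)))
    (fun t => φ (nxt t) ≠ φ t)
  rw [h.cnt, Finset.card_univ, Fintype.card_fin] at h2
  have h3 : ∑ j, (α j - 1) + ∑ j : Fin k, 1 = ∑ j, α j := by
    rw [← Finset.sum_add_distrib]
    apply Finset.sum_congr rfl
    intro j _
    have := h.pos j
    omega
  rw [← h.hn] at h3
  simp only [Finset.sum_const, Finset.card_univ, Fintype.card_fin, smul_eq_mul, mul_one] at h3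
  have h4 := congrArg Finset.card h1
  have h5 : (Finset.univ.filter (fun t => ¬ (φ (nxt t) ≠ φ t))).card = ∑ j, (α j - 1) := by
    omega
  rw [h4]
  convert h5

end Walk

open Classical in
lemma compress {β : Type*} {n : ℕ} (hn : 0 < n) (X : Fin n → β) {l : ℕ}
    (hl : (Finset.univ.filter (fun t => X (nxt t) ≠ X t)).card = l) :
    (l = 0 ∧ ∀ t t', X t = X t') ∨ (2 ≤ l ∧ ∃ (L : Fin l → β) (ψ : Fin n → Fin l),
      (∀ t, X t = L (ψ t)) ∧ (∀ t, X (nxt t) = X t → ψ (nxt t) = ψ t) ∧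
      (∀ t, X (nxt t) ≠ X t → ψ (nxt t) = nxt (ψ t)) ∧
      (Finset.univ.filter (fun t => ψ (nxt t) ≠ ψ t)).card = l ∧
      (∀ i, ∃ t, ψ t = i ∧ X (nxt t) ≠ X t)) := by
  let Y : ℕ → β := fun m => X ⟨m % n, Nat.mod_lt _ hn⟩
  have hY : ∀ t : Fin n, Y t.1 = X t := by
    intro t
    have : (⟨t.1 % n, Nat.mod_lt _ hn⟩ : Fin n) = t := Fin.ext (Nat.mod_eq_of_lt t.2)
    simp only [Y, this]
  have hY1 : ∀ t : Fin n, Y (t.1 + 1) = X (nxt t) := fun t => rfl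
  have hYn : Y n = Y 0 := by
    have : (⟨n % n, Nat.mod_lt _ hn⟩ : Fin n) = ⟨0 % n, Nat.mod_lt _ hn⟩ := by
      apply Fin.ext; simp
    simp only [Y, this]
  let c : ℕ → ℕ := fun m => ∑ i ∈ Finset.range m, if Y (i + 1) ≠ Y i then 1 else 0
  have c0 : c 0 = 0 := by simp [c]
  have cs : ∀ m, c (m + 1) = c m + if Y (m + 1) ≠ Y m then 1 else 0 := by
    intro m; simp only [c]; rw [Finset.sum_range_succ]
  have cn : c n = l := by
    simp only [c]
    rw [Finset.sum_range, ← hl, Finset.card_filter]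
    apply Finset.sum_congr rfl
    intro t _
    rw [hY1, hY]
  have cmono : Monotone c := monotone_nat_of_le_succ (fun m => by rw [cs]; omega)
  have ceq : ∀ a d, c (a + d) = c a → Y (a + d) = Y a := by
    intro a d
    induction d with
    | zero => intro _; rfl
    | succ d ih =>
      intro h
      have h1 : c (a + d) = c a := le_antisymm (h ▸ cmono (by omega)) (cmono (by omega))
      have h2 := cs (a + d)
      rw [← ih h1]
      by_contra hne
      rw [if_pos (show Y (a + d + 1) ≠ Y (a + d) from hne)] at h2
      have h3 : a + (d + 1) = a + d + 1 := rfl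
      rw [h3] at h
      omega
  have ceq' : ∀ a b, a ≤ b → c a = c b → Y a = Y b := by
    intro a b hab h
    obtain ⟨d, rfl⟩ := Nat.exists_eq_add_of_le hab
    exact (ceq a d h.symm).symm
  have hle : ∀ t : Fin n, c t.1 ≤ l := fun t => cn ▸ cmono t.2.le
  rcases Nat.eq_zero_or_pos l with h0 | hpos
  · left
    refine ⟨h0, ?_⟩
    have : ∀ t, X t = Y 0 := by
      intro t
      rw [← hY]
      have := hle t
      exact (ceq' 0 t.1 (Nat.zero_le _) (by omega)).symm
    intro t t'; rw [this, this]
  right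
  let ψ : Fin n → Fin l := fun t => ⟨c t.1 % l, Nat.mod_lt _ hpos⟩
  have hex : ∀ i : Fin l, ∃ t : Fin n, ψ t = i ∧ X (nxt t) ≠ X t := by
    intro i
    have hE : ∃ m, i.1 < c m := ⟨n, by rw [cn]; exact i.2⟩
    have hs := Nat.find_spec hE
    have hm : Nat.find hE ≤ n := Nat.find_min' hE (by rw [cn]; exact i.2)
    obtain ⟨m, hm'⟩ : ∃ m, Nat.find hE = m + 1 := by
      apply Nat.exists_eq_succ_of_ne_zero
      intro h; rw [h, c0] at hs; omega
    have hlt : ¬ i.1 < c m := Nat.find_min hE (by omega)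
    rw [hm'] at hs
    have h2 := cs m
    by_cases hch : Y (m + 1) ≠ Y m
    · rw [if_pos hch] at h2
      refine ⟨⟨m, by omega⟩, ?_, ?_⟩
      · apply Fin.ext
        simp only [ψ]
        rw [show c m = i.1 by omega]
        exact Nat.mod_eq_of_lt i.2
      · rw [← hY1, ← hY]; exact hch
    · rw [if_neg hch] at h2; omega
  have hval : ∀ t : Fin n, (ψ (nxt t)).1 = (c (t.1 + 1)) % l := by
    intro t
    simp only [ψ]
    rw [nxt_val]
    split_ifs with h
    · rw [h, cn, c0]; simp
    · rfl
  have hs0 : ∀ t, X (nxt t) = X t → ψ (nxt t) = ψ t := by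
    intro t h
    apply Fin.ext
    rw [hval, cs, hY1, hY, if_neg (by simpa using h)]
    rfl
  have hs1 : ∀ t, X (nxt t) ≠ X t → ψ (nxt t) = nxt (ψ t) := by
    intro t h
    apply Fin.ext
    rw [hval, cs, hY1, hY, if_pos h]
    simp [nxt, ψ]
  have hwd : ∀ t t' : Fin n, c t.1 ≤ c t'.1 → ψ t = ψ t' → X t = X t' := by
    intro t t' hle' h
    have h' : c t.1 % l = c t'.1 % l := congrArg Fin.val h
    rw [← hY, ← hY]
    by_cases he : c t.1 = c t'.1
    · rcases le_total t.1 t'.1 with h1 | h1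
      · exact ceq' _ _ h1 he
      · exact (ceq' _ _ h1 he.symm).symm
    · have h1 := hle t'
      have h2 : c t.1 % l = c t.1 := Nat.mod_eq_of_lt (by omega)
      rcases Nat.lt_or_ge (c t'.1) l with h3 | h3
      · rw [h2, Nat.mod_eq_of_lt h3] at h'; exact absurd h' he
      · have h4 : c t'.1 = l := by omega
        rw [h2, h4, Nat.mod_self] at h'
        rw [← ceq' 0 t.1 (Nat.zero_le _) (by omega), ceq' t'.1 n t'.2.le (by omega), hYn]
  have hwd' : ∀ t t' : Fin n, ψ t = ψ t' → X t = X t' := by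
    intro t t' h
    rcases le_total (c t.1) (c t'.1) with h1 | h1
    · exact hwd t t' h1 h
    · exact (hwd t' t h1 h.symm).symm
  have h2 : 2 ≤ l := by
    by_contra hlt
    have h1 : l = 1 := by omega
    obtain ⟨t, -, ht⟩ := hex ⟨0, hpos⟩
    refine ht (hwd' _ _ ?_)
    subst h1
    exact Subsingleton.elim _ _
  choose τ hτ hτ' using hex
  refine ⟨h2, fun i => X (τ i), ψ, fun t => hwd' _ _ (by rw [hτ]), hs0, hs1, ?_,
    fun i => ⟨τ i, hτ i, hτ' i⟩⟩
  conv_rhs => rw [← hl]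
  congr 1
  ext t
  simp only [Finset.mem_filter, Finset.mem_univ, true_and]
  constructor
  · intro h h'; exact h (hs0 t h')
  · intro h h'; exact nxt_ne h2 _ ((hs1 t h).symm.trans h')

lemma cyc_ind {n : ℕ} (p : Fin n → Prop) (hs : ∀ t, p t → p (nxt t)) {t0 : Fin n} (h0 : p t0) :
    ∀ t, p t := by
  have h1 : ∀ d, p ⟨(t0.1 + d) % n, Nat.mod_lt _ t0.pos⟩ := by
    intro d
    induction d with
    | zero =>
      have : (⟨(t0.1 + 0) % n, Nat.mod_lt _ t0.pos⟩ : Fin n) = t0 :=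
        Fin.ext (Nat.mod_eq_of_lt t0.2)
      rw [this]; exact h0
    | succ d ih =>
      have := hs _ ih
      convert this using 1
      apply Fin.ext
      simp [nxt, Nat.add_assoc]
  intro t
  have h2 := h1 (t.1 + (n - t0.1))
  have : (⟨(t0.1 + (t.1 + (n - t0.1))) % n, Nat.mod_lt _ t0.pos⟩ : Fin n) = t := by
    apply Fin.ext
    have := t0.2
    simp only
    rw [show t0.1 + (t.1 + (n - t0.1)) = t.1 + n by omega, Nat.add_mod_right]
    exact Nat.mod_eq_of_lt t.2
  rwa [this] at h2

lemma closed_union {P : Set E3} (hfin : (facets P).Finite) (W : Set (Set E3)) (hW : W ⊆ facets P) :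
    IsClosed (⋃₀ W) := by
  rw [sUnion_eq_biUnion]
  exact (hfin.subset hW).isClosed_biUnion (fun F hF => (hW hF).1.2.1)

/-- Facets not in the belt, on the side `Q`. -/
def sideF (P : Set E3) {k : ℕ} (B : Fin k → Set E3) (Q : Set E3) : Set (Set E3) :=
  {F | F ∈ facets P ∧ F ∉ range B ∧ ri P F ⊆ Q}

section
variable {P : Set E3} {r : Set E3 → Set E3 → Set E3} {vt : Set E3 → Set E3 → E3}
  {k : ℕ} {B : Fin k → Set E3}

lemma ri_sub_S (t : Topo P) (hBf : ∀ j, B j ∈ facets P) {F : Set E3} (hF : F ∈ facets P)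
    (hn : F ∉ range B) : ri P F ⊆ frontier P \ ⋃ i, B i := by
  intro x hx
  refine ⟨t.ri_sub_fr hF hx, ?_⟩
  rw [mem_iUnion]
  rintro ⟨j, hj⟩
  exact hn ⟨j, hx.2 _ (hBf j) hj⟩

lemma sideF_eq (t : Topo P) (hBf : ∀ j, B j ∈ facets P) {Q : Set E3}
    (hQ : IsCompOf Q (frontier P \ ⋃ i, B i)) :
    {F | IsFacetOf F P ∧ intrinsicInterior ℝ F ⊆ Q} = sideF P B Q := by
  ext F
  constructor
  · rintro ⟨hF, hi⟩
    have hn : F ∉ range B := by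
      rintro ⟨j, rfl⟩
      obtain ⟨y, hy⟩ := t.intr_ne _ hF
      exact (Topo.comp_sub hQ (hi hy)).2 (mem_iUnion.2 ⟨j, intrinsicInterior_subset hy⟩)
    exact ⟨hF, hn, (t.intr_iff hF hQ (ri_sub_S t hBf hF hn)).1 hi⟩
  · rintro ⟨hF, hn, hr⟩
    exact ⟨hF, (t.intr_sub F hF).trans hr⟩

lemma sideF_step (t : Topo P) (hBf : ∀ j, B j ∈ facets P) {Q : Set E3}
    (hQ : IsCompOf Q (frontier P \ ⋃ i, B i)) {F G : Set E3} (hF : F ∈ sideF P B Q)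
    (hG : G ∈ facets P) {y : E3} (hyF : y ∈ F) (hyG : y ∈ G) (hy : y ∉ ⋃ i, B i) :
    G ∈ sideF P B Q := by
  have hn : G ∉ range B := by
    rintro ⟨j, rfl⟩; exact hy (mem_iUnion.2 ⟨j, hyG⟩)
  have hyS : y ∈ frontier P \ ⋃ i, B i := ⟨by rw [t.fr]; exact ⟨F, hF.1, hyF⟩, hy⟩
  exact ⟨hG, hn, t.step hF.1 hG hQ (ri_sub_S t hBf hG hn) hyF hyG hyS hF.2.2⟩

lemma exists_side_adj (t : Topo P) (w : Rot P r vt) (hB : BeltC P B) {Q : Set E3}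
    (hQ : IsCompOf Q (frontier P \ ⋃ i, B i)) :
    ∃ j G, G ∈ sideF P B Q ∧ Adj P (B j) G := by
  have hBf : ∀ j, B j ∈ facets P := fun j => (hB.adj j).1
  by_contra hcon
  push Not at hcon
  have j0 : Fin k := ⟨0, by have := hB.hk; omega⟩
  have hc := isPreconnected_closed_iff.1 t.conn (⋃₀ sideF P B Q)
    (⋃₀ (facets P \ sideF P B Q)) (closed_union w.fin _ (fun F h => h.1))
    (closed_union w.fin _ (fun F h => h.1)) (by
      intro y hy
      rw [t.fr] at hy
      obtain ⟨F, hF, hyF⟩ := hy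
      by_cases h : F ∈ sideF P B Q
      · exact Or.inl ⟨F, h, hyF⟩
      · exact Or.inr ⟨F, ⟨hF, h⟩, hyF⟩) (by
      obtain ⟨y, hy, rfl⟩ := id hQ
      have hyQ : y ∈ connectedComponentIn (frontier P \ ⋃ i, B i) y := mem_connectedComponentIn hy
      have hy1 := hy.1
      rw [t.fr] at hy1
      obtain ⟨F, hF, hyF⟩ := hy1
      have hn : F ∉ range B := by
        rintro ⟨j, rfl⟩; exact hy.2 (mem_iUnion.2 ⟨j, hyF⟩)
      exact ⟨y, hy.1, F, ⟨hF, hn, t.ri_sub hF hQ (ri_sub_S t hBf hF hn) hyF hyQ⟩, hyF⟩) (by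
      obtain ⟨y, hy⟩ := t.ri_ne (hBf j0)
      exact ⟨y, t.ri_sub_fr (hBf j0) hy, B j0, ⟨hBf j0, fun h => h.2.1 ⟨j0, rfl⟩⟩, hy.1⟩)
  obtain ⟨y, hy, ⟨F, hF, hyF⟩, ⟨G, ⟨hG, hGn⟩, hyG⟩⟩ := hc
  by_cases hyB : y ∈ ⋃ i, B i
  · obtain ⟨j, hj⟩ := mem_iUnion.1 hyB
    exact hcon j F hF ⟨hBf j, hF.1, fun h => hF.2.1 ⟨j, h⟩, ⟨y, hj, hyF⟩⟩
  · exact hGn (sideF_step t hBf hQ hF hG hyF hyG hyB)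

variable {α : Fin k → ℕ} {x : Fin k → ℕ → Set E3} {n : ℕ} {φ : Fin n → Fin k}
  {X : Fin n → Set E3} {v : Fin n → E3}

lemma walk_side (t : Topo P) (w : Rot P r vt) (hB : BeltC P B) (W : Walk P B α x φ X v) {Q : Set E3}
    (hQ : IsCompOf Q (frontier P \ ⋃ i, B i)) {t0 : Fin n} (h0 : X t0 ∈ sideF P B Q) :
    ∀ t, X t ∈ sideF P B Q := by
  have hBf : ∀ j, B j ∈ facets P := fun j => (hB.adj j).1
  refine cyc_ind _ (fun a ha => ?_) h0
  rcases W.step a with ⟨-, hA⟩ | ⟨-, he⟩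
  · obtain ⟨y, hy, hyo⟩ := w.midpt hA
    refine sideF_step t hBf hQ ha hA.2.1 hy.1 hy.2 ?_
    rw [mem_iUnion]
    rintro ⟨j, hj⟩
    rcases hyo _ (hBf j) hj with h | h
    · exact W.nb a ⟨j, h⟩
    · exact W.nb _ ⟨j, h⟩
  · rw [he]; exact ha

lemma walk_edges (w : Rot P r vt) (hB : BeltC P B) (W : Walk P B α x φ X v) (j : Fin k) :
    edgesInCommon P (B j) (⋃ a, B (φ a) ∩ X a) = α j := by
  classical
  have hBf : ∀ j, B j ∈ facets P := fun j => (hB.adj j).1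
  unfold edgesInCommon
  have h1 : {e | IsEdgeOf e P ∧ e ⊆ B j ∧ e ⊆ ⋃ a, B (φ a) ∩ X a} =
      (fun a => B (φ a) ∩ X a) '' (Finset.univ.filter (fun a => φ a = j) : Finset (Fin n)) := by
    ext e
    constructor
    · rintro ⟨he, hej, heγ⟩
      obtain ⟨F, G, hA, rfl⟩ := w.edge_is he
      have h2 : ∃ G', Adj P (B j) G' ∧ F ∩ G = B j ∩ G' := by
        rcases w.edge_sub hA (hBf j) hej with h | h
        · exact ⟨G, h ▸ hA, by rw [h]⟩
        · exact ⟨F, h ▸ hA.symm, by rw [h, inter_comm]⟩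
      obtain ⟨G', hA', he'⟩ := h2
      rw [he'] at heγ ⊢
      obtain ⟨y, hy, hyo⟩ := w.midpt hA'
      obtain ⟨a, ha⟩ := mem_iUnion.1 (heγ hy)
      have hX : X a = G' := by
        rcases hyo _ (W.adj a).2.1 ha.2 with h | h
        · exact absurd ⟨j, h.symm⟩ (W.nb a)
        · exact h
      have hBj : B (φ a) = B j := by
        rcases hyo _ (hBf _) ha.1 with h | h
        · exact h
        · exact absurd (h.trans hX.symm) (W.adj a).2.2.1
      refine ⟨a, ?_, ?_⟩
      · simpa using hB.inj hBj
      · simp only [hX, hBj]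
    · rintro ⟨a, ha, rfl⟩
      have ha' : φ a = j := by simpa using ha
      subst ha'
      exact ⟨w.edge (W.adj a), inter_subset_left, subset_iUnion (fun a => B (φ a) ∩ X a) a⟩
  rw [h1, Set.InjOn.ncard_image, Set.ncard_coe_finset]
  · exact W.fib j
  · intro a ha a' ha' he
    have h2 : φ a = j := by simpa using ha
    have h3 : φ a' = j := by simpa using ha'
    rcases w.edge_inj (W.adj a) (W.adj a') he with h | h
    · exact W.pinj _ _ (h2.trans h3.symm) h.2.symm
    · exact absurd ⟨_, h.1⟩ (W.nb a)

end

section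
variable {P : Set E3} {r : Set E3 → Set E3 → Set E3} {vt : Set E3 → Set E3 → E3}
  {k : ℕ} {B : Fin k → Set E3}
variable {α : Fin k → ℕ} {x : Fin k → ℕ → Set E3} {n : ℕ} {φ : Fin n → Fin k}
  {X : Fin n → Set E3} {v : Fin n → E3}

/-- The component of `∂P ∖ γ` containing the relative interior of `F`. -/
lemma exists_comp (t : Topo P) {F γ : Set E3} (hF : F ∈ facets P) (h : ri P F ⊆ frontier P \ γ) :
    ∃ C, IsCompOf C (frontier P \ γ) ∧ ri P F ⊆ C := by
  obtain ⟨y, hy⟩ := t.ri_ne hF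
  refine ⟨connectedComponentIn (frontier P \ γ) y, ⟨y, h hy, rfl⟩, ?_⟩
  exact t.ri_sub hF ⟨y, h hy, rfl⟩ h hy.1 (mem_connectedComponentIn (h hy))

lemma walk_comps (t : Topo P) (w : Rot P r vt) (hB : BeltC P B) (W : Walk P B α x φ X v) {Q : Set E3}
    (hQ : IsCompOf Q (frontier P \ ⋃ i, B i)) (hX : ∀ a, X a ∈ sideF P B Q)
    (hside : ∀ j G, Adj P (B j) G → G ∈ sideF P B Q → ∃ a, φ a = j ∧ X a = G) :
    ∃ C C', IsCompOf C (frontier P \ ⋃ a, B (φ a) ∩ X a) ∧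
      IsCompOf C' (frontier P \ ⋃ a, B (φ a) ∩ X a) ∧ C ≠ C' ∧
      (∀ j, ri P (B j) ⊆ C) ∧ ∀ a, ri P (X a) ⊆ C' := by
  have hBf : ∀ j, B j ∈ facets P := fun j => (hB.adj j).1
  have hk := hB.hk
  have hn := W.hn3
  set γ := ⋃ a, B (φ a) ∩ X a with hγ
  have hri : ∀ F ∈ facets P, ri P F ⊆ frontier P \ γ := by
    intro F hF y hy
    refine ⟨t.ri_sub_fr hF hy, fun hyγ => ?_⟩
    obtain ⟨a, ha⟩ := mem_iUnion.1 hyγ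
    have h1 := hy.2 _ (hBf _) ha.1
    have h2 := hy.2 _ (W.adj a).2.1 ha.2
    exact (W.adj a).2.2.1 (h1.trans h2.symm)
  let j0 : Fin k := ⟨0, by omega⟩
  let a0 : Fin n := ⟨0, by omega⟩
  obtain ⟨C, hC, hC0⟩ := exists_comp t (hBf j0) (hri _ (hBf j0))
  obtain ⟨C', hC', hC0'⟩ := exists_comp t (hX a0).1 (hri _ (hX a0).1)
  have hCB : ∀ j, ri P (B j) ⊆ C := by
    refine cyc_ind _ (fun j hj => ?_) hC0
    obtain ⟨y, hy, hyo⟩ := w.midpt (hB.adj j)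
    refine t.step (hBf j) (hBf _) hC (hri _ (hBf _)) hy.1 hy.2 ⟨?_, ?_⟩ hj
    · rw [t.fr]; exact ⟨_, hBf j, hy.1⟩
    · intro hyγ
      obtain ⟨a, ha⟩ := mem_iUnion.1 hyγ
      rcases hyo _ (W.adj a).2.1 ha.2 with h | h
      · exact W.nb a ⟨_, h.symm⟩
      · exact W.nb a ⟨_, h.symm⟩
  have hCX : ∀ a, ri P (X a) ⊆ C' := by
    refine cyc_ind _ (fun a ha => ?_) hC0'
    rcases W.step a with ⟨-, hA⟩ | ⟨-, he⟩
    · obtain ⟨y, hy, hyo⟩ := w.midpt hA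
      refine t.step hA.1 hA.2.1 hC' (hri _ hA.2.1) hy.1 hy.2 ⟨?_, ?_⟩ ha
      · rw [t.fr]; exact ⟨_, hA.1, hy.1⟩
      · intro hyγ
        obtain ⟨b, hb⟩ := mem_iUnion.1 hyγ
        rcases hyo _ (hBf _) hb.1 with h | h
        · exact W.nb _ ⟨_, h⟩
        · exact W.nb _ ⟨_, h⟩
    · rw [he]; exact ha
  refine ⟨C, C', hC, hC', ?_, hCB, hCX⟩
  intro hCC
  obtain ⟨z, hz⟩ := t.ri_ne (hX a0).1
  obtain ⟨y, hy⟩ := t.ri_ne (hBf j0)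
  have hsub : C' ⊆ ⋃₀ sideF P B Q := by
    refine Topo.comp_sep hC' (V := ⋃₀ (facets P \ sideF P B Q))
      (closed_union w.fin _ (fun F h => h.1))
      (closed_union w.fin _ (fun F h => h.1)) ?_ ?_ (hC0' hz) ⟨_, hX a0, hz.1⟩
    · intro y hy
      have hy := hy.1
      rw [t.fr] at hy
      obtain ⟨F, hF, hyF⟩ := hy
      by_cases h : F ∈ sideF P B Q
      · exact Or.inl ⟨F, h, hyF⟩
      · exact Or.inr ⟨F, ⟨hF, h⟩, hyF⟩
    · rw [← subset_empty_iff]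
      rintro y ⟨⟨hyf, hyγ⟩, ⟨F, hF, hyF⟩, ⟨G, ⟨hG, hGn⟩, hyG⟩⟩
      by_cases hyB : y ∈ ⋃ i, B i
      · obtain ⟨j, hj⟩ := mem_iUnion.1 hyB
        obtain ⟨a, ha, ha'⟩ := hside j F
          ⟨hBf j, hF.1, fun h => hF.2.1 ⟨j, h⟩, ⟨y, hj, hyF⟩⟩ hF
        exact hyγ (mem_iUnion.2 ⟨a, by rw [ha]; exact hj, by rw [ha']; exact hyF⟩)
      · exact hGn (sideF_step t hBf hQ hF hG hyF hyG hyB)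
  obtain ⟨F, hF, hyF⟩ := hsub (hCC ▸ hC0 hy)
  exact hF.2.1 ⟨j0, (hy.2 F hF.1 hyF).symm⟩

lemma walk_zero (t : Topo P) (w : Rot P r vt) (hB : BeltC P B) (s : Side P r B α x) {Q : Set E3}
    (hQ : IsCompOf Q (frontier P \ ⋃ i, B i)) {Fs : Set E3} (hFs : Fs ∈ sideF P B Q)
    (h1 : ∀ j, α j = 1) (hx : ∀ j, x j 0 = Fs) :
    sideF P B Q = {Fs} ∧ facetEdges P Fs = k := by
  have hBf : ∀ j, B j ∈ facets P := fun j => (hB.adj j).1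
  have hk := hB.hk
  have hA : ∀ j, Adj P (B j) Fs := fun j => by
    have := s.adj j 0 (by rw [h1]; omega)
    rwa [hx] at this
  have hr : ∀ j, r Fs (B (nxt j)) = B j := by
    intro j
    have h2 := s.last j 0 (by rw [h1])
    rw [hx] at h2
    have := (w.cyc (hA j)).2.1
    rwa [h2] at this
  have hN : ∀ G, Adj P Fs G → G ∈ range B := by
    intro G hG
    obtain ⟨i, hi⟩ := w.conn (hA ⟨0, by omega⟩).symm hG
    rw [← hi]
    clear hi
    induction i with
    | zero => exact ⟨_, rfl⟩
    | succ i ih =>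
      rw [Function.iterate_succ_apply']
      obtain ⟨j, hj⟩ := ih
      rw [← hj, ← nxt_prv j, hr]
      exact ⟨_, rfl⟩
  constructor
  · apply Subset.antisymm
    · intro G hG
      obtain ⟨z, hz⟩ := t.ri_ne hFs.1
      obtain ⟨y, hy⟩ := t.ri_ne hG.1
      have hsub : Q ⊆ Fs := by
        refine Topo.comp_sep hQ (V := ⋃₀ (facets P \ {Fs})) hFs.1.1.2.1
          (closed_union w.fin _ (fun F h => h.1)) ?_ ?_ (hFs.2.2 hz) hz.1
        · intro y hy
          have hy := hy.1
          rw [t.fr] at hy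
          obtain ⟨F, hF, hyF⟩ := hy
          by_cases h : F = Fs
          · exact Or.inl (h ▸ hyF)
          · exact Or.inr ⟨F, ⟨hF, h⟩, hyF⟩
        · rw [← subset_empty_iff]
          rintro y ⟨⟨hyf, hyB⟩, hyF, ⟨G, ⟨hG, hGn⟩, hyG⟩⟩
          obtain ⟨j, rfl⟩ := hN G ⟨hFs.1, hG, fun h => hGn h.symm, ⟨y, hyF, hyG⟩⟩
          exact hyB (mem_iUnion.2 ⟨j, hyG⟩)
      exact (hy.2 _ hFs.1 (hsub (hG.2.2 hy))).symm
    · rintro _ rfl; exact hFs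
  · rw [w.facetEdges_eq hFs.1]
    have : {G | Adj P Fs G} = range B := by
      apply Subset.antisymm hN
      rintro _ ⟨j, rfl⟩
      exact (hA j).symm
    rw [this, ← image_univ, Set.ncard_image_of_injective _ hB.inj]
    simp

lemma side_main (t : Topo P) (w : Rot P r vt) (hB : BeltC P B) (s : Side P r B α x) {Q : Set E3}
    (hQ : IsCompOf Q (frontier P \ ⋃ i, B i))
    (hin : ∀ j i, i < α j → x j i ∈ sideF P B Q)
    (hside : ∀ j G, Adj P (B j) G → G ∈ sideF P B Q → ∃ i, i < α j ∧ G = x j i) {l : ℕ}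
    (hl : l = ∑ j, (α j - 1)) :
    (l = 0 ∧ ∃ Fs, sideF P B Q = {Fs} ∧ facetEdges P Fs = k) ∨
    (2 ≤ l ∧ ∃ (L : Fin l → Set E3) (γ : Set E3), (∀ i, L i ∈ sideF P B Q) ∧
      (∃ C C' : Set E3, IsCompOf C (frontier P \ γ) ∧ IsCompOf C' (frontier P \ γ) ∧
          C ≠ C' ∧ WalksRound P γ C B ∧ WalksRound P γ C' L) ∧
      ∀ j, edgesInCommon P (B j) γ = α j) := by
  classical
  have hBf : ∀ j, B j ∈ facets P := fun j => (hB.adj j).1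
  have hk := hB.hk
  obtain ⟨n, φ, X, v, W⟩ := w.exists_walk hB s
  have hn := W.hn3
  have hX : ∀ a, X a ∈ sideF P B Q := by
    intro a
    obtain ⟨j, i, hi, he⟩ := W.cover' a
    rw [he]; exact hin j i hi
  have hside' : ∀ j G, Adj P (B j) G → G ∈ sideF P B Q → ∃ a, φ a = j ∧ X a = G := by
    intro j G hG hG'
    obtain ⟨i, hi, rfl⟩ := hside j G hG hG'
    exact W.cover j i hi
  rcases compress (by omega : 0 < n) X ((W.xcnt (by omega)).trans hl.symm) with
    ⟨h0, hc⟩ | ⟨h2, L, ψ, hL, hs0, hs1, hcnt, hex⟩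
  · left
    refine ⟨h0, X ⟨0, by omega⟩, ?_⟩
    have h1 : ∀ j, α j = 1 := by
      intro j
      have : ∑ j, (α j - 1) = 0 := by omega
      have h3 := Finset.sum_eq_zero_iff.1 this j (Finset.mem_univ _)
      have := s.pos j
      omega
    refine walk_zero t w hB s hQ (hX _) h1 (fun j => ?_)
    obtain ⟨a, -, ha⟩ := W.cover j 0 (s.pos j)
    rw [← ha]; exact hc _ _
  · right
    obtain ⟨C, C', hC, hC', hne, hCB, hCX⟩ := walk_comps t w hB W hQ hX hside'
    have hcyc : IsSimpleEdgeCycleVia P (⋃ a, B (φ a) ∩ X a) v :=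
      ⟨W.hn3, W.vinj, W.vert, fun a => by rw [W.seg]; exact w.edge (W.adj a),
        iUnion_congr (fun a => (W.seg a).symm)⟩
    have hLr : ∀ i, ∃ a, L i = X a ∧ Adj P (L i) (L (nxt i)) := by
      intro i
      obtain ⟨a, ha, hch⟩ := hex i
      refine ⟨a, by rw [hL, ha], ?_⟩
      rcases W.step a with ⟨-, hA⟩ | ⟨-, he⟩
      · rw [hL a, hL (nxt a), hs1 a hch, ha] at hA
        exact hA
      · exact absurd he hch
    refine ⟨h2, L, ⋃ a, B (φ a) ∩ X a, ?_, ⟨C, C', hC, hC', hne, ?_, ?_⟩, walk_edges w hB W⟩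
    · intro i
      obtain ⟨a, ha, -⟩ := hLr i
      rw [ha]; exact hX a
    · refine ⟨⟨by omega, hBf, fun _ j => w.edge (hB.adj j)⟩,
        fun j => (t.intr_sub _ (hBf j)).trans (hCB j), n, v, φ, hcyc, ?_, ?_, W.surj, ?_⟩
      · intro a; rw [W.seg]; exact inter_subset_left
      · intro a
        rcases W.step a with h | h
        · exact Or.inl h.1
        · exact Or.inr h.1
      · intro _; exact W.cnt
    · refine ⟨⟨by omega, fun i => (hLr i).choose_spec.2.1, fun _ i => w.edge (hLr i).choose_spec.2⟩,
        fun i => ?_, n, v, ψ, hcyc, ?_, ?_, ?_, ?_⟩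
      · obtain ⟨a, ha, -⟩ := hLr i
        rw [ha]; exact (t.intr_sub _ (hX a).1).trans (hCX a)
      · intro a; rw [W.seg, ← hL]; exact inter_subset_right
      · intro a
        by_cases h : X (nxt a) = X a
        · exact Or.inl (hs0 a h)
        · exact Or.inr (hs1 a h)
      · intro i
        obtain ⟨a, ha, -⟩ := hex i
        exact ⟨a, ha⟩
      · intro _
        convert hcnt

end

section
variable {P : Set E3} {r : Set E3 → Set E3 → Set E3} {vt : Set E3 → Set E3 → E3}
  {k : ℕ} {B : Fin k → Set E3}

lemma side_all (t : Topo P) (w : Rot P r vt) (hB : BeltC P B) {α : Fin k → ℕ}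
    {x : Fin k → ℕ → Set E3} (s : Side P r B α x) {Q : Set E3}
    (hQ : IsCompOf Q (frontier P \ ⋃ i, B i)) {j : Fin k} {i : ℕ} (hi : i < α j)
    (h0 : x j i ∈ sideF P B Q) : ∀ j i, i < α j → x j i ∈ sideF P B Q := by
  obtain ⟨n, φ, X, v, W⟩ := w.exists_walk hB s
  obtain ⟨a, -, ha⟩ := W.cover j i hi
  rw [← ha] at h0
  have := walk_side t w hB W hQ h0
  intro j i hi
  obtain ⟨a, -, ha⟩ := W.cover j i hi
  rw [← ha]; exact this a

lemma sideF_disj (t : Topo P) {Q Q' : Set E3} (hQ : IsCompOf Q (frontier P \ ⋃ i, B i))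
    (hQ' : IsCompOf Q' (frontier P \ ⋃ i, B i)) (hne : Q ≠ Q') {F : Set E3}
    (h : F ∈ sideF P B Q) (h' : F ∈ sideF P B Q') : False := by
  obtain ⟨y, hy⟩ := t.ri_ne h.1
  exact hne (Topo.comp_eq hQ hQ' (h.2.2 hy) (h'.2.2 hy))

lemma two_sides_aux (t : Topo P) {r' : Set E3 → Set E3 → Set E3} {vt' : Set E3 → Set E3 → E3}
    (w : Rot P r vt) (w' : Rot P r' vt') (hB : BeltC P B)
    {α α' : Fin k → ℕ} {x x' : Fin k → ℕ → Set E3} (s : Side P r B α x) (s' : Side P r' B α' x')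
    (hcov : ∀ j G, Adj P (B j) G → G ∉ range B →
      (∃ i, i < α j ∧ G = x j i) ∨ (∃ i, i < α' j ∧ G = x' j i))
    {Q Q' : Set E3} (hQ : IsCompOf Q (frontier P \ ⋃ i, B i))
    (hQ' : IsCompOf Q' (frontier P \ ⋃ i, B i)) (hne : Q ≠ Q') {j : Fin k} {i : ℕ} (hi : i < α j)
    (h0 : x j i ∈ sideF P B Q) :
    (∀ j i, i < α j → x j i ∈ sideF P B Q) ∧
    (∀ j G, Adj P (B j) G → G ∈ sideF P B Q → ∃ i, i < α j ∧ G = x j i) ∧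
    (∀ j i, i < α' j → x' j i ∈ sideF P B Q') ∧
    (∀ j G, Adj P (B j) G → G ∈ sideF P B Q' → ∃ i, i < α' j ∧ G = x' j i) := by
  have h1 := side_all t w hB s hQ hi h0
  have h2 : ∀ j i, i < α' j → x' j i ∈ sideF P B Q' := by
    obtain ⟨j, G, hG, hA⟩ := exists_side_adj t w hB hQ'
    rcases hcov j G hA hG.2.1 with ⟨i, hi, rfl⟩ | ⟨i, hi, rfl⟩
    · exact (sideF_disj t hQ hQ' hne (h1 j i hi) hG).elim
    · exact side_all t w' hB s' hQ' hi hG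
  refine ⟨h1, ?_, h2, ?_⟩
  · intro j G hA hG
    rcases hcov j G hA hG.2.1 with h | ⟨i, hi, rfl⟩
    · exact h
    · exact (sideF_disj t hQ hQ' hne hG (h2 j i hi)).elim
  · intro j G hA hG
    rcases hcov j G hA hG.2.1 with ⟨i, hi, rfl⟩ | h
    · exact (sideF_disj t hQ hQ' hne (h1 j i hi) hG).elim
    · exact h

/-- The conclusion on one side of the belt. -/
def SideConcl (P : Set E3) {k : ℕ} (B : Fin k → Set E3) (Q : Set E3) (α : Fin k → ℕ) : Prop :=
  ∀ l : ℕ, l = ∑ j, (α j - 1) →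
    (l = 0 ∧ ∃ Fs, sideF P B Q = {Fs} ∧ facetEdges P Fs = k) ∨
    (2 ≤ l ∧ ∃ (L : Fin l → Set E3) (γ : Set E3), (∀ i, L i ∈ sideF P B Q) ∧
      (∃ C C' : Set E3, IsCompOf C (frontier P \ γ) ∧ IsCompOf C' (frontier P \ γ) ∧
          C ≠ C' ∧ WalksRound P γ C B ∧ WalksRound P γ C' L) ∧
      ∀ j, edgesInCommon P (B j) γ = α j)

lemma two_sides (t : Topo P) (w : Rot P r vt) (hB : BeltC P B)
    {Q Q' : Set E3} (hQ : IsCompOf Q (frontier P \ ⋃ i, B i))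
    (hQ' : IsCompOf Q' (frontier P \ ⋃ i, B i)) (hne : Q ≠ Q') :
    ∃ α α' : Fin k → ℕ, (∀ j, 0 < α j) ∧ (∀ j, 0 < α' j) ∧
      (∀ j, facetEdges P (B j) = α j + α' j + 2) ∧
      SideConcl P B Q α ∧ SideConcl P B Q' α' := by
  obtain ⟨α, α', x, x', s, s', he, hcov⟩ := w.sides hB
  obtain ⟨j, G, hG, hA⟩ := exists_side_adj t w hB hQ
  rcases hcov j G hA hG.2.1 with ⟨i, hi, rfl⟩ | ⟨i, hi, rfl⟩
  · obtain ⟨h1, h2, h3, h4⟩ := two_sides_aux t w w.mirror hB s s' hcov hQ hQ' hne hi hG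
    exact ⟨α, α', s.pos, s'.pos, he, fun l hl => side_main t w hB s hQ h1 h2 hl,
      fun l hl => side_main t w.mirror hB s' hQ' h3 h4 hl⟩
  · obtain ⟨h1, h2, h3, h4⟩ := two_sides_aux t w.mirror w hB s' s
      (fun j G h h' => (hcov j G h h').symm) hQ hQ' hne hi hG
    exact ⟨α', α, s'.pos, s.pos, fun j => by rw [he]; omega,
      fun l hl => side_main t w.mirror hB s' hQ h1 h2 hl,
      fun l hl => side_main t w hB s hQ' h3 h4 hl⟩

end

lemma count47 {k : ℕ} (f : Fin k → ℕ) (h : ∀ j, 4 ≤ f j ∧ f j ≤ 7) (b : ℕ → ℕ)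
    (hb : ∀ i, b i = (Finset.univ.filter (fun j : Fin k => f j = i)).card) :
    k = b 4 + b 5 + b 6 + b 7 ∧ ∑ j, (f j - 4) = b 5 + 2 * b 6 + 3 * b 7 := by
  have h1 : ∀ i, b i = ∑ j, if f j = i then 1 else 0 := by
    intro i; rw [hb, Finset.card_filter]
  constructor
  · rw [h1, h1, h1, h1, ← Finset.sum_add_distrib, ← Finset.sum_add_distrib,
      ← Finset.sum_add_distrib]
    have : k = ∑ j : Fin k, 1 := by simp
    conv_lhs => rw [this]
    apply Finset.sum_congr rfl
    intro j _
    have := h j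
    split_ifs <;> omega
  · rw [h1, h1, h1, Finset.mul_sum, Finset.mul_sum, ← Finset.sum_add_distrib,
      ← Finset.sum_add_distrib]
    apply Finset.sum_congr rfl
    intro j _
    have := h j
    split_ifs <;> omega

lemma pvec_zero {P : Set E3} (hfin : (facets P).Finite) {m : ℕ} (h : pVec P m = 0) {F : Set E3}
    (hF : F ∈ facets P) : facetEdges P F ≠ m := by
  intro he
  unfold pVec at h
  rw [Set.ncard_eq_zero (hfin.subset (fun F h => h.1))] at h
  have : F ∈ ({F | IsFacetOf F P ∧ facetEdges P F = m} : Set (Set E3)) := ⟨hF, he⟩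
  rw [h] at this
  exact this

lemma main1 (P : Set E3) {r : Set E3 → Set E3 → Set E3} {vt : Set E3 → Set E3 → E3}
    (t : Topo P) (w : Rot P r vt)
    (h8 : ∀ m, 8 ≤ m → pVec P m = 0) (h7 : pVec P 7 ≤ 1)
    {k : ℕ} (B : Fin k → Set E3) (hB : BeltC P B)
    (b : ℕ → ℕ)
    (hb : ∀ i, b i = (Finset.univ.filter (fun j : Fin k => facetEdges P (B j) = i)).card)
    (P₁ P₂ : Set E3)
    (hP₁ : IsCompOf P₁ (frontier P \ ⋃ i, B i))
    (hP₂ : IsCompOf P₂ (frontier P \ ⋃ i, B i))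
    (hP12 : P₁ ≠ P₂)
    (W₁ W₂ : Set (Set E3))
    (hW₁ : W₁ = sideF P B P₁)
    (hW₂ : W₂ = sideF P B P₂) :
    ((∃ Fs Ft : Set E3, W₁ = {Fs} ∧ W₂ = {Ft} ∧
        facetEdges P Fs = k ∧ facetEdges P Ft = k ∧ ∀ j, facetEdges P (B j) = 4) ∨
     (∃ Fs : Set E3, (W₁ = {Fs} ∨ W₂ = {Fs}) ∧ facetEdges P Fs = k ∧
        2 ≤ b 5 + 2 * b 6 + 3 * b 7 ∧
        ∃ L : Fin (b 5 + 2 * b 6 + 3 * b 7) → Set E3, Borders P B L ∧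
          (W₁ = {Fs} → ∀ i, L i ∈ W₂) ∧ (W₂ = {Fs} → ∀ i, L i ∈ W₁)) ∨
     (∃ (l₁ l₂ : ℕ) (L₁ : Fin l₁ → Set E3) (L₂ : Fin l₂ → Set E3) (γ₁ γ₂ : Set E3),
        2 ≤ l₁ ∧ 2 ≤ l₂ ∧ (∀ i, L₁ i ∈ W₁) ∧ (∀ i, L₂ i ∈ W₂) ∧
        (∃ C C' : Set E3, IsCompOf C (frontier P \ γ₁) ∧ IsCompOf C' (frontier P \ γ₁) ∧
          C ≠ C' ∧ WalksRound P γ₁ C B ∧ WalksRound P γ₁ C' L₁) ∧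
        (∃ C C' : Set E3, IsCompOf C (frontier P \ γ₂) ∧ IsCompOf C' (frontier P \ γ₂) ∧
          C ≠ C' ∧ WalksRound P γ₂ C B ∧ WalksRound P γ₂ C' L₂) ∧
        l₁ = ∑ j : Fin k, (edgesInCommon P (B j) γ₁ - 1) ∧
        l₂ = ∑ j : Fin k, (edgesInCommon P (B j) γ₂ - 1) ∧
        (l₁ + l₂ : ℤ) = 2 * k - 2 * b 4 - b 5 + b 7 ∧ l₁ + l₂ ≤ 2 * k + 1 ∧
        (min l₁ l₂ : ℤ) ≤ (k : ℤ) - b 4 - ⌈((b 5 : ℚ) - b 7) / 2⌉ ∧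
        (k : ℤ) - b 4 - ⌈((b 5 : ℚ) - b 7) / 2⌉ ≤ (k : ℤ) ∧
        (b 7 = 0 → k ≤ l₁ → k ≤ l₂ →
          l₁ = k ∧ l₂ = k ∧ b 4 = 0 ∧ b 5 = 0 ∧ b 6 = k))) := by
  classical
  have hBf : ∀ j, B j ∈ facets P := fun j => (hB.adj j).1
  obtain ⟨α, α', hα, hα', he, hS, hS'⟩ := two_sides t w hB hP₁ hP₂ hP12
  have h47 : ∀ j, 4 ≤ facetEdges P (B j) ∧ facetEdges P (B j) ≤ 7 := by
    intro j
    constructor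
    · rw [he]; have := hα j; have := hα' j; omega
    · by_contra hlt
      exact pvec_zero w.fin (h8 _ (by omega)) (hBf j) rfl
  obtain ⟨hk, hsum⟩ := count47 _ h47 b hb
  have hl12 : ∑ j, (α j - 1) + ∑ j, (α' j - 1) = b 5 + 2 * b 6 + 3 * b 7 := by
    rw [← hsum, ← Finset.sum_add_distrib]
    apply Finset.sum_congr rfl
    intro j _
    rw [he]; have := hα j; have := hα' j; omega
  have hb7 : b 7 ≤ 1 := by
    refine le_trans ?_ h7
    rw [hb]
    unfold pVec
    rw [← Set.ncard_coe_finset, ← Set.ncard_image_of_injective _ hB.inj]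
    apply Set.ncard_le_ncard _ (w.fin.subset (fun F h => h.1))
    rintro _ ⟨j, hj, rfl⟩
    exact ⟨hBf j, by simpa using hj⟩
  subst hW₁ hW₂
  rcases hS _ rfl with ⟨h0, Fs, hFs, hFk⟩ | ⟨h2, L₁, γ₁, hL₁, hC₁, he₁⟩
  · rcases hS' _ rfl with ⟨h0', Ft, hFt, hFk'⟩ | ⟨h2', -⟩
    · left
      refine ⟨Fs, Ft, hFs, hFt, hFk, hFk', ?_⟩
      intro j
      have h1 := Finset.sum_eq_zero_iff.1 h0 j (Finset.mem_univ _)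
      have h2 := Finset.sum_eq_zero_iff.1 h0' j (Finset.mem_univ _)
      have := hα j; have := hα' j
      rw [he]; omega
    · right; left
      rcases hS' (b 5 + 2 * b 6 + 3 * b 7) (by omega) with ⟨h0', -⟩ | ⟨h2', L, γ, hL, ⟨C, C', hC⟩, -⟩
      · omega
      · refine ⟨Fs, Or.inl hFs, hFk, h2', L, ⟨γ, C, C', hC⟩, fun _ => hL, fun h i => ?_⟩
        rw [hFs, ← h]; exact hL i
  · rcases hS' _ rfl with ⟨h0', Ft, hFt, hFk'⟩ | ⟨h2', L₂, γ₂, hL₂, hC₂, he₂⟩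
    · right; left
      rcases hS (b 5 + 2 * b 6 + 3 * b 7) (by omega) with ⟨h0', -⟩ | ⟨h2', L, γ, hL, ⟨C, C', hC⟩, -⟩
      · omega
      · refine ⟨Ft, Or.inr hFt, hFk', h2', L, ⟨γ, C, C', hC⟩, fun h i => ?_, fun _ => hL⟩
        rw [hFt, ← h]; exact hL i
    · right; right
      refine ⟨_, _, L₁, L₂, γ₁, γ₂, h2, h2', hL₁, hL₂, hC₁, hC₂, ?_, ?_, ?_⟩
      · simp only [he₁]
      · simp only [he₂]
      · generalize ∑ j, (α j - 1) = l₁ at *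
        generalize ∑ j, (α' j - 1) = l₂ at *
        clear L₁ L₂ hL₁ hL₂ hC₁ hC₂ hS hS'
        refine ⟨by omega, by omega, ?_, ?_, by omega⟩
        · have h1 : ⌈((b 5 : ℚ) - b 7) / 2⌉ ≤ (k : ℤ) - b 4 - min (l₁ : ℤ) l₂ := by
            rw [Int.ceil_le]
            have h3 : (b 5 : ℤ) - b 7 ≤ 2 * ((k : ℤ) - b 4 - min (l₁ : ℤ) l₂) := by omega
            have h4 : (((b 5 : ℤ) - b 7 : ℤ) : ℚ) ≤ ((2 * ((k : ℤ) - b 4 - min (l₁ : ℤ) l₂) : ℤ) : ℚ) :=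
              Int.cast_le.2 h3
            rw [Int.cast_mul] at h4
            have h5 : (((b 5 : ℤ) - b 7 : ℤ) : ℚ) = (b 5 : ℚ) - b 7 := by push_cast; ring
            rw [h5] at h4
            have h6 : ((2 : ℤ) : ℚ) = 2 := by norm_num
            rw [h6] at h4
            linarith
          linarith
        · have h1 : (-1 : ℤ) < ⌈((b 5 : ℚ) - b 7) / 2⌉ := by
            rw [Int.lt_ceil]
            have h3 : (b 7 : ℚ) ≤ 1 := by exact_mod_cast hb7
            have h4 : (0 : ℚ) ≤ b 5 := Nat.cast_nonneg _
            push_cast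
            linarith
          omega

lemma vertex_seg {P : Set E3} {p a b : E3} (hp : IsVertexOf p P) (ha : IsVertexOf a P)
    (hb : IsVertexOf b P) (h : p ∈ segment ℝ a b) : p = a ∨ p = b := by
  have haP : a ∈ P := ha.2.2.2.subset rfl
  have hbP : b ∈ P := hb.2.2.2.subset rfl
  rcases eq_or_ne a p with h1 | h1
  · exact Or.inl h1.symm
  rcases eq_or_ne b p with h2 | h2
  · exact Or.inr h2.symm
  have := mem_openSegment_of_ne_left_right h1 h2 h
  exact absurd (hp.2.2.2.left_mem_of_mem_openSegment haP hbP rfl this) h1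

lemma nxt_nxt_ne {n : ℕ} (hn : 3 ≤ n) (b : Fin n) : nxt (nxt b) ≠ b := by
  intro h
  have h1 := congrArg Fin.val h
  have := b.2
  rw [nxt_val, nxt_val] at h1
  split_ifs at h1 <;> omega

/-- Combinatorial data of a belt bordering a 2-loop. -/
structure Two (P : Set E3) {k n : ℕ} (B : Fin k → Set E3) (L : Fin 2 → Set E3) (v : Fin n → E3)
    (φ : Fin n → Fin k) (σ : Fin n → Fin 2) : Prop where
  inj : Function.Injective B
  adj : ∀ i i', i ≠ i' → Adj P (L i) (L i')
  bf : ∀ j, B j ∈ facets P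
  ne : ∀ j i, B j ≠ L i
  hn : 3 ≤ n
  vinj : Function.Injective v
  vert : ∀ a, IsVertexOf (v a) P
  seg : ∀ a, segment ℝ (v a) (v (nxt a)) = B (φ a) ∩ L (σ a)
  surj : Function.Surjective σ
  cnt : (Finset.univ.filter (fun a => φ (nxt a) ≠ φ a)).card = k

namespace Two
variable {P : Set E3} {k n : ℕ} {B : Fin k → Set E3} {L : Fin 2 → Set E3} {v : Fin n → E3}
    {φ : Fin n → Fin k} {σ : Fin n → Fin 2}
    {r : Set E3 → Set E3 → Set E3} {vt : Set E3 → Set E3 → E3}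

lemma lf (h : Two P B L v φ σ) (i : Fin 2) : L i ∈ facets P := by
  have : ∀ i : Fin 2, ∃ i', i ≠ i' := by decide
  obtain ⟨i', hi⟩ := this i
  exact (h.adj i i' hi).1

lemma linj (h : Two P B L v φ σ) {i i' : Fin 2} (he : L i = L i') : i = i' := by
  by_contra hne
  exact (h.adj i i' hne).2.2.1 he

lemma pinj (h : Two P B L v φ σ) {a b : Fin n} (h1 : φ a = φ b) (h2 : σ a = σ b) : a = b := by
  have hs : segment ℝ (v a) (v (nxt a)) = segment ℝ (v b) (v (nxt b)) := by
    rw [h.seg, h.seg, h1, h2]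
  have e1 : v a ∈ segment ℝ (v b) (v (nxt b)) := hs ▸ left_mem_segment _ _ _
  have e2 : v (nxt a) ∈ segment ℝ (v b) (v (nxt b)) := hs ▸ right_mem_segment _ _ _
  rcases vertex_seg (h.vert _) (h.vert _) (h.vert _) e1 with h3 | h3
  · exact h.vinj h3
  · have h3 := h.vinj h3
    rcases vertex_seg (h.vert _) (h.vert _) (h.vert _) e2 with h4 | h4
    · have h4 := h.vinj h4
      rw [h3] at h4
      exact absurd h4 (nxt_nxt_ne h.hn b)
    · exact nxt_inj (h.vinj h4)

lemma madj (h : Two P B L v φ σ) (a : Fin n) : Adj P (B (φ a)) (L (σ a)) :=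
  ⟨h.bf _, h.lf _, h.ne _ _, ⟨v a, by rw [← h.seg]; exact left_mem_segment _ _ _⟩⟩

lemma vmem (h : Two P B L v φ σ) (a : Fin n) : v a ∈ B (φ a) ∧ v a ∈ L (σ a) := by
  have : v a ∈ B (φ a) ∩ L (σ a) := by rw [← h.seg]; exact left_mem_segment _ _ _
  exact this

lemma vmem' (h : Two P B L v φ σ) (a : Fin n) : v (nxt a) ∈ B (φ a) ∧ v (nxt a) ∈ L (σ a) := by
  have : v (nxt a) ∈ B (φ a) ∩ L (σ a) := by rw [← h.seg]; exact right_mem_segment _ _ _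
  exact this

lemma chg (w : Rot P r vt) (h : Two P B L v φ σ) (a : Fin n) :
    σ (nxt a) ≠ σ a ↔ ¬ φ (nxt a) ≠ φ a := by
  have hne := nxt_ne (show 2 ≤ n by have := h.hn; omega) a
  constructor
  · intro h1 h2
    obtain ⟨F, G, hA, hv⟩ := w.isvert (h.vert (nxt a))
    have key : ∀ K ∈ facets P, v (nxt a) ∈ K → K = F ∨ K = G ∨ K = r F G := by
      intro K hK hvK
      rw [hv] at hvK
      exact w.only hA _ hK hvK
    have k1 := key _ (h.bf _) (h.vmem (nxt a)).1
    have k2 := key _ (h.lf _) (h.vmem (nxt a)).2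
    have k3 := key _ (h.bf _) (h.vmem' a).1
    have k4 := key _ (h.lf _) (h.vmem' a).2
    have n1 : B (φ (nxt a)) ≠ B (φ a) := fun he => h2 (h.inj he)
    have n2 : L (σ (nxt a)) ≠ L (σ a) := fun he => h1 (h.linj he)
    have n3 := h.ne (φ (nxt a)) (σ (nxt a))
    have n4 := h.ne (φ (nxt a)) (σ a)
    have n5 := h.ne (φ a) (σ (nxt a))
    have n6 := h.ne (φ a) (σ a)
    clear h hA hv key w
    grind
  · intro h1 h2
    exact hne (h.pinj (not_not.1 h1) h2)

lemma nk (w : Rot P r vt) (h : Two P B L v φ σ) : n = k + 2 := by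
  classical
  have hn := h.hn
  have h2 := Finset.card_filter_add_card_filter_not (s := (Finset.univ : Finset (Fin n)))
    (fun t => φ (nxt t) ≠ φ t)
  rw [h.cnt, Finset.card_univ, Fintype.card_fin] at h2
  have h3 : (Finset.univ.filter (fun a => σ (nxt a) ≠ σ a)).card =
      (Finset.univ.filter (fun t => ¬ φ (nxt t) ≠ φ t)).card := by
    congr 1
    apply Finset.filter_congr
    intro a _
    exact h.chg w a
  have hA := h.adj 0 1 (by decide)
  have h4 : (Finset.univ.filter (fun a => σ (nxt a) ≠ σ a)).card ≤ 2 := by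
    have : (Finset.univ.filter (fun a => σ (nxt a) ≠ σ a)).card ≤
        ({vt (L 0) (L 1), vt (L 1) (L 0)} : Finset E3).card := by
      apply Finset.card_le_card_of_injOn (fun a => v (nxt a))
      · intro a ha
        have ha' : σ (nxt a) ≠ σ a := by simpa using ha
        have m1 := (h.vmem (nxt a)).2
        have m2 := (h.vmem' a).2
        have m3 : v (nxt a) ∈ L 0 ∩ L 1 := by
          have : ∀ s s' : Fin 2, s ≠ s' → (s = 0 ∧ s' = 1) ∨ (s = 1 ∧ s' = 0) := by decide
          rcases this _ _ ha' with ⟨e1, e2⟩ | ⟨e1, e2⟩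
          · rw [e1] at m1; rw [e2] at m2; exact ⟨m1, m2⟩
          · rw [e1] at m1; rw [e2] at m2; exact ⟨m2, m1⟩
        rw [w.seg hA] at m3
        rcases vertex_seg (h.vert _) (w.vert hA.symm) (w.vert hA) m3 with e | e
        · simp [e]
        · simp [e]
      · intro a _ b _ hab
        exact nxt_inj (h.vinj hab)
    exact this.trans (Finset.card_le_two)
  rcases compress (by omega : 0 < n) σ rfl with ⟨h0, hc⟩ | ⟨h5, -⟩
  · obtain ⟨a, ha⟩ := h.surj 0
    obtain ⟨b, hb⟩ := h.surj 1
    have := hc a b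
    rw [ha, hb] at this
    exact absurd this (by decide)
  · have h6 : 2 ≤ (Finset.univ.filter (fun a => σ (nxt a) ≠ σ a)).card := by
      convert h5
    omega

lemma fwd (w : Rot P r vt) (h : Two P B L v φ σ) {i i' : Fin 2} (hi : i ≠ i') {a : Fin n}
    (ha : σ a = i) : (∃ b, σ b = i ∧ B (φ b) = r (L i) (B (φ a))) ∨ r (L i) (B (φ a)) = L i' := by
  have hA : Adj P (L i) (B (φ a)) := by have := (h.madj a).symm; rwa [ha] at this
  have hn := h.hn
  have hp := w.vmem hA
  have hb : ∃ b, b ≠ a ∧ vt (L i) (B (φ a)) ∈ B (φ b) ∧ vt (L i) (B (φ a)) ∈ L (σ b) := by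
    have hs : vt (L i) (B (φ a)) ∈ segment ℝ (v a) (v (nxt a)) := by
      rw [h.seg, ha]; exact ⟨hp.2, hp.1⟩
    rcases vertex_seg (w.vert hA) (h.vert _) (h.vert _) hs with e | e
    · rw [e]
      have := h.vmem' (prv a)
      rw [nxt_prv] at this
      refine ⟨prv a, ?_, this⟩
      intro hpa
      have h1 := nxt_prv a
      rw [hpa] at h1
      exact nxt_ne (by omega) a h1
    · rw [e]
      exact ⟨nxt a, nxt_ne (by omega) a, h.vmem _⟩
  obtain ⟨b, hba, hb1, hb2⟩ := hb
  have o1 := w.only hA _ (h.bf _) hb1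
  have o2 := w.only hA _ (h.lf _) hb2
  by_cases hs : σ b = i
  · left
    refine ⟨b, hs, ?_⟩
    rcases o1 with o | o | o
    · exact absurd o (h.ne _ _)
    · exact absurd (h.pinj (h.inj o) (hs.trans ha.symm)) hba
    · exact o
  · right
    have : ∀ i i' s : Fin 2, i ≠ i' → s ≠ i → s = i' := by decide
    have hs' := this i i' _ hi hs
    rw [hs'] at o2
    rcases o2 with o | o | o
    · exact absurd (h.linj o).symm hi
    · exact absurd o.symm (h.ne _ _)
    · exact o.symm

lemma nbrs (w : Rot P r vt) (h : Two P B L v φ σ) {i i' : Fin 2} (hi : i ≠ i') :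
    {G | Adj P (L i) G} = insert (L i') ((fun a => B (φ a)) '' {a | σ a = i}) := by
  have hA := h.adj i i' hi
  have hnot : L i' ∉ (fun a => B (φ a)) '' {a | σ a = i} := by
    rintro ⟨a, -, he⟩; exact h.ne _ _ he
  have hTadj : ∀ G ∈ (fun a => B (φ a)) '' {a | σ a = i}, Adj P (L i) G := by
    rintro _ ⟨a, ha, rfl⟩
    have := (h.madj a).symm
    rwa [show σ a = i from ha] at this
  have hf : ∀ G ∈ (fun a => B (φ a)) '' {a | σ a = i},
      r (L i) G = L i' ∨ r (L i) G ∈ (fun a => B (φ a)) '' {a | σ a = i} := by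
    rintro _ ⟨a, ha, rfl⟩
    rcases h.fwd w hi ha with ⟨b, hb, he⟩ | he
    · exact Or.inr ⟨b, hb, he⟩
    · exact Or.inl he
  have hbk : ∀ G ∈ (fun a => B (φ a)) '' {a | σ a = i},
      r G (L i) = L i' ∨ r G (L i) ∈ (fun a => B (φ a)) '' {a | σ a = i} := by
    rintro _ ⟨a, ha, rfl⟩
    rcases h.fwd w.mirror hi ha with ⟨b, hb, he⟩ | he
    · exact Or.inr ⟨b, hb, he⟩
    · exact Or.inl he
  obtain ⟨a0, ha0⟩ := h.surj i
  set T := (fun a => B (φ a)) '' {a | σ a = i} with hT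
  have hind : ∀ (D : Set (Set E3)) (G0 : Set E3), Adj P (L i) G0 → G0 ∈ D →
      (∀ G, Adj P (L i) G → G ∈ D → r (L i) G ∈ D) → ∀ G, Adj P (L i) G → G ∈ D := by
    intro D G0 hG0 hG0D hD G hG
    obtain ⟨m, hm⟩ := w.conn hG0 hG
    have : ∀ m, Adj P (L i) ((r (L i))^[m] G0) ∧ (r (L i))^[m] G0 ∈ D := by
      intro m
      induction m with
      | zero => exact ⟨hG0, hG0D⟩
      | succ m ih =>
        rw [Function.iterate_succ_apply']
        exact ⟨w.adj_r ih.1, hD _ ih.1 ih.2⟩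
    rw [← hm]; exact (this m).2
  have hr1 : r (L i) (L i') ∈ T := by
    by_contra hno
    have := hind Tᶜ (L i') hA hnot (by
      intro G hG hGT hrT
      rcases hbk _ hrT with e | e
      · rw [(w.inv1 hG).2.1] at e
        rw [e] at hrT
        exact hno hrT
      · rw [(w.inv1 hG).2.1] at e
        exact hGT e)
    have hm : B (φ a0) ∈ T := ⟨a0, ha0, rfl⟩
    exact this _ (hTadj _ hm) hm
  apply Subset.antisymm
  · exact hind (insert (L i') T) (L i') hA (mem_insert _ _) (by
      intro G hG hGT
      rcases hGT with rfl | hGT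
      · exact Or.inr hr1
      · exact hf G hGT)
  · rintro G (rfl | hG)
    · exact hA
    · exact hTadj G hG

lemma scount (w : Rot P r vt) (h : Two P B L v φ σ) {i i' : Fin 2} (hi : i ≠ i') :
    facetEdges P (L i) = (Finset.univ.filter (fun a => σ a = i)).card + 1 := by
  rw [w.facetEdges_eq (h.lf i), h.nbrs w hi, Set.ncard_insert_of_notMem, Set.InjOn.ncard_image,
    ← Set.ncard_coe_finset]
  · congr 2
    ext a; simp
  · intro a ha b hb he
    exact h.pinj (h.inj he) ((show σ a = i from ha).trans (show σ b = i from hb).symm)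
  · rintro ⟨a, -, he⟩; exact h.ne _ _ he

lemma final (w : Rot P r vt) (h : Two P B L v φ σ) :
    k + 4 = facetEdges P (L 0) + facetEdges P (L 1) := by
  have h1 := h.nk w
  have h2 := h.scount w (i := 0) (i' := 1) (by decide)
  have h3 := h.scount w (i := 1) (i' := 0) (by decide)
  have h4 := Finset.card_filter_add_card_filter_not (s := (Finset.univ : Finset (Fin n)))
    (fun a => σ a = 0)
  have h5 : (Finset.univ.filter (fun a => ¬ σ a = 0)) = Finset.univ.filter (fun a => σ a = 1) := by
    apply Finset.filter_congr
    intro a _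
    have : ∀ s : Fin 2, ¬ s = 0 ↔ s = 1 := by decide
    exact this _
  rw [h5, Finset.card_univ, Fintype.card_fin] at h4
  omega

end Two

lemma three_le {P : Set E3} {r : Set E3 → Set E3 → Set E3} {vt : Set E3 → Set E3 → E3}
    (w : Rot P r vt) {F G : Set E3} (h : Adj P F G) : 3 ≤ facetEdges P F := by
  classical
  rw [w.facetEdges_eq h.1]
  have h1 := w.adj_r h
  have h2 := w.adj_r h1
  have e1 : r F G ≠ G := (w.cyc h).1.2.2.1.symm
  have e2 : r F (r F G) ≠ r F G := (w.cyc h1).1.2.2.1.symm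
  have e3 := w.rr_ne h
  have hs : ((({G, r F G, r F (r F G)} : Finset (Set E3))) : Set (Set E3)) ⊆ {G | Adj P F G} := by
    intro K hK
    simp only [Finset.coe_insert, Finset.coe_singleton, mem_insert_iff, mem_singleton_iff] at hK
    rcases hK with rfl | rfl | rfl
    · exact h
    · exact h1
    · exact h2
  have := Set.ncard_le_ncard hs (w.nbr_fin F)
  rw [Set.ncard_coe_finset, Finset.card_eq_three.2 ⟨_, _, _, e1.symm, e3.symm, e2.symm, rfl⟩] at this
  exact this

lemma main2 {P : Set E3} {r : Set E3 → Set E3 → Set E3} {vt : Set E3 → Set E3 → E3}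
    (t : Topo P) (w : Rot P r vt) (h3 : pVec P 3 = 0)
    {k : ℕ} (B : Fin k → Set E3) (hB : BeltC P B) (L : Fin 2 → Set E3) (hL : Borders P B L) :
    (k : ℤ) = facetEdges P (L 0) + facetEdges P (L 1) - 4 ∧ 4 ≤ k := by
  obtain ⟨γ, C₁, C₂, hC₁, hC₂, hne, ⟨⟨-, hBf, -⟩, hBC, n, v, φ, ⟨hn, vinj, vert, vedge, hγ⟩, hvB, -, -,
    hcnt⟩, ⟨⟨-, hLf, hLe⟩, hLC, n', v', ψ, ⟨hn', vinj', vert', vedge', hγ'⟩, hvL, -, hsurj, -⟩⟩ := hL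
  have hk := hB.hk
  have hBL : ∀ j i, B j ≠ L i := by
    intro j i he
    obtain ⟨y, hy⟩ := t.intr_ne _ (hBf j)
    have h1 := hBC j hy
    rw [he] at hy
    exact hne (Topo.comp_eq hC₁ hC₂ h1 (hLC i hy))
  have hL01 : Adj P (L 0) (L 1) := by
    have h1 := hLe (by omega) 0
    have h2 : nxt (0 : Fin 2) = 1 := by decide
    rw [h2] at h1
    refine ⟨hLf 0, hLf 1, ?_, h1.1.1⟩
    intro he
    have h3 := h1.2
    rw [← he, inter_self, (hLf 0).2] at h3
    omega
  -- two edges of P with a common interior point of the first agree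
  have hedge : ∀ e e', IsEdgeOf e P → IsEdgeOf e' P → ∀ F G, Adj P F G → e = F ∩ G →
      ∀ y, y ∈ e' → (∀ K ∈ facets P, y ∈ K → K = F ∨ K = G) → e = e' := by
    intro e e' he he' F G hA heq y hy hyo
    obtain ⟨F', G', hA', rfl⟩ := w.edge_is he'
    have h1 := hyo F' hA'.1 hy.1
    have h2 := hyo G' hA'.2.1 hy.2
    have h3 := hA'.2.2.1
    rcases h1 with rfl | rfl <;> rcases h2 with rfl | rfl
    · exact absurd rfl h3
    · exact heq
    · rw [heq, inter_comm]
    · exact absurd rfl h3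
  have hin : ∀ {m m' : ℕ} (u : Fin m → E3) (u' : Fin m' → E3),
      (∀ i, IsEdgeOf (segment ℝ (u i) (u (nxt i))) P) →
      (∀ i, IsEdgeOf (segment ℝ (u' i) (u' (nxt i))) P) →
      (⋃ i, segment ℝ (u i) (u (nxt i))) = ⋃ i, segment ℝ (u' i) (u' (nxt i)) →
      ∀ a, ∃ b, segment ℝ (u a) (u (nxt a)) = segment ℝ (u' b) (u' (nxt b)) := by
    intro m m' u u' hu hu' heq a
    obtain ⟨F, G, hA, he⟩ := w.edge_is (hu a)
    obtain ⟨y, hy, hyo⟩ := w.midpt hA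
    have hyγ : y ∈ ⋃ i, segment ℝ (u' i) (u' (nxt i)) := by
      rw [← heq, mem_iUnion]
      exact ⟨a, by rw [he]; exact hy⟩
    obtain ⟨b, hb⟩ := mem_iUnion.1 hyγ
    exact ⟨b, hedge _ _ (hu a) (hu' b) F G hA he y hb hyo⟩
  have hσ : ∀ a, ∃ i, segment ℝ (v a) (v (nxt a)) = B (φ a) ∩ L i := by
    intro a
    obtain ⟨b, hb⟩ := hin v v' vedge vedge' (hγ.symm.trans hγ') a
    refine ⟨ψ b, ?_⟩
    have s1 := hvB a
    have s2 := hvL b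
    rw [← hb] at s2
    obtain ⟨F, G, hA, he⟩ := w.edge_is (vedge a)
    rw [he] at s1 s2 ⊢
    have k1 := w.edge_sub hA (hBf _) s1
    have k2 := w.edge_sub hA (hLf _) s2
    have k3 := hBL (φ a) (ψ b)
    rcases k1 with k1 | k1 <;> rcases k2 with k2 | k2
    · exact absurd (k1.trans k2.symm) k3
    · rw [k1, k2]
    · rw [k1, k2, inter_comm]
    · exact absurd (k1.trans k2.symm) k3
  choose σ hσ using hσ
  have T : Two P B L v φ σ := by
    refine ⟨hB.inj, ?_, hBf, hBL, hn, vinj, vert, hσ, ?_, hcnt (by omega)⟩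
    · have : ∀ i i' : Fin 2, i ≠ i' → (i = 0 ∧ i' = 1) ∨ (i = 1 ∧ i' = 0) := by decide
      intro i i' hi
      rcases this i i' hi with ⟨rfl, rfl⟩ | ⟨rfl, rfl⟩
      · exact hL01
      · exact hL01.symm
    · intro i
      obtain ⟨b, hb⟩ := hsurj i
      obtain ⟨a, ha⟩ := hin v' v vedge' vedge (hγ'.symm.trans hγ) b
      refine ⟨a, ?_⟩
      have s2 := hvL b
      rw [ha, hσ a, hb] at s2
      have hA : Adj P (B (φ a)) (L (σ a)) := ⟨hBf _, hLf _, hBL _ _, by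
        rw [← hσ a]; exact ⟨_, left_mem_segment _ _ _⟩⟩
      rcases w.edge_sub hA (hLf i) s2 with e | e
      · exact absurd e.symm (hBL _ _)
      · by_contra hcon
        have : ∀ i i' : Fin 2, i ≠ i' → (i = 0 ∧ i' = 1) ∨ (i = 1 ∧ i' = 0) := by decide
        rcases this _ _ hcon with ⟨e1, e2⟩ | ⟨e1, e2⟩
        · rw [e1, e2] at e; exact hL01.2.2.1 e.symm
        · rw [e1, e2] at e; exact hL01.2.2.1 e
  have hf := T.final w
  have a1 := three_le w hL01
  have a2 := three_le w hL01.symm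
  have b1 := pvec_zero w.fin h3 (hLf 0)
  have b2 := pvec_zero w.fin h3 (hLf 1)
  constructor
  · omega
  · omega


/-- The loop lemma: for a simple 3-polytope with `p₃ = 0`, `pₖ = 0` for `k ≥ 8` and
`p₇ ≤ 1`, and a `k`-belt `B` consisting of `bᵢ` `i`-gons (`4 ≤ i ≤ 7`), with `P₁, P₂`
the two components of `∂P ∖ |B|` and `W₁, W₂` the corresponding sets of facets, one of
the three alternatives (1)–(3) holds; moreover, any `2`-loop bordering `B` forces
`k = sᵢ + sⱼ - 4 ≥ 4`. -/
theorem loop_lemma (P : Set E3) (hP : IsSimplePolytope3 P)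
    (h3 : pVec P 3 = 0) (h8 : ∀ m, 8 ≤ m → pVec P m = 0) (h7 : pVec P 7 ≤ 1)
    {k : ℕ} (B : Fin k → Set E3) (hB : IsBelt P B)
    (b : ℕ → ℕ)
    (hb : ∀ i, b i = (Finset.univ.filter (fun j : Fin k => facetEdges P (B j) = i)).card)
    (P₁ P₂ : Set E3)
    (hP₁ : IsCompOf P₁ (frontier P \ ⋃ i, B i))
    (hP₂ : IsCompOf P₂ (frontier P \ ⋃ i, B i))
    (hP12 : P₁ ≠ P₂)
    (W₁ W₂ : Set (Set E3))
    (hW₁ : W₁ = {F | IsFacetOf F P ∧ intrinsicInterior ℝ F ⊆ P₁})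
    (hW₂ : W₂ = {F | IsFacetOf F P ∧ intrinsicInterior ℝ F ⊆ P₂}) :
    ((∃ Fs Ft : Set E3, W₁ = {Fs} ∧ W₂ = {Ft} ∧
        facetEdges P Fs = k ∧ facetEdges P Ft = k ∧ ∀ j, facetEdges P (B j) = 4) ∨
     (∃ Fs : Set E3, (W₁ = {Fs} ∨ W₂ = {Fs}) ∧ facetEdges P Fs = k ∧
        2 ≤ b 5 + 2 * b 6 + 3 * b 7 ∧
        ∃ L : Fin (b 5 + 2 * b 6 + 3 * b 7) → Set E3, Borders P B L ∧
          (W₁ = {Fs} → ∀ i, L i ∈ W₂) ∧ (W₂ = {Fs} → ∀ i, L i ∈ W₁)) ∨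
     (∃ (l₁ l₂ : ℕ) (L₁ : Fin l₁ → Set E3) (L₂ : Fin l₂ → Set E3) (γ₁ γ₂ : Set E3),
        2 ≤ l₁ ∧ 2 ≤ l₂ ∧ (∀ i, L₁ i ∈ W₁) ∧ (∀ i, L₂ i ∈ W₂) ∧
        (∃ C C' : Set E3, IsCompOf C (frontier P \ γ₁) ∧ IsCompOf C' (frontier P \ γ₁) ∧
          C ≠ C' ∧ WalksRound P γ₁ C B ∧ WalksRound P γ₁ C' L₁) ∧
        (∃ C C' : Set E3, IsCompOf C (frontier P \ γ₂) ∧ IsCompOf C' (frontier P \ γ₂) ∧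
          C ≠ C' ∧ WalksRound P γ₂ C B ∧ WalksRound P γ₂ C' L₂) ∧
        -- (a)
        l₁ = ∑ j : Fin k, (edgesInCommon P (B j) γ₁ - 1) ∧
        l₂ = ∑ j : Fin k, (edgesInCommon P (B j) γ₂ - 1) ∧
        -- (b)
        (l₁ + l₂ : ℤ) = 2 * k - 2 * b 4 - b 5 + b 7 ∧ l₁ + l₂ ≤ 2 * k + 1 ∧
        -- (c)
        (min l₁ l₂ : ℤ) ≤ (k : ℤ) - b 4 - ⌈((b 5 : ℚ) - b 7) / 2⌉ ∧
        (k : ℤ) - b 4 - ⌈((b 5 : ℚ) - b 7) / 2⌉ ≤ (k : ℤ) ∧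
        -- (d)
        (b 7 = 0 → k ≤ l₁ → k ≤ l₂ →
          l₁ = k ∧ l₂ = k ∧ b 4 = 0 ∧ b 5 = 0 ∧ b 6 = k))) ∧
    (∀ L : Fin 2 → Set E3, Borders P B L →
      (k : ℤ) = facetEdges P (L 0) + facetEdges P (L 1) - 4 ∧ 4 ≤ k) := by
  obtain ⟨n, c, g⟩ := exists_geo hP
  have t := g.topo
  obtain ⟨r, vt, w⟩ := g.exists_rot
  have hBC := hB.beltC
  have hBf : ∀ j, B j ∈ facets P := fun j => (hBC.adj j).1
  refine ⟨?_, fun L hL => main2 t w h3 B hBC L hL⟩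
  exact main1 P t w h8 h7 B hBC b hb P₁ P₂ hP₁ hP₂ hP12 W₁ W₂
    (hW₁.trans (sideF_eq t hBf hP₁)) (hW₂.trans (sideF_eq t hBf hP₂))
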